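/- Logarithmic scaling of the block entropy of the critical XX chain (Jin–Korepin): For each n ≥ 1 let T_n be the real symmetric n×n Toeplitz matrix with entries (T_n)_{jk} = (2/(π(j−k)))·sin(π(j−k)/2) for j ≠ k and (T_n)_{jj} = 0. All eigenvalues λ₁(T_n), …, λ_n(T_n) lie in [−1, 1], and there exists a constant C > 0 such that for all n ≥ 2, |∑_{k=1}^{n} f(λ_k(T_n)) − (1/3)·log₂ n| ≤ C. The quantity S_n = ∑_k f(λ_k(T_n)) is the entanglement entropy (in bits) of a block of n contiguous spins in the ground state of the infinite critical XX spin chain, so S_n = (1/3)log₂ n + O(1). -/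

import Mathlib

open scoped BigOperators
open Matrix

/-- The fermionic entropy function
`f(x) = −((1−x)/2)·log₂((1−x)/2) − ((1+x)/2)·log₂((1+x)/2)` (convention `0·log₂0 = 0`). -/
noncomputable def fermiEntropy (x : ℝ) : ℝ :=
  -((1 - x) / 2 * Real.logb 2 ((1 - x) / 2)) - (1 + x) / 2 * Real.logb 2 ((1 + x) / 2)

/-- The `n×n` Toeplitz ground-state covariance matrix of a block of `n` sites of the
half-filled critical XX chain: `(T_n)_{jk} = (2/(π(j−k)))·sin(π(j−k)/2)` for `j ≠ k`,
and `0` on the diagonal. -/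
noncomputable def xxToeplitz (n : ℕ) : Matrix (Fin n) (Fin n) ℝ :=
  Matrix.of fun j k =>
    if j = k then 0
    else (2 / (Real.pi * ((j : ℝ) - (k : ℝ)))) * Real.sin (Real.pi * ((j : ℝ) - (k : ℝ)) / 2)

/-!
The entropy of an eigenvalue `λ` is a concave increasing function `S` of `1 - λ²`, so the block
entropy is `tr S(1 - T_n²)`. Up to signs, `T_n` couples even sites to odd sites by a rectangular
block `K` of the Cauchy matrix `1 / (π (j - k + 1/2))` on `ℤ`, which is unitary. Hence `1 - T_n²`
splits into `1 - K Kᵀ` and `1 - Kᵀ K`, and each of these is a Gram matrix of the Cauchy rows outside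
the block: a sum of two positive matrices, one for each boundary.

Replacing the sums in such a Gram matrix by integrals changes it by a matrix whose diagonal decays
away from the boundaries, and by Rotfel'd's inequality this changes the entropy by `O(1)` only. In
the coordinate `u = log (x / (N - x))` the integral model is a compression of the squared
convolution with `1 / (2π cosh (u / 2))` to orthonormal functions supported on disjoint cells, which
fill an interval of length `2 log m + O(1)`. The Fourier transform turns this operator into
multiplication by `sech² (2π²k)`, and `∫ S(sech² (2π²k)) dk = 1/12`. Jensen's inequality bounds the
entropy of the model from both sides, from above after a smooth cutoff, so that each half
contributes `(1/6) log m + O(1)` with `m ≈ n/2`.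
-/

namespace XXChain

open MeasureTheory Set
open scoped MatrixOrder

section TraceInequalities

/-- The sum of `F` over the real eigenvalues of `X`, with algebraic multiplicity; for symmetric `X`
this is `tr F(X)`. -/
noncomputable def spectralSum {ι : Type*} [Fintype ι] [DecidableEq ι] (F : ℝ → ℝ)
    (X : Matrix ι ι ℝ) : ℝ :=
  (X.charpoly.roots.map F).sum

variable {ι κ : Type*} [Fintype ι] {F : ℝ → ℝ} {X Z D : Matrix ι ι ℝ}

theorem sum_sq_dotProduct_orthonormalBasis (b : OrthonormalBasis ι ℝ (EuclideanSpace ℝ ι))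
    (v : ι → ℝ) : ∑ i, ((b i).ofLp ⬝ᵥ v) ^ 2 = v ⬝ᵥ v := by
  have h := b.sum_sq_norm_inner_right (WithLp.toLp 2 v)
  rw [EuclideanSpace.norm_sq_eq] at h
  simpa [EuclideanSpace.inner_eq_star_dotProduct, dotProduct, sq, mul_comm] using h

theorem dotProduct_mulVec_nonneg (hX : X.PosSemidef) (v : ι → ℝ) : 0 ≤ v ⬝ᵥ X *ᵥ v := by
  simpa using hX.dotProduct_mulVec_nonneg v

theorem dotProduct_mulVec_mono (h : X ≤ Z) (v : ι → ℝ) : v ⬝ᵥ X *ᵥ v ≤ v ⬝ᵥ Z *ᵥ v := by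
  simpa [sub_mulVec, dotProduct_sub] using (Matrix.le_iff.1 h).dotProduct_mulVec_nonneg v

theorem sum_mul_le_map_sum_of_sum_le_one (hF : ConcaveOn ℝ (Ici 0) F) (h0 : F 0 = 0)
    {w z : ι → ℝ} (hw : ∀ i, 0 ≤ w i) (hz : ∀ i, 0 ≤ z i) (hsum : ∑ i, w i ≤ 1) :
    ∑ i, w i * F (z i) ≤ F (∑ i, w i * z i) := by
  have h := hF.le_map_sum (t := Finset.univ) (w := fun o : Option ι => o.elim (1 - ∑ i, w i) w)
    (p := fun o => o.elim 0 z) (by rintro (_ | i) _ <;> simp [hsum, hw])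
    (by simp [Fintype.sum_option]) (by rintro (_ | i) _ <;> simp [hz])
  simpa [Fintype.sum_option, h0] using h

theorem mul_sum_div_mul_le (hF : ConcaveOn ℝ (Ici 0) F) (hmono : MonotoneOn F (Ici 0))
    (h0 : F 0 = 0) {q z : ι → ℝ} {x : ℝ} (hx : 0 ≤ x) (hq : ∀ i, 0 ≤ q i) (hz : ∀ i, 0 ≤ z i)
    (hsum : ∑ i, q i ≤ 1) (hinv : x * ∑ i, q i / z i ≤ 1) :
    x * ∑ i, F (z i) / z i * q i ≤ F x := by
  have hw : ∀ i, 0 ≤ x * (q i / z i) := fun i => mul_nonneg hx (div_nonneg (hq i) (hz i))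
  have hmean : ∑ i, x * (q i / z i) * z i ≤ x := by
    calc ∑ i, x * (q i / z i) * z i ≤ ∑ i, x * q i := Finset.sum_le_sum fun i _ => by
          rw [mul_assoc]
          rw [div_mul_eq_mul_div, mul_div_assoc]
          exact mul_le_mul_of_nonneg_left (mul_le_of_le_one_right (hq i) (div_self_le_one _)) hx
      _ ≤ x := by rw [← Finset.mul_sum]; exact mul_le_of_le_one_right hx hsum
  calc x * ∑ i, F (z i) / z i * q i = ∑ i, x * (q i / z i) * F (z i) := by
        rw [Finset.mul_sum]
        exact Finset.sum_congr rfl fun i _ => by ring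
    _ ≤ F (∑ i, x * (q i / z i) * z i) :=
        sum_mul_le_map_sum_of_sum_le_one hF h0 hw hz (by rwa [← Finset.mul_sum])
    _ ≤ F x := hmono (Finset.sum_nonneg fun i _ => mul_nonneg (hw i) (hz i)) hx hmean

variable [DecidableEq ι] [Fintype κ] [DecidableEq κ]

theorem spectralSum_eq_sum_eigenvalues (F : ℝ → ℝ) (hX : X.IsHermitian) :
    spectralSum F X = ∑ i, F (hX.eigenvalues i) := by
  simp [spectralSum, hX.roots_charpoly_eq_eigenvalues]

theorem spectralSum_reindex (F : ℝ → ℝ) (e : ι ≃ κ) (X : Matrix ι ι ℝ) :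
    spectralSum F (reindex e e X) = spectralSum F X := by
  simp only [spectralSum, charpoly_reindex]

theorem spectralSum_units_conj (F : ℝ → ℝ) (U : (Matrix ι ι ℝ)ˣ) (X : Matrix ι ι ℝ) :
    spectralSum F (U.val * X * U⁻¹.val) = spectralSum F X := by
  rw [spectralSum, spectralSum, coe_units_inv, charpoly_units_conj]

theorem spectralSum_fromBlocks_diagonal (F : ℝ → ℝ) (A : Matrix ι ι ℝ) (B : Matrix κ κ ℝ) :
    spectralSum F (fromBlocks A 0 0 B) = spectralSum F A + spectralSum F B := by
  simp only [spectralSum, charpoly_fromBlocks_zero₁₂, Multiset.map_add, Multiset.sum_add,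
    Polynomial.roots_mul (mul_ne_zero A.charpoly_monic.ne_zero B.charpoly_monic.ne_zero)]

theorem spectralSum_one_sub_mul_self (F : ℝ → ℝ) (hX : X.IsHermitian) :
    spectralSum F (1 - X * X) = ∑ i, F (1 - hX.eigenvalues i ^ 2) := by
  have hcfc : cfc (fun x : ℝ => 1 - x ^ 2) X = 1 - X * X := by
    have : IsSelfAdjoint X := hX
    rw [cfc_sub .., cfc_const_one .., cfc_pow .., cfc_id' .., sq]
  have hroots : (1 - X * X).charpoly.roots =
      Finset.univ.val.map fun i => 1 - hX.eigenvalues i ^ 2 := by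
    rw [← hcfc, hX.charpoly_cfc_eq, Polynomial.roots_prod _ _
      (Finset.prod_ne_zero_iff.2 fun i _ => Polynomial.X_sub_C_ne_zero _)]
    simp only [RCLike.ofReal_real_eq_id, id, Polynomial.roots_X_sub_C, Multiset.bind_singleton]
  simp [spectralSum, hroots]

theorem dotProduct_orthonormalBasis (b : OrthonormalBasis ι ℝ (EuclideanSpace ℝ ι)) (i j : ι) :
    (b i).ofLp ⬝ᵥ (b j).ofLp = if i = j then 1 else 0 := by
  simpa [EuclideanSpace.inner_eq_star_dotProduct, dotProduct_comm] using b.inner_eq_ite i j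

theorem dotProduct_mulVec_eq_sum_eigenvalues (hX : X.IsHermitian) (v : ι → ℝ) :
    v ⬝ᵥ X *ᵥ v = ∑ i, hX.eigenvalues i * ((hX.eigenvectorBasis i).ofLp ⬝ᵥ v) ^ 2 := by
  have h := hX.eigenvectorBasis.sum_inner_mul_inner (WithLp.toLp 2 v) (WithLp.toLp 2 (X *ᵥ v))
  simp only [EuclideanSpace.inner_eq_star_dotProduct, star_trivial] at h
  rw [dotProduct_comm, ← h]
  refine Finset.sum_congr rfl fun i _ => ?_
  have hsymm : Xᵀ = X := by simpa [conjTranspose_eq_transpose_of_trivial] using hX.eq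
  rw [dotProduct_comm (X *ᵥ v), dotProduct_mulVec, ← mulVec_transpose, hsymm,
    hX.mulVec_eigenvectorBasis, smul_dotProduct, smul_eq_mul]
  ring

theorem eigenvalues_eq_dotProduct_mulVec (hX : X.IsHermitian) (i : ι) :
    hX.eigenvalues i =
      (hX.eigenvectorBasis i).ofLp ⬝ᵥ X *ᵥ (hX.eigenvectorBasis i).ofLp := by
  simpa using hX.eigenvalues_eq i

theorem spectralSum_le_sum_orthonormalBasis (hF : ConcaveOn ℝ (Ici 0) F) (hZ : Z.PosSemidef)
    (b : OrthonormalBasis ι ℝ (EuclideanSpace ℝ ι)) :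
    spectralSum F Z ≤ ∑ j, F ((b j).ofLp ⬝ᵥ Z *ᵥ (b j).ofLp) := by
  set z := hZ.isHermitian.eigenvalues
  set u := hZ.isHermitian.eigenvectorBasis
  have hjensen : ∀ j, ∑ i, ((u i).ofLp ⬝ᵥ (b j).ofLp) ^ 2 * F (z i) ≤
      F ((b j).ofLp ⬝ᵥ Z *ᵥ (b j).ofLp) := fun j => by
    have hsum : ∑ i, ((u i).ofLp ⬝ᵥ (b j).ofLp) ^ 2 = 1 := by
      rw [sum_sq_dotProduct_orthonormalBasis, dotProduct_orthonormalBasis, if_pos rfl]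
    rw [dotProduct_mulVec_eq_sum_eigenvalues hZ.isHermitian]
    simp only [mul_comm (hZ.isHermitian.eigenvalues _)]
    exact hF.le_map_sum (fun i _ => sq_nonneg _) hsum (fun i _ => hZ.eigenvalues_nonneg i)
  have hrow : ∀ i, ∑ j, ((u i).ofLp ⬝ᵥ (b j).ofLp) ^ 2 = 1 := fun i => by
    simp_rw [dotProduct_comm (u i).ofLp]
    rw [sum_sq_dotProduct_orthonormalBasis, dotProduct_orthonormalBasis, if_pos rfl]
  calc spectralSum F Z = ∑ i, (∑ j, ((u i).ofLp ⬝ᵥ (b j).ofLp) ^ 2) * F (z i) := by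
        simp [spectralSum_eq_sum_eigenvalues F hZ.isHermitian, hrow, z]
    _ = ∑ j, ∑ i, ((u i).ofLp ⬝ᵥ (b j).ofLp) ^ 2 * F (z i) := by
        simp_rw [Finset.sum_mul]
        exact Finset.sum_comm
    _ ≤ _ := Finset.sum_le_sum fun j _ => hjensen j

theorem spectralSum_le_sum_diag (hF : ConcaveOn ℝ (Ici 0) F) (hZ : Z.PosSemidef) :
    spectralSum F Z ≤ ∑ a, F (Z a a) := by
  simpa using spectralSum_le_sum_orthonormalBasis hF hZ (EuclideanSpace.basisFun ι ℝ)

theorem spectralSum_mono (hF : ConcaveOn ℝ (Ici 0) F) (hmono : MonotoneOn F (Ici 0))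
    (hX : X.PosSemidef) (hXZ : X ≤ Z) : spectralSum F X ≤ spectralSum F Z := by
  have hZ : Z.PosSemidef := nonneg_iff_posSemidef.1 ((nonneg_iff_posSemidef.2 hX).trans hXZ)
  rw [spectralSum_eq_sum_eigenvalues F hZ.isHermitian]
  refine (spectralSum_le_sum_orthonormalBasis hF hX hZ.isHermitian.eigenvectorBasis).trans
    (Finset.sum_le_sum fun j _ => ?_)
  rw [eigenvalues_eq_dotProduct_mulVec]
  exact hmono (dotProduct_mulVec_nonneg hX _) (dotProduct_mulVec_nonneg hZ _)
    (dotProduct_mulVec_mono hXZ _)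

/- The test vector `Z⁻¹ e` in `X ≤ Z` shows that `x ⟪e, Z⁻¹ e⟫ ≤ 1` for a unit eigenvector `e`
of `X` with eigenvalue `x`; kernel directions of `Z` drop out because `q / 0 = 0`. -/
theorem eigenvalue_mul_sum_sq_div_le_one (hX : X.PosSemidef) (hZ : Z.PosSemidef) (hXZ : X ≤ Z)
    (k : ι) : hX.isHermitian.eigenvalues k *
      ∑ i, ((hZ.isHermitian.eigenvectorBasis i).ofLp ⬝ᵥ
        (hX.isHermitian.eigenvectorBasis k).ofLp) ^ 2 / hZ.isHermitian.eigenvalues i ≤ 1 := by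
  set x := hX.isHermitian.eigenvalues
  set e := hX.isHermitian.eigenvectorBasis
  set z := hZ.isHermitian.eigenvalues
  set u := hZ.isHermitian.eigenvectorBasis
  set c : ι → ℝ := fun i => (u i).ofLp ⬝ᵥ (e k).ofLp
  set s := ∑ i, c i ^ 2 / z i
  have hs : 0 ≤ s := Finset.sum_nonneg fun i _ =>
    div_nonneg (sq_nonneg _) (hZ.eigenvalues_nonneg i)
  set w : ι → ℝ := ∑ i, (c i / z i) • (u i).ofLp
  have hu : ∀ i, (u i).ofLp ⬝ᵥ w = c i / z i := fun i => by
    simp [w, dotProduct_sum, dotProduct_orthonormalBasis]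
  have he : (e k).ofLp ⬝ᵥ w = s := by
    rw [dotProduct_comm, sum_dotProduct]
    exact Finset.sum_congr rfl fun i _ => by
      rw [smul_dotProduct, smul_eq_mul, div_mul_eq_mul_div, sq]
  have hZw : w ⬝ᵥ Z *ᵥ w = s := by
    rw [dotProduct_mulVec_eq_sum_eigenvalues hZ.isHermitian]
    refine Finset.sum_congr rfl fun i _ => ?_
    rw [hu]
    change z i * (c i / z i) ^ 2 = c i ^ 2 / z i
    rcases eq_or_ne (z i) 0 with hi | hi
    · simp [z, hi]
    · field_simp
  have hXw : x k * s ^ 2 ≤ w ⬝ᵥ X *ᵥ w := by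
    rw [dotProduct_mulVec_eq_sum_eigenvalues hX.isHermitian, ← he]
    exact Finset.single_le_sum (f := fun i => x i * ((e i).ofLp ⬝ᵥ w) ^ 2)
      (fun i _ => mul_nonneg (hX.eigenvalues_nonneg i) (sq_nonneg _)) (Finset.mem_univ k)
  have hle : x k * s ^ 2 ≤ s := hXw.trans ((dotProduct_mulVec_mono hXZ w).trans hZw.le)
  rcases hs.eq_or_lt with hs | hs
  · simp [← hs]
  · nlinarith

/-- For `0 ≤ X ≤ Z`, this is `tr (X F(Z) Z⁻¹) ≤ tr F(X)`. -/
theorem sum_div_mul_dotProduct_le_spectralSum (hF : ConcaveOn ℝ (Ici 0) F)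
    (hmono : MonotoneOn F (Ici 0)) (h0 : F 0 = 0) (hX : X.PosSemidef) (hZ : Z.PosSemidef)
    (hXZ : X ≤ Z) :
    ∑ i, F (hZ.isHermitian.eigenvalues i) / hZ.isHermitian.eigenvalues i *
      ((hZ.isHermitian.eigenvectorBasis i).ofLp ⬝ᵥ
        X *ᵥ (hZ.isHermitian.eigenvectorBasis i).ofLp) ≤ spectralSum F X := by
  set x := hX.isHermitian.eigenvalues
  set e := hX.isHermitian.eigenvectorBasis
  set z := hZ.isHermitian.eigenvalues
  set u := hZ.isHermitian.eigenvectorBasis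
  have hunit : ∀ k, ∑ i, ((u i).ofLp ⬝ᵥ (e k).ofLp) ^ 2 ≤ 1 := fun k => by
    rw [sum_sq_dotProduct_orthonormalBasis, dotProduct_orthonormalBasis, if_pos rfl]
  calc ∑ i, F (z i) / z i * ((u i).ofLp ⬝ᵥ X *ᵥ (u i).ofLp)
      = ∑ k, x k * ∑ i, F (z i) / z i * ((u i).ofLp ⬝ᵥ (e k).ofLp) ^ 2 := by
        simp_rw [dotProduct_mulVec_eq_sum_eigenvalues hX.isHermitian, Finset.mul_sum]
        rw [Finset.sum_comm]
        refine Finset.sum_congr rfl fun k _ => Finset.sum_congr rfl fun i _ => ?_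
        rw [dotProduct_comm (u i).ofLp]
        ring
    _ ≤ ∑ k, F (x k) := Finset.sum_le_sum fun k _ =>
        mul_sum_div_mul_le hF hmono h0 (hX.eigenvalues_nonneg k) (fun i => sq_nonneg _)
          hZ.eigenvalues_nonneg (hunit k) (eigenvalue_mul_sum_sq_div_le_one hX hZ hXZ k)
    _ = spectralSum F X := (spectralSum_eq_sum_eigenvalues F hX.isHermitian).symm

/- Rotfel'd's inequality: with `Z = X + D`, split `tr F(Z)` as
`tr (X F(Z) Z⁻¹) + tr (D F(Z) Z⁻¹)`. -/
theorem spectralSum_add_le (hF : ConcaveOn ℝ (Ici 0) F) (hmono : MonotoneOn F (Ici 0))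
    (h0 : F 0 = 0) (hX : X.PosSemidef) (hD : D.PosSemidef) :
    spectralSum F (X + D) ≤ spectralSum F X + spectralSum F D := by
  have hZ := hX.add hD
  have hX_le : X ≤ X + D := le_add_of_nonneg_right (nonneg_iff_posSemidef.2 hD)
  have hD_le : D ≤ X + D := le_add_of_nonneg_left (nonneg_iff_posSemidef.2 hX)
  refine le_of_eq_of_le ?_ (add_le_add
    (sum_div_mul_dotProduct_le_spectralSum hF hmono h0 hX hZ hX_le)
    (sum_div_mul_dotProduct_le_spectralSum hF hmono h0 hD hZ hD_le))
  rw [spectralSum_eq_sum_eigenvalues F hZ.isHermitian, ← Finset.sum_add_distrib]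
  refine Finset.sum_congr rfl fun i _ => ?_
  rw [← mul_add, ← dotProduct_add, ← add_mulVec, ← eigenvalues_eq_dotProduct_mulVec]
  rcases eq_or_ne (hZ.isHermitian.eigenvalues i) 0 with hi | hi
  · simp [hi, h0]
  · field_simp

theorem spectralSum_le_add_sum_diag (hF : ConcaveOn ℝ (Ici 0) F) (hmono : MonotoneOn F (Ici 0))
    (h0 : F 0 = 0) (hZ : Z.PosSemidef) (hX : X.PosSemidef) (hD : D.PosSemidef)
    (hle : Z ≤ X + D) : spectralSum F Z ≤ spectralSum F X + ∑ a, F (D a a) :=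
  calc spectralSum F Z ≤ spectralSum F (X + D) := spectralSum_mono hF hmono hZ hle
    _ ≤ spectralSum F X + spectralSum F D := spectralSum_add_le hF hmono h0 hX hD
    _ ≤ _ := by gcongr; exact spectralSum_le_sum_diag hF hD

end TraceInequalities

section EntropyFunctions

open Real

/-- The entropy (in nats) of a Bernoulli variable, as a function of `x = 4p(1-p)`, four times its
variance. For an eigenvalue `t` of the covariance matrix, `x = 1 - t²`. The function is constant for
`x ≥ 1`, since there the square root takes the value `0`. -/
noncomputable def varEntropy (x : ℝ) : ℝ := binEntropy ((1 - √(1 - x)) / 2)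

/-- The squared hyperbolic secant, which parametrizes the argument of `varEntropy`. -/
noncomputable def sechSq (z : ℝ) : ℝ := 1 / cosh z ^ 2

/-- The entropy (in nats) of a two-level system with energies `±z` at temperature one. -/
noncomputable def thermalEntropy (z : ℝ) : ℝ := log (2 * cosh z) - z * tanh z

/-- The function `z coth z`, twice the slope of `varEntropy` at `sechSq z`; its value at the
removable singularity `z = 0` is `0` by the convention for division. -/
noncomputable def mulCoth (z : ℝ) : ℝ := z / tanh z

theorem hasDerivAt_tanh (z : ℝ) : HasDerivAt tanh (sechSq z) z := by
  have h := (hasDerivAt_sinh z).div (hasDerivAt_cosh z) (cosh_pos z).ne'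
  rw [show sinh / cosh = tanh from funext fun x => (tanh_eq_sinh_div_cosh x).symm] at h
  refine h.congr_deriv ?_
  rw [← sq, ← sq, cosh_sq_sub_sinh_sq, sechSq]

theorem tanh_pos {z : ℝ} (hz : 0 < z) : 0 < tanh z := by
  rw [tanh_eq_sinh_div_cosh]
  exact div_pos (sinh_pos_iff.2 hz) (cosh_pos z)

theorem one_sub_sechSq (z : ℝ) : 1 - sechSq z = tanh z ^ 2 := by
  rw [sechSq, tanh_eq_sinh_div_cosh, div_pow, sinh_sq, sub_div,
    div_self (pow_ne_zero 2 (cosh_pos z).ne')]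

theorem sechSq_pos (z : ℝ) : 0 < sechSq z := one_div_pos.2 (pow_pos (cosh_pos z) 2)

theorem sechSq_le_one (z : ℝ) : sechSq z ≤ 1 := by
  linarith [one_sub_sechSq z, sq_nonneg (tanh z)]

theorem sechSq_abs (z : ℝ) : sechSq |z| = sechSq z := by simp [sechSq]

theorem exists_sechSq_eq {x : ℝ} (h0 : 0 < x) (h1 : x ≤ 1) : ∃ w, 0 ≤ w ∧ sechSq w = x := by
  have h : 1 ≤ 1 / √x := by
    rw [le_div_iff₀ (sqrt_pos.2 h0), one_mul]
    exact sqrt_le_one.2 h1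
  refine ⟨arcosh (1 / √x), arcosh_nonneg h, ?_⟩
  rw [sechSq, cosh_arcosh h, div_pow, sq_sqrt h0.le, one_pow, one_div_one_div]

theorem exp_neg_two_mul_le_sechSq {z : ℝ} (hz : 0 ≤ z) : exp (-(2 * z)) ≤ sechSq z := by
  have hcosh : cosh z ≤ exp z := by
    rw [cosh_eq]
    linarith [exp_le_exp.2 (by linarith : -z ≤ z)]
  rw [exp_neg, ← one_div, two_mul, exp_add, ← sq, sechSq]
  have := cosh_pos z
  gcongr

theorem hasDerivAt_mulCoth {z : ℝ} (hz : 0 < z) :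
    HasDerivAt mulCoth ((sinh z * cosh z - z) / sinh z ^ 2) z := by
  refine ((hasDerivAt_id z).div (hasDerivAt_tanh z) (tanh_pos hz).ne').congr_deriv ?_
  have := sinh_pos_iff.2 hz
  have := cosh_pos z
  simp only [sechSq, tanh_eq_sinh_div_cosh, id]
  field_simp

theorem deriv_mulCoth_nonneg {z : ℝ} (hz : 0 < z) : 0 ≤ (sinh z * cosh z - z) / sinh z ^ 2 := by
  have := self_le_sinh_iff.2 (by linarith : 0 ≤ 2 * z)
  rw [sinh_two_mul] at this
  exact div_nonneg (by linarith) (sq_nonneg _)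

theorem deriv_mulCoth_le_one {z : ℝ} (hz : 0 < z) :
    (sinh z * cosh z - z) / sinh z ^ 2 ≤ 1 := by
  rw [div_le_one (pow_pos (sinh_pos_iff.2 hz) 2)]
  have h : sinh z * cosh z - sinh z ^ 2 = (1 - exp (-(2 * z))) / 2 := by
    rw [two_mul, neg_add, exp_add, ← cosh_sub_sinh]
    linear_combination (1 / 2) * cosh_sq_sub_sinh_sq z
  linarith [add_one_le_exp (-(2 * z))]

theorem monotoneOn_mulCoth : MonotoneOn mulCoth (Ioi 0) :=
  monotoneOn_of_hasDerivWithinAt_nonneg (convex_Ioi 0)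
    (fun _ hx => (hasDerivAt_mulCoth hx).continuousAt.continuousWithinAt)
    (fun _ hx => (hasDerivAt_mulCoth (by simpa using hx)).hasDerivWithinAt)
    (fun _ hx => deriv_mulCoth_nonneg (by simpa using hx))

theorem mulCoth_abs (z : ℝ) : mulCoth |z| = mulCoth z := by
  rcases abs_choice z with h | h <;> simp [h, mulCoth, tanh_neg]

theorem mulCoth_nonneg (z : ℝ) : 0 ≤ mulCoth z := by
  rw [← mulCoth_abs]
  rcases (abs_nonneg z).eq_or_lt with h | h
  · simp [← h, mulCoth]
  · exact div_nonneg h.le (tanh_pos h).le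

theorem mulCoth_mul_tanh {z : ℝ} (hz : 0 < z) : mulCoth z * tanh z = z :=
  div_mul_cancel₀ _ (tanh_pos hz).ne'

theorem abs_mulCoth_sub_le {w z : ℝ} (hw : w ≠ 0) (hz : z ≠ 0) :
    |mulCoth z - mulCoth w| ≤ |z - w| := by
  have h := Convex.norm_image_sub_le_of_norm_hasDerivWithin_le (C := 1)
    (fun x hx => (hasDerivAt_mulCoth hx).hasDerivWithinAt)
    (fun x hx => by
      rw [norm_of_nonneg (deriv_mulCoth_nonneg hx)]
      exact deriv_mulCoth_le_one hx)
    (convex_Ioi 0) (abs_pos.2 hw) (abs_pos.2 hz)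
  rw [mulCoth_abs, mulCoth_abs, norm_eq_abs, norm_eq_abs, one_mul] at h
  exact h.trans (abs_abs_sub_abs_le z w)

theorem hasDerivAt_thermalEntropy (z : ℝ) : HasDerivAt thermalEntropy (-(z * sechSq z)) z := by
  have : 0 < cosh z := cosh_pos z
  refine ((((hasDerivAt_cosh z).const_mul 2).log (by positivity)).sub
    ((hasDerivAt_id z).mul (hasDerivAt_tanh z))).congr_deriv ?_
  simp only [id, tanh_eq_sinh_div_cosh]
  field_simp
  ring

theorem thermalEntropy_abs (z : ℝ) : thermalEntropy |z| = thermalEntropy z := by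
  rcases abs_choice z with h | h <;> simp [h, thermalEntropy, tanh_neg]

theorem thermalEntropy_eq_log_add (z : ℝ) :
    thermalEntropy z = log (1 + exp (-(2 * z))) + 2 * z / (exp (2 * z) + 1) := by
  have h1 : 2 * cosh z = exp z * (1 + exp (-(2 * z))) := by
    rw [cosh_eq, mul_add, ← exp_add]
    ring_nf
  rw [thermalEntropy, h1, log_mul (by positivity) (by positivity), log_exp, tanh_eq, exp_neg z,
    two_mul z, exp_add]
  have := exp_pos z
  field_simp
  ring

theorem thermalEntropy_le_exp (z : ℝ) : thermalEntropy z ≤ 4 * exp (-(3 / 2 * |z|)) := by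
  rw [← thermalEntropy_abs, thermalEntropy_eq_log_add]
  have hz := abs_nonneg z
  generalize |z| = z at hz
  have hlog : log (1 + exp (-(2 * z))) ≤ exp (-(2 * z)) := by
    linarith [log_le_sub_one_of_pos (show 0 < 1 + exp (-(2 * z)) by positivity)]
  have hfrac : 2 * z / (exp (2 * z) + 1) ≤ 2 * z * exp (-(2 * z)) := by
    rw [exp_neg, ← div_eq_mul_inv]
    gcongr
    linarith
  have hpoly : (1 + 2 * z) * exp (-(z / 2)) ≤ 4 := by
    rw [exp_neg, ← div_eq_mul_inv, div_le_iff₀ (exp_pos _)]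
    linarith [add_one_le_exp (z / 2)]
  calc _ ≤ (1 + 2 * z) * exp (-(2 * z)) := by linarith
    _ = (1 + 2 * z) * exp (-(z / 2)) * exp (-(3 / 2 * z)) := by
      rw [mul_assoc, ← exp_add]
      ring_nf
    _ ≤ _ := by gcongr

@[fun_prop]
theorem continuous_varEntropy : Continuous varEntropy := by
  unfold varEntropy
  fun_prop

theorem varEntropy_zero : varEntropy 0 = 0 := by simp [varEntropy]

theorem varEntropy_le_log_two (x : ℝ) : varEntropy x ≤ log 2 := binEntropy_le_log_two

theorem varEntropy_of_one_le {x : ℝ} (hx : 1 ≤ x) : varEntropy x = log 2 := by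
  rw [varEntropy, sqrt_eq_zero_of_nonpos (by linarith), sub_zero, one_div, binEntropy_two_inv]

theorem varEntropy_one_sub_sq (t : ℝ) : varEntropy (1 - t ^ 2) = binEntropy ((1 - t) / 2) := by
  rw [varEntropy, sub_sub_cancel, sqrt_sq_eq_abs]
  rcases abs_choice t with h | h
  · rw [h]
  · rw [h, ← binEntropy_one_sub]
    congr 1
    ring

theorem monotoneOn_varEntropy : MonotoneOn varEntropy (Ici 0) := by
  have hmem : ∀ x ∈ Ici (0 : ℝ), (1 - √(1 - x)) / 2 ∈ Icc (0 : ℝ) 2⁻¹ := fun x hx => by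
    have : √(1 - x) ≤ 1 := sqrt_le_one.2 (by linarith [mem_Ici.1 hx])
    constructor <;> linarith [sqrt_nonneg (1 - x)]
  intro x hx y hy hxy
  refine binEntropy_strictMonoOn.monotoneOn (hmem x hx) (hmem y hy) ?_
  gcongr

theorem varEntropy_nonneg {x : ℝ} (hx : 0 ≤ x) : 0 ≤ varEntropy x :=
  varEntropy_zero.symm.trans_le (monotoneOn_varEntropy self_mem_Ici hx hx)

theorem varEntropy_sechSq (z : ℝ) : varEntropy (sechSq z) = thermalEntropy z := by
  rw [show sechSq z = 1 - tanh z ^ 2 by linarith [one_sub_sechSq z], varEntropy_one_sub_sq]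
  have : 0 < cosh z := cosh_pos z
  have h1 : (1 - tanh z) / 2 = exp (-z) / (2 * cosh z) := by
    rw [tanh_eq_sinh_div_cosh, ← cosh_sub_sinh]
    field_simp
  have h2 : 1 - exp (-z) / (2 * cosh z) = exp z / (2 * cosh z) := by
    rw [cosh_eq]
    field_simp
    ring
  rw [binEntropy, h1, h2, log_inv, log_inv, log_div (by positivity) (by positivity),
    log_div (by positivity) (by positivity), log_exp, log_exp, thermalEntropy, tanh_eq]
  rw [cosh_eq]
  field_simp
  ring

theorem thermalEntropy_nonneg (z : ℝ) : 0 ≤ thermalEntropy z :=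
  varEntropy_sechSq z ▸ varEntropy_nonneg (sechSq_pos z).le

/- In the variable `w`, the derivative of the difference is `sechSq w * (mulCoth z * tanh w - w)`,
which changes sign at `w = z` because `mulCoth` is increasing. -/
theorem thermalEntropy_le_tangent_of_pos {w z : ℝ} (hw : 0 ≤ w) (hz : 0 < z) :
    thermalEntropy w ≤ thermalEntropy z + mulCoth z / 2 * (sechSq w - sechSq z) := by
  set G : ℝ → ℝ := fun w => thermalEntropy w + mulCoth z / 2 * tanh w ^ 2
  have hG : ∀ w, HasDerivAt G (sechSq w * (mulCoth z * tanh w - w)) w := fun w => by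
    refine ((hasDerivAt_thermalEntropy w).add
      (((hasDerivAt_tanh w).pow 2).const_mul (mulCoth z / 2))).congr_deriv ?_
    simp only [Nat.cast_ofNat]
    ring
  have hcont : Continuous G := continuous_iff_continuousAt.2 fun w => (hG w).continuousAt
  suffices G w ≤ G z by
    simp only [G, ← one_sub_sechSq] at this
    linarith
  rcases le_total w z with h | h
  · refine monotoneOn_of_hasDerivWithinAt_nonneg (convex_Icc 0 z) hcont.continuousOn
      (fun x _ => (hG x).hasDerivWithinAt) (fun x hx => ?_) ⟨hw, h⟩ ⟨hz.le, le_rfl⟩ h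
    rw [interior_Icc] at hx
    refine mul_nonneg (sechSq_pos x).le (sub_nonneg.2 ?_)
    nth_rw 1 [← mulCoth_mul_tanh hx.1]
    exact mul_le_mul_of_nonneg_right (monotoneOn_mulCoth hx.1 hz hx.2.le) (tanh_pos hx.1).le
  · refine antitoneOn_of_hasDerivWithinAt_nonpos (convex_Ici z) hcont.continuousOn
      (fun x _ => (hG x).hasDerivWithinAt) (fun x hx => ?_) self_mem_Ici h h
    rw [interior_Ici] at hx
    have hx0 : 0 < x := hz.trans hx
    refine mul_nonpos_of_nonneg_of_nonpos (sechSq_pos x).le (sub_nonpos.2 ?_)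
    nth_rw 2 [← mulCoth_mul_tanh hx0]
    exact mul_le_mul_of_nonneg_right (monotoneOn_mulCoth hz hx0 (le_of_lt hx)) (tanh_pos hx0).le

theorem varEntropy_le_tangent_of_pos {z x : ℝ} (hz : z ≠ 0) (hx : 0 < x) :
    varEntropy x ≤ thermalEntropy z + mulCoth z / 2 * (x - sechSq z) := by
  rw [← thermalEntropy_abs, ← mulCoth_abs, ← sechSq_abs]
  have hz' := abs_pos.2 hz
  rcases le_total x 1 with h | h
  · obtain ⟨w, hw, rfl⟩ := exists_sechSq_eq hx h
    rw [varEntropy_sechSq]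
    exact thermalEntropy_le_tangent_of_pos hw hz'
  · obtain ⟨w, hw, hw1⟩ := exists_sechSq_eq one_pos le_rfl
    have hone := thermalEntropy_le_tangent_of_pos hw hz'
    rw [← varEntropy_sechSq, hw1, varEntropy_of_one_le le_rfl] at hone
    rw [varEntropy_of_one_le h]
    refine hone.trans ?_
    have := mulCoth_nonneg |z|
    gcongr

theorem varEntropy_le_tangent {z x : ℝ} (hz : z ≠ 0) (hx : 0 ≤ x) :
    varEntropy x ≤ thermalEntropy z + mulCoth z / 2 * (x - sechSq z) := by
  have hclosed : IsClosed
      {x | varEntropy x ≤ thermalEntropy z + mulCoth z / 2 * (x - sechSq z)} :=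
    isClosed_le (by fun_prop) (by fun_prop)
  have hsub : Ioi 0 ⊆ {x | varEntropy x ≤ thermalEntropy z + mulCoth z / 2 * (x - sechSq z)} :=
    fun x hx => varEntropy_le_tangent_of_pos hz hx
  exact hclosed.closure_subset_iff.2 hsub (by rwa [closure_Ioi, mem_Ici])

theorem concaveOn_of_exists_le_add_mul {s : Set ℝ} {F : ℝ → ℝ} (hs : Convex ℝ s)
    (h : ∀ x ∈ interior s, ∃ c, ∀ y ∈ s, F y ≤ F x + c * (y - x)) : ConcaveOn ℝ s F := by
  refine LinearOrder.concaveOn_of_lt hs fun x hx y hy hxy a b ha hb hab => ?_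
  simp only [smul_eq_mul]
  have hmem : a * x + b * y ∈ Ioo x y := by
    obtain rfl : a = 1 - b := by linarith
    constructor <;> nlinarith
  have hsub : Ioo x y ⊆ s := Ioo_subset_Icc_self.trans (hs.ordConnected.out hx hy)
  obtain ⟨c, hc⟩ := h _ (interior_maximal hsub isOpen_Ioo hmem)
  calc a * F x + b * F y
      ≤ a * (F (a * x + b * y) + c * (x - (a * x + b * y))) +
        b * (F (a * x + b * y) + c * (y - (a * x + b * y))) := by
        gcongr
        exacts [hc x hx, hc y hy]
    _ = F (a * x + b * y) := by
        linear_combination (F (a * x + b * y) - c * (a * x + b * y)) * hab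

theorem concaveOn_varEntropy : ConcaveOn ℝ (Ici 0) varEntropy := by
  refine concaveOn_of_exists_le_add_mul (convex_Ici 0) fun x hx => ?_
  rw [interior_Ici] at hx
  rcases lt_or_ge x 1 with h | h
  · obtain ⟨w, -, rfl⟩ := exists_sechSq_eq hx h.le
    have hw : w ≠ 0 := by
      rintro rfl
      simp [sechSq] at h
    exact ⟨_, fun z hz => varEntropy_sechSq w ▸ varEntropy_le_tangent hw hz⟩
  · exact ⟨0, fun z _ => by linarith [varEntropy_of_one_le h, varEntropy_le_log_two z]⟩

theorem mulCoth_mul_sechSq_le (z : ℝ) : mulCoth z / 2 * sechSq z ≤ thermalEntropy z := by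
  rcases eq_or_ne z 0 with rfl | hz
  · simpa [mulCoth] using thermalEntropy_nonneg 0
  · linarith [varEntropy_zero ▸ varEntropy_le_tangent hz le_rfl]

theorem varEntropy_le_rpow {x : ℝ} (hx : 0 ≤ x) : varEntropy x ≤ 4 * x ^ (3 / 4 : ℝ) := by
  rcases hx.eq_or_lt with rfl | h0
  · rw [varEntropy_zero]
    positivity
  rcases le_total x 1 with h1 | h1
  · obtain ⟨w, hw, rfl⟩ := exists_sechSq_eq h0 h1
    calc varEntropy (sechSq w) ≤ 4 * exp (-(3 / 2 * |w|)) :=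
          varEntropy_sechSq w ▸ thermalEntropy_le_exp w
      _ = 4 * exp (-(2 * w)) ^ (3 / 4 : ℝ) := by
          rw [abs_of_nonneg hw, ← exp_mul]
          ring_nf
      _ ≤ 4 * sechSq w ^ (3 / 4 : ℝ) := by
          gcongr
          exact exp_neg_two_mul_le_sechSq hw
  · rw [varEntropy_of_one_le h1]
    linarith [one_le_rpow h1 (show (0 : ℝ) ≤ 3 / 4 by norm_num), log_two_lt_d9]

end EntropyFunctions

section EntropyIntegral

open Real Filter Topology

theorem integral_mul_exp_neg_mul_Ioi {c : ℝ} (hc : 0 < c) :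
    ∫ x in Ioi (0 : ℝ), x * exp (-(c * x)) = 1 / c ^ 2 := by
  have h := integral_rpow_mul_exp_neg_mul_Ioi (a := 2) (by norm_num) hc
  rw [show (2 : ℝ) - 1 = 1 by norm_num, Gamma_two] at h
  simpa using h

theorem integrableOn_mul_exp_neg_mul_Ioi {c : ℝ} (hc : 0 < c) :
    IntegrableOn (fun x : ℝ => x * exp (-(c * x))) (Ioi 0) :=
  .of_integral_ne_zero (by rw [integral_mul_exp_neg_mul_Ioi hc]; positivity)

theorem hasSum_mul_exp_neg_nat_mul {x : ℝ} (hx : 0 < x) :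
    HasSum (fun i : ℕ => x * exp (-(((i : ℝ) + 1) * x))) (x / (exp x - 1)) := by
  have h := (hasSum_geometric_of_lt_one (exp_pos (-x)).le
    (exp_lt_one_iff.2 (neg_neg_of_pos hx))).mul_left (x * exp (-x))
  have hterm : ∀ i : ℕ, x * exp (-(((i : ℝ) + 1) * x)) = x * exp (-x) * exp (-x) ^ i := fun i => by
    rw [mul_assoc, ← exp_nat_mul, ← exp_add]
    ring_nf
  have hsum : x / (exp x - 1) = x * exp (-x) * (1 - exp (-x))⁻¹ := by
    have h1 : exp x - 1 ≠ 0 := (sub_pos.2 (one_lt_exp_iff.2 hx)).ne'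
    have h2 : 1 - exp (-x) = (exp x - 1) * exp (-x) := by
      rw [sub_mul, ← exp_add, add_neg_cancel, exp_zero, one_mul]
    rw [h2]
    field_simp
  simpa only [hterm, hsum] using h

theorem integral_div_exp_sub_one :
    ∫ x in Ioi (0 : ℝ), x / (exp x - 1) = π ^ 2 / 6 := by
  have hzeta : HasSum (fun i : ℕ => 1 / ((i : ℝ) + 1) ^ 2) (π ^ 2 / 6) := by
    simpa using (hasSum_nat_add_iff' 1).2 hasSum_zeta_two
  have hnorm : ∀ i : ℕ, ∫ x in Ioi (0 : ℝ), ‖x * exp (-(((i : ℝ) + 1) * x))‖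
      = 1 / ((i : ℝ) + 1) ^ 2 := fun i => by
    rw [← integral_mul_exp_neg_mul_Ioi (by positivity)]
    exact setIntegral_congr_fun measurableSet_Ioi fun x hx =>
      norm_of_nonneg (mul_nonneg (le_of_lt hx) (exp_pos _).le)
  have h := hasSum_integral_of_summable_integral_norm
    (F := fun (i : ℕ) (x : ℝ) => x * exp (-(((i : ℝ) + 1) * x))) (μ := volume.restrict (Ioi 0))
    (fun i => integrableOn_mul_exp_neg_mul_Ioi (by positivity))
    (by simpa only [hnorm] using hzeta.summable)
  rw [setIntegral_congr_fun measurableSet_Ioi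
    fun x hx => (hasSum_mul_exp_neg_nat_mul hx).tsum_eq] at h
  refine h.unique ?_
  simpa only [integral_mul_exp_neg_mul_Ioi (Nat.cast_add_one_pos _)] using hzeta

theorem integrableOn_div_exp_sub_one :
    IntegrableOn (fun x : ℝ => x / (exp x - 1)) (Ioi 0) :=
  .of_integral_ne_zero (by rw [integral_div_exp_sub_one]; positivity)

theorem div_exp_add_one_eq {x : ℝ} (hx : 0 < x) :
    x / (exp x + 1) = x / (exp x - 1) - 2 * x / (exp (2 * x) - 1) := by
  have h1 : exp x - 1 ≠ 0 := (sub_pos.2 (one_lt_exp_iff.2 hx)).ne'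
  have h2 : exp x + 1 ≠ 0 := by positivity
  rw [two_mul x, exp_add, show exp x * exp x - 1 = (exp x - 1) * (exp x + 1) by ring]
  field_simp
  ring

theorem integral_div_exp_add_one :
    ∫ x in Ioi (0 : ℝ), x / (exp x + 1) = π ^ 2 / 12 := by
  have hscaled := (integrableOn_Ioi_comp_mul_left_iff (fun x : ℝ => x / (exp x - 1)) 0
    zero_lt_two).2 (by simpa using integrableOn_div_exp_sub_one)
  rw [setIntegral_congr_fun measurableSet_Ioi fun x hx => div_exp_add_one_eq hx,
    integral_sub integrableOn_div_exp_sub_one hscaled,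
    integral_comp_mul_left_Ioi (fun x : ℝ => x / (exp x - 1)) 0 zero_lt_two, mul_zero,
    integral_div_exp_sub_one, smul_eq_mul]
  ring

theorem integrableOn_div_exp_add_one :
    IntegrableOn (fun x : ℝ => x / (exp x + 1)) (Ioi 0) :=
  .of_integral_ne_zero (by rw [integral_div_exp_add_one]; positivity)

theorem integrable_abs_pow_mul_exp_neg_mul_abs (n : ℕ) {c : ℝ} (hc : 0 < c) :
    Integrable fun z : ℝ => |z| ^ n * exp (-(c * |z|)) := by
  refine .of_integral_ne_zero ?_
  have h := integral_rpow_mul_exp_neg_mul_Ioi (a := n + 1) (by positivity) hc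
  simp only [add_sub_cancel_right, rpow_natCast] at h
  rw [integral_comp_abs (f := fun z => z ^ n * exp (-(c * z))), h]
  have := Gamma_pos_of_pos (n.cast_add_one_pos (α := ℝ))
  positivity

theorem integrable_exp_neg_mul_abs {c : ℝ} (hc : 0 < c) :
    Integrable fun z : ℝ => exp (-(c * |z|)) := by
  simpa using integrable_abs_pow_mul_exp_neg_mul_abs 0 hc

@[fun_prop]
theorem continuous_thermalEntropy : Continuous thermalEntropy :=
  continuous_iff_continuousAt.2 fun z => (hasDerivAt_thermalEntropy z).continuousAt

theorem integrable_sq_mul_thermalEntropy : Integrable fun z => z ^ 2 * thermalEntropy z := by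
  refine ((integrable_abs_pow_mul_exp_neg_mul_abs 2 (c := 3 / 2) (by norm_num)).const_mul 4).mono'
    (by fun_prop) (.of_forall fun z => ?_)
  rw [norm_of_nonneg (mul_nonneg (sq_nonneg _) (thermalEntropy_nonneg z)), sq_abs, mul_left_comm]
  exact mul_le_mul_of_nonneg_left (thermalEntropy_le_exp z) (sq_nonneg z)

theorem integrable_thermalEntropy : Integrable thermalEntropy := by
  refine ((integrable_exp_neg_mul_abs (c := 3 / 2) (by norm_num)).const_mul 4).mono'
    (by fun_prop) (.of_forall fun z => ?_)
  rw [norm_of_nonneg (thermalEntropy_nonneg z)]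
  exact thermalEntropy_le_exp z

theorem hasDerivAt_mul_log_one_add_exp (x : ℝ) :
    HasDerivAt (fun z => z * log (1 + exp (-(2 * z))))
      (thermalEntropy x - 2 * (2 * x / (exp (2 * x) + 1))) x := by
  have hexp : HasDerivAt (fun z : ℝ => 1 + exp (-(2 * z))) (exp (-(2 * x)) * -(2 * 1)) x :=
    ((hasDerivAt_id x).const_mul 2).neg.exp.const_add 1
  refine ((hasDerivAt_id x).mul (hexp.log (by positivity))).congr_deriv ?_
  rw [thermalEntropy_eq_log_add, exp_neg]
  simp only [id]
  field_simp
  ring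

theorem tendsto_mul_log_one_add_exp :
    Tendsto (fun z => z * log (1 + exp (-(2 * z)))) atTop (𝓝 0) := by
  refine squeeze_zero' ?_ ?_ (tendsto_pow_mul_exp_neg_atTop_nhds_zero 1)
  · filter_upwards [eventually_ge_atTop 0] with z hz
    exact mul_nonneg hz (log_nonneg (by linarith [exp_pos (-(2 * z))]))
  · filter_upwards [eventually_ge_atTop 0] with z hz
    rw [pow_one]
    gcongr
    calc log (1 + exp (-(2 * z))) ≤ exp (-(2 * z)) := by
          linarith [log_le_sub_one_of_pos (show 0 < 1 + exp (-(2 * z)) by positivity)]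
      _ ≤ exp (-z) := exp_le_exp.2 (by linarith)

theorem integral_thermalEntropy : ∫ z, thermalEntropy z = π ^ 2 / 6 := by
  have hscaled := ((integrableOn_Ioi_comp_mul_left_iff (fun x : ℝ => x / (exp x + 1)) 0
    zero_lt_two).2 (by simpa using integrableOn_div_exp_add_one)).const_mul 2
  have hparts := integral_Ioi_of_hasDerivAt_of_tendsto' (a := 0)
    (fun x _ => hasDerivAt_mul_log_one_add_exp x)
    (integrable_thermalEntropy.integrableOn.sub hscaled) tendsto_mul_log_one_add_exp
  rw [integral_sub integrable_thermalEntropy.integrableOn hscaled, integral_const_mul,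
    integral_comp_mul_left_Ioi (fun x : ℝ => x / (exp x + 1)) 0 zero_lt_two, mul_zero,
    integral_div_exp_add_one, smul_eq_mul] at hparts
  rw [← funext thermalEntropy_abs, integral_comp_abs]
  linarith

end EntropyIntegral

section ModeFunctions

open Real Filter

/-- The variance `4p(1-p) = sech² (2π²k)` of the mode of frequency `k`; it is the squared modulus
of the Fourier transform of the kernel `sechKernel`. -/
noncomputable def modeVariance (k : ℝ) : ℝ := sechSq (2 * π ^ 2 * k)

/-- The entropy `varEntropy (modeVariance k)` of the mode of frequency `k`. -/
noncomputable def modeEntropy (k : ℝ) : ℝ := thermalEntropy (2 * π ^ 2 * k)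

/-- The slope of `varEntropy` at `modeVariance k`, for `k ≠ 0`. -/
noncomputable def modeSlope (k : ℝ) : ℝ := mulCoth (2 * π ^ 2 * k) / 2

theorem sechSq_le_exp (z : ℝ) : sechSq z ≤ 4 * exp (-(2 * |z|)) := by
  rw [← sechSq_abs, sechSq]
  generalize |z| = z
  have hcosh : exp z / 2 ≤ cosh z := by
    rw [cosh_eq]
    linarith [exp_pos (-z)]
  calc 1 / cosh z ^ 2 ≤ 1 / (exp z / 2) ^ 2 := by gcongr
    _ = _ := by
      rw [exp_neg, two_mul, exp_add]
      field_simp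
      norm_num

@[fun_prop]
theorem continuous_sechSq : Continuous sechSq :=
  continuous_const.div (by fun_prop) fun z => (pow_pos (cosh_pos z) 2).ne'

theorem integrable_sechSq : Integrable sechSq := by
  refine ((integrable_exp_neg_mul_abs (c := 2) two_pos).const_mul 4).mono' (by fun_prop)
    (.of_forall fun z => ?_)
  rw [norm_of_nonneg (sechSq_pos z).le]
  exact sechSq_le_exp z

theorem cosh_le_exp_mul_cosh_add (z h : ℝ) : cosh z ≤ exp |h| * cosh (z + h) := by
  have h1 : exp z ≤ exp |h| * exp (z + h) := by
    rw [← exp_add]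
    exact exp_le_exp.2 (by linarith [neg_abs_le h])
  have h2 : exp (-z) ≤ exp |h| * exp (-(z + h)) := by
    rw [← exp_add]
    exact exp_le_exp.2 (by linarith [le_abs_self h])
  rw [cosh_eq, cosh_eq]
  linarith

theorem sechSq_add_le (z h : ℝ) : sechSq (z + h) ≤ exp (2 * |h|) * sechSq z := by
  have : 0 < cosh z := cosh_pos z
  have : 0 < cosh (z + h) := cosh_pos (z + h)
  rw [sechSq, sechSq, two_mul, exp_add, ← sq, mul_one_div,
    div_le_div_iff₀ (by positivity) (by positivity), ← mul_pow, one_mul]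
  gcongr
  exact cosh_le_exp_mul_cosh_add z h

theorem exp_two_mul_sub_one_le {a : ℝ} (h0 : 0 ≤ a) (h1 : a ≤ 1) : exp (2 * a) - 1 ≤ 8 * a := by
  have hle : exp a ≤ 1 + 2 * a := by
    have h := abs_exp_sub_one_le (x := a) (by rwa [abs_of_nonneg h0])
    rw [abs_of_nonneg h0] at h
    linarith [le_abs_self (exp a - 1)]
  rw [two_mul, exp_add]
  nlinarith [exp_pos a]

theorem abs_sechSq_sub_le (z h : ℝ) :
    |sechSq z - sechSq (z + h)| ≤ 8 * |h| * (sechSq z + sechSq (z + h)) := by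
  have hz := sechSq_pos z
  have hzh := sechSq_pos (z + h)
  rcases le_total |h| 1 with h1 | h1
  · have hexp := exp_two_mul_sub_one_le (abs_nonneg h) h1
    have hright := sechSq_add_le z h
    have hleft := sechSq_add_le (z + h) (-h)
    rw [add_neg_cancel_right, abs_neg] at hleft
    rw [abs_le]
    constructor <;> nlinarith [abs_nonneg h]
  · rw [abs_le]
    constructor <;> nlinarith

theorem modeVariance_pos (k : ℝ) : 0 < modeVariance k := sechSq_pos _

theorem modeVariance_neg (k : ℝ) : modeVariance (-k) = modeVariance k := by
  simp [modeVariance, sechSq]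

@[fun_prop]
theorem continuous_modeVariance : Continuous modeVariance := by
  unfold modeVariance
  fun_prop

theorem integrable_modeVariance : Integrable modeVariance :=
  integrable_sechSq.comp_mul_left' (by positivity)

theorem abs_modeVariance_sub_le (k η : ℝ) : |modeVariance k - modeVariance (k + η)| ≤
    16 * π ^ 2 * |η| * (modeVariance k + modeVariance (k + η)) := by
  have h := abs_sechSq_sub_le (2 * π ^ 2 * k) (2 * π ^ 2 * η)
  rw [abs_mul, abs_of_pos (by positivity : 0 < 2 * π ^ 2), ← mul_add] at h
  exact h.trans_eq (by rw [modeVariance, modeVariance]; ring)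

theorem varEntropy_modeVariance (k : ℝ) : varEntropy (modeVariance k) = modeEntropy k :=
  varEntropy_sechSq _

theorem modeEntropy_nonneg (k : ℝ) : 0 ≤ modeEntropy k := thermalEntropy_nonneg _

@[fun_prop]
theorem continuous_modeEntropy : Continuous modeEntropy := by
  unfold modeEntropy
  fun_prop

theorem integrable_modeEntropy : Integrable modeEntropy :=
  integrable_thermalEntropy.comp_mul_left' (by positivity)

theorem integral_modeEntropy : ∫ k, modeEntropy k = 1 / 12 := by
  unfold modeEntropy
  rw [Measure.integral_comp_mul_left, integral_thermalEntropy, abs_of_pos (by positivity),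
    smul_eq_mul]
  field_simp
  norm_num

theorem integrable_sq_mul_modeEntropy : Integrable fun k => k ^ 2 * modeEntropy k := by
  refine ((integrable_sq_mul_thermalEntropy.comp_mul_left'
    (by positivity : 2 * π ^ 2 ≠ 0)).const_mul (1 / (2 * π ^ 2) ^ 2)).congr (.of_forall fun k => ?_)
  simp only [modeEntropy]
  field_simp

theorem measurable_modeSlope : Measurable modeSlope := by
  have hmulCoth : Measurable mulCoth := measurable_id.div
    (continuous_iff_continuousAt.2 fun z => (hasDerivAt_tanh z).continuousAt).measurable
  exact (hmulCoth.comp (measurable_const_mul _)).div_const 2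

theorem modeSlope_nonneg (k : ℝ) : 0 ≤ modeSlope k := div_nonneg (mulCoth_nonneg _) two_pos.le

theorem modeSlope_neg (k : ℝ) : modeSlope (-k) = modeSlope k := by
  rw [modeSlope, modeSlope, ← mulCoth_abs, mul_neg, abs_neg, mulCoth_abs]

theorem abs_modeSlope_sub_le {k l : ℝ} (hk : k ≠ 0) (hl : l ≠ 0) :
    |modeSlope k - modeSlope l| ≤ π ^ 2 * |k - l| := by
  have hpos : 0 < 2 * π ^ 2 := by positivity
  have h := abs_mulCoth_sub_le (mul_ne_zero hpos.ne' hl) (mul_ne_zero hpos.ne' hk)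
  rw [← mul_sub, abs_mul, abs_of_pos hpos] at h
  rw [modeSlope, modeSlope, ← sub_div, abs_div, abs_of_pos (two_pos : (0 : ℝ) < 2)]
  linarith

theorem varEntropy_le_modeEntropy_add {k x : ℝ} (hk : k ≠ 0) (hx : 0 ≤ x) :
    varEntropy x ≤ modeEntropy k - modeSlope k * modeVariance k + modeSlope k * x := by
  have h := varEntropy_le_tangent (z := 2 * π ^ 2 * k) (mul_ne_zero (by positivity) hk) hx
  rw [modeEntropy, modeSlope, modeVariance]
  linarith

theorem modeSlope_mul_modeVariance_le (k : ℝ) : modeSlope k * modeVariance k ≤ modeEntropy k :=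
  mulCoth_mul_sechSq_le _

theorem integrable_modeSlope_mul_modeVariance :
    Integrable fun k => modeSlope k * modeVariance k := by
  refine integrable_modeEntropy.mono'
    (measurable_modeSlope.mul continuous_modeVariance.measurable).aestronglyMeasurable
    (.of_forall fun k => ?_)
  rw [norm_of_nonneg (mul_nonneg (modeSlope_nonneg k) (modeVariance_pos k).le)]
  exact modeSlope_mul_modeVariance_le k

theorem ae_abs_modeSlope_sub_le (η : ℝ) :
    ∀ᵐ k, |modeSlope (k + η) - modeSlope k| ≤ π ^ 2 * |η| := by
  filter_upwards [compl_mem_ae_iff.2 (measure_singleton (μ := volume) (0 : ℝ)),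
    compl_mem_ae_iff.2 (measure_singleton (μ := volume) (-η))] with k h0 hη
  have h := abs_modeSlope_sub_le (k := k + η) (fun h => hη (eq_neg_of_add_eq_zero_left h)) h0
  rwa [add_sub_cancel_left] at h

end ModeFunctions

section TranslatedProducts

variable {f g : ℝ → ℝ} {L M : ℝ}

theorem integrable_mul_comp_add_right (hf : AEStronglyMeasurable f) (hg : Integrable g)
    (hfg : Integrable fun x => f x * g x) (h : ℝ)
    (hL : ∀ᵐ x, |f (x + h) - f x| ≤ L * |h|) : Integrable fun x => f x * g (x + h) := by
  have hsub : Integrable fun x => (f x - f (x + h)) * g (x + h) := by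
    refine (hg.comp_add_right h).bdd_mul (c := L * |h|) ?_ ?_
    · exact hf.sub (hf.comp_measurePreserving (measurePreserving_add_right volume h))
    · filter_upwards [hL] with x hx
      rwa [Real.norm_eq_abs, abs_sub_comm]
  refine (hsub.add (hfg.comp_add_right h)).congr (.of_forall fun x => ?_)
  simp only [Pi.add_apply]
  ring

/- By evenness the two cross terms `f x * g (x + h)` and `f (x + h) * g x` have the same integral,
and the sum of the cross terms differs from that of the diagonal terms by a product of
differences. -/
theorem integral_mul_comp_add_right_le (hf : AEStronglyMeasurable f) (hg : Integrable g)
    (hfg : Integrable fun x => f x * g x) (hf_even : ∀ x, f (-x) = f x)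
    (hg_even : ∀ x, g (-x) = g x)
    (hL : ∀ h, ∀ᵐ x, |f (x + h) - f x| ≤ L * |h|)
    (hgM : ∀ x h, |g x - g (x + h)| ≤ M * |h| * (g x + g (x + h))) (h : ℝ) :
    ∫ x, f x * g (x + h) ≤ (∫ x, f x * g x) + L * M * (∫ x, g x) * h ^ 2 := by
  have hcross := integrable_mul_comp_add_right hf hg hfg h (hL h)
  have hcross' : Integrable fun x => f (x + h) * g x := by
    simpa using (integrable_mul_comp_add_right hf hg hfg (-h) (hL _)).comp_add_right h
  have hsymm : ∫ x, f (x + h) * g x = ∫ x, f x * g (x + h) := by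
    rw [← integral_sub_left_eq_self (fun x => f x * g (x + h)) volume (-h)]
    refine integral_congr_ae (.of_forall fun x => ?_)
    simp only
    rw [show -h - x = -(x + h) by ring, hf_even, show -(x + h) + h = -x by ring, hg_even]
  have hdiag : Integrable fun x => f (x + h) * g (x + h) := hfg.comp_add_right h
  have hgh : Integrable fun x => g (x + h) := hg.comp_add_right h
  have hle : ∫ x, (f x * g (x + h) + f (x + h) * g x) ≤
      ∫ x, (f x * g x + f (x + h) * g (x + h) + L * M * h ^ 2 * (g x + g (x + h))) := by
    refine integral_mono_ae (hcross.add hcross')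
      ((hfg.add hdiag).add ((hg.add hgh).const_mul _)) ?_
    filter_upwards [hL h] with x hx
    have hprod : (f (x + h) - f x) * (g x - g (x + h)) ≤
        L * |h| * (M * |h| * (g x + g (x + h))) := by
      refine (le_abs_self _).trans ?_
      rw [abs_mul]
      exact mul_le_mul hx (hgM x h) (abs_nonneg _) ((abs_nonneg _).trans hx)
    rw [show L * |h| * (M * |h| * (g x + g (x + h))) =
      L * M * h ^ 2 * (g x + g (x + h)) by rw [← sq_abs h]; ring] at hprod
    linarith
  have hdiag_add : Integrable fun x => f x * g x + f (x + h) * g (x + h) := hfg.add hdiag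
  have hg_add : Integrable fun x => L * M * h ^ 2 * (g x + g (x + h)) :=
    (hg.add hgh).const_mul _
  rw [integral_add hcross hcross', integral_add hdiag_add hg_add,
    integral_add hfg hdiag, integral_const_mul, integral_add hg hgh, hsymm,
    integral_add_right_eq_self (fun x => f x * g x), integral_add_right_eq_self g] at hle
  linarith

theorem integrable_modeSlope_mul_modeVariance_add (η : ℝ) :
    Integrable fun k => modeSlope k * modeVariance (k + η) :=
  integrable_mul_comp_add_right measurable_modeSlope.aestronglyMeasurable
    integrable_modeVariance integrable_modeSlope_mul_modeVariance η (ae_abs_modeSlope_sub_le η)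

/-- The constant in the quadratic translation bound
`integral_modeSlope_mul_modeVariance_add_le`. -/
noncomputable def translationConst : ℝ :=
  Real.pi ^ 2 * (16 * Real.pi ^ 2) * ∫ k, modeVariance k

theorem translationConst_nonneg : 0 ≤ translationConst :=
  mul_nonneg (by positivity) (integral_nonneg fun k => (modeVariance_pos k).le)

theorem integral_modeSlope_mul_modeVariance_add_le (η : ℝ) :
    ∫ k, modeSlope k * modeVariance (k + η) ≤ (∫ k, modeSlope k * modeVariance k) +
      translationConst * η ^ 2 :=
  integral_mul_comp_add_right_le measurable_modeSlope.aestronglyMeasurable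
    integrable_modeVariance integrable_modeSlope_mul_modeVariance modeSlope_neg modeVariance_neg
    ae_abs_modeSlope_sub_le abs_modeVariance_sub_le η

end TranslatedProducts

section Plancherel

open scoped FourierTransform SchwartzMap

variable {f : ℝ → ℂ}

theorem coeFn_fourier_toLp_ae_eq (hf : Integrable f) (hf₂ : MemLp f 2) :
    (𝓕 (hf₂.toLp f) : Lp (α := ℝ) ℂ 2 volume) =ᵐ[volume] 𝓕 f := by
  have hcont : Continuous (𝓕 f) := VectorFourier.fourierIntegral_continuous
    Real.continuous_fourierChar (by exact continuous_inner) hf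
  refine ae_eq_of_integral_contDiff_smul_eq ((Lp.memLp _).locallyIntegrable (by norm_num))
    hcont.locallyIntegrable fun g hg hg_supp => ?_
  let φ : 𝓢(ℝ, ℂ) := (hg_supp.comp_left rfl : HasCompactSupport (Complex.ofRealCLM ∘ g))
    |>.toSchwartzMap (by fun_prop)
  have hflip : ∫ x, 𝓕 φ x • f x = ∫ x, φ x • 𝓕 f x := by
    have h := VectorFourier.integral_fourierIntegral_smul_eq_flip (L := innerₗ ℝ)
      (μ := (volume : Measure ℝ)) (ν := (volume : Measure ℝ)) (f := φ) (g := f)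
      Real.continuous_fourierChar continuous_inner φ.integrable hf
    rw [flip_innerₗ] at h
    rw [SchwartzMap.fourier_coe]
    exact h
  calc ∫ x, g x • (𝓕 (hf₂.toLp f) : Lp (α := ℝ) ℂ 2 volume) x
      = Lp.toTemperedDistribution (𝓕 (hf₂.toLp f) : Lp (α := ℝ) ℂ 2 volume) φ := by simp [φ]
    _ = ∫ x, 𝓕 φ x • hf₂.toLp f x := by
      rw [← Lp.fourier_toTemperedDistribution_eq, TemperedDistribution.fourier_apply,
        Lp.toTemperedDistribution_apply]
    _ = ∫ x, 𝓕 φ x • f x := by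
      refine integral_congr_ae ?_
      filter_upwards [hf₂.coeFn_toLp] with x hx
      rw [hx]
    _ = ∫ x, g x • 𝓕 f x := by
      rw [hflip]
      simp [φ]

theorem memLp_two_fourier (hf : Integrable f) (hf₂ : MemLp f 2) : MemLp (𝓕 f) 2 :=
  (memLp_congr_ae (coeFn_fourier_toLp_ae_eq hf hf₂)).1 (Lp.memLp _)

theorem integral_norm_sq_fourier_eq (hf : Integrable f) (hf₂ : MemLp f 2) :
    ∫ k, ‖𝓕 f k‖ ^ 2 = ∫ u, ‖f u‖ ^ 2 := by
  have hsq (F : Lp (α := ℝ) ℂ 2 volume) : ‖F‖ ^ 2 = ∫ u, ‖F u‖ ^ 2 := by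
    rw [norm_sq_eq_re_inner (𝕜 := ℂ), L2.inner_def, ← integral_re (L2.integrable_inner F F)]
    simp only [← norm_sq_eq_re_inner]
  calc ∫ k, ‖𝓕 f k‖ ^ 2
      = ∫ k, ‖(𝓕 (hf₂.toLp f) : Lp (α := ℝ) ℂ 2 volume) k‖ ^ 2 := by
        refine integral_congr_ae ?_
        filter_upwards [coeFn_fourier_toLp_ae_eq hf hf₂] with k hk
        rw [hk]
    _ = ∫ u, ‖hf₂.toLp f u‖ ^ 2 := by rw [← hsq, Lp.norm_fourier_eq, hsq]
    _ = ∫ u, ‖f u‖ ^ 2 := by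
        refine integral_congr_ae ?_
        filter_upwards [hf₂.coeFn_toLp] with u hu
        rw [hu]

end Plancherel

section SechKernel

open Real
open scoped FourierTransform

/-- The convolution kernel `1 / (2π cosh (u / 2))`: the Carleman kernel `1 / (π (x + y))` in
logarithmic coordinates. -/
noncomputable def sechKernel (u : ℝ) : ℝ := 1 / (2 * π * cosh (u / 2))

theorem sechKernel_pos (u : ℝ) : 0 < sechKernel u := by
  have := cosh_pos (u / 2)
  unfold sechKernel
  positivity

theorem sechKernel_neg (u : ℝ) : sechKernel (-u) = sechKernel u := by
  rw [sechKernel, neg_div, cosh_neg, sechKernel]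

theorem continuous_sechKernel : Continuous sechKernel :=
  continuous_const.div (by fun_prop) fun u => by have := cosh_pos (u / 2); positivity

theorem sechKernel_le_exp (u : ℝ) : sechKernel u ≤ exp (-(1 / 2 * |u|)) := by
  have hcosh : exp (1 / 2 * |u|) ≤ 2 * cosh (u / 2) := by
    rw [← cosh_abs, abs_div, abs_two, cosh_eq, one_div, inv_mul_eq_div]
    linarith [exp_pos (-(|u| / 2))]
  rw [sechKernel, exp_neg, ← one_div]
  refine one_div_le_one_div_of_le (exp_pos _) (hcosh.trans ?_)
  nlinarith [pi_gt_three, cosh_pos (u / 2)]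

theorem sechKernel_le_one (u : ℝ) : sechKernel u ≤ 1 :=
  (sechKernel_le_exp u).trans (exp_le_one_iff.2 (by linarith [abs_nonneg u]))

theorem integrable_sechKernel : Integrable sechKernel := by
  refine (integrable_exp_neg_mul_abs one_half_pos).mono'
    continuous_sechKernel.aestronglyMeasurable (.of_forall fun u => ?_)
  rw [norm_of_nonneg (sechKernel_pos u).le]
  exact sechKernel_le_exp u

theorem sigmoid_eq_exp_mul_sechKernel (u : ℝ) :
    sigmoid u = π * (exp (u / 2) * sechKernel u) := by
  have hsum : exp u + 1 = exp (u / 2) * (2 * cosh (u / 2)) := by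
    rw [cosh_eq, mul_div_cancel₀ _ two_ne_zero, mul_add, ← exp_add, ← exp_add]
    simp
  have hcosh := (cosh_pos (u / 2)).ne'
  have hsq : exp u = exp (u / 2) * exp (u / 2) := by rw [← exp_add, add_halves]
  rw [sigmoid_def, exp_neg, show (1 + (exp u)⁻¹)⁻¹ = exp u * (exp u + 1)⁻¹ by field_simp, hsum,
    sechKernel, hsq]
  field_simp

theorem one_sub_sigmoid_eq_exp_mul_sechKernel (u : ℝ) :
    1 - sigmoid u = π * (exp (-(u / 2)) * sechKernel u) := by
  rw [← sigmoid_neg, sigmoid_eq_exp_mul_sechKernel, sechKernel_neg, neg_div]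

theorem sigmoid_mul_one_sub_sigmoid (u : ℝ) :
    sigmoid u * (1 - sigmoid u) = (π * sechKernel u) ^ 2 := by
  have hexp : exp (u / 2) * exp (-(u / 2)) = 1 := by rw [← exp_add, add_neg_cancel, exp_zero]
  rw [one_sub_sigmoid_eq_exp_mul_sechKernel, sigmoid_eq_exp_mul_sechKernel]
  linear_combination (π * sechKernel u) ^ 2 * hexp

/- The substitution `x = sigmoid u` turns `x ^ (s - 1) * (1 - x) ^ (-s)`, `s = 1/2 - iω`, into the
Fourier integrand: the moduli give the kernel and `log (x / (1 - x)) = u` the phase. -/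
theorem sigmoid_cpow_mul_one_sub_sigmoid_cpow (ω u : ℝ) :
    |sigmoid u * (1 - sigmoid u)| • ((sigmoid u : ℂ) ^ (1 / 2 - ω * Complex.I - 1) *
      (1 - (sigmoid u : ℂ)) ^ (1 / 2 + ω * Complex.I - 1)) =
    π * (Complex.exp (-(ω * u * Complex.I)) * sechKernel u) := by
  have hpos := sigmoid_pos u
  have hlt : 0 < 1 - sigmoid u := sub_pos.2 (sigmoid_lt_one u)
  have hlog : log (1 - sigmoid u) = log (sigmoid u) - u := by
    rw [← sigmoid_neg, ← sigmoid_mul_rexp_neg, log_mul hpos.ne' (exp_pos _).ne', log_exp]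
    ring
  have hkernel : π * sechKernel u = exp ((log (sigmoid u) + log (1 - sigmoid u)) / 2) := by
    rw [← log_mul hpos.ne' hlt.ne', sigmoid_mul_one_sub_sigmoid, log_pow]
    push_cast
    rw [mul_div_cancel_left₀ _ two_ne_zero, exp_log (mul_pos pi_pos (sechKernel_pos u))]
  have hprod : sigmoid u * (1 - sigmoid u) = exp (log (sigmoid u) + log (1 - sigmoid u)) := by
    rw [exp_add, exp_log hpos, exp_log hlt]
  rw [mul_left_comm, ← Complex.ofReal_mul π, hkernel, abs_of_pos (mul_pos hpos hlt), hprod,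
    Complex.real_smul, Complex.cpow_def_of_ne_zero (mod_cast hpos.ne'),
    ← Complex.ofReal_one, ← Complex.ofReal_sub,
    Complex.cpow_def_of_ne_zero (mod_cast hlt.ne'), ← Complex.ofReal_log hpos.le,
    ← Complex.ofReal_log hlt.le, hlog, Complex.ofReal_exp, Complex.ofReal_exp,
    ← Complex.exp_add, ← Complex.exp_add, ← Complex.exp_add]
  congr 1
  push_cast
  ring

theorem betaIntegral_eq_integral_sigmoid (s t : ℂ) :
    Complex.betaIntegral s t = ∫ u, |sigmoid u * (1 - sigmoid u)| •
      ((sigmoid u : ℂ) ^ (s - 1) * (1 - (sigmoid u : ℂ)) ^ (t - 1)) := by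
  rw [Complex.betaIntegral, intervalIntegral.integral_of_le zero_le_one,
    integral_Ioc_eq_integral_Ioo, ← range_sigmoid, ← image_univ,
    integral_image_eq_integral_abs_deriv_smul MeasurableSet.univ
      (fun x _ => (hasDerivAt_sigmoid x).hasDerivWithinAt) sigmoid_injective.injOn,
    setIntegral_univ]

theorem betaIntegral_half_sub_half_add (ω : ℝ) :
    Complex.betaIntegral (1 / 2 - ω * Complex.I) (1 / 2 + ω * Complex.I) = π / cosh (π * ω) := by
  have h := Complex.Gamma_mul_Gamma_eq_betaIntegral (s := 1 / 2 - ω * Complex.I)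
    (t := 1 / 2 + ω * Complex.I) (by simp) (by simp)
  rw [show 1 / 2 - ω * Complex.I + (1 / 2 + ω * Complex.I) = 1 by ring, Complex.Gamma_one, one_mul,
    show 1 / 2 + ω * Complex.I = 1 - (1 / 2 - ω * Complex.I) by ring,
    Complex.Gamma_mul_Gamma_one_sub, show (π : ℂ) * (1 / 2 - ω * Complex.I) =
      π / 2 - (π * ω : ℝ) * Complex.I by push_cast; ring,
    Complex.sin_pi_div_two_sub, Complex.cos_mul_I, ← Complex.ofReal_cosh] at h
  rw [show 1 / 2 + ω * Complex.I = 1 - (1 / 2 - ω * Complex.I) by ring, ← h]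

theorem fourier_sechKernel (k : ℝ) :
    𝓕 (fun u => (sechKernel u : ℂ)) k = (1 / cosh (2 * π ^ 2 * k) : ℝ) := by
  have hbeta := betaIntegral_half_sub_half_add (2 * π * k)
  simp only [betaIntegral_eq_integral_sigmoid, sigmoid_cpow_mul_one_sub_sigmoid_cpow] at hbeta
  rw [integral_const_mul, div_eq_mul_one_div] at hbeta
  rw [fourier_real_eq_integral_exp_smul, show 2 * π ^ 2 * k = π * (2 * π * k) by ring,
    Complex.ofReal_div, Complex.ofReal_one,
    ← mul_left_cancel₀ (Complex.ofReal_ne_zero.2 pi_ne_zero) hbeta]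
  refine integral_congr_ae (.of_forall fun u => ?_)
  simp only [smul_eq_mul]
  congr 2
  push_cast
  ring

theorem norm_sq_fourier_sechKernel (k : ℝ) :
    ‖𝓕 (fun u => (sechKernel u : ℂ)) k‖ ^ 2 = modeVariance k := by
  rw [fourier_sechKernel, Complex.norm_real, norm_eq_abs, sq_abs, div_pow, one_pow,
    modeVariance, sechSq]

theorem integral_sechKernel : ∫ u, sechKernel u = 1 := by
  have h := fourier_sechKernel 0
  rw [fourier_real_eq] at h
  simp only [mul_zero, neg_zero, AddChar.map_zero_eq_one, one_smul, integral_complex_ofReal,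
    cosh_zero, div_one] at h
  exact_mod_cast h

end SechKernel

section BoundedIntegrable

variable {α E 𝕜 : Type*} [MeasurableSpace α] {μ : Measure α} [NormedAddCommGroup E] [RCLike 𝕜]

/-- Bounded integrable functions: a subalgebra of `L¹ ∩ L²`, closed under products, on which the
Fourier transform and Plancherel's theorem are both available. -/
structure BoundedIntegrable (f : α → E) (μ : Measure α := by volume_tac) : Prop where
  integrable : Integrable f μ
  bounded : ∃ C, ∀ u, ‖f u‖ ≤ C

namespace BoundedIntegrable

theorem mul_bounded {f g : α → 𝕜} (hf : BoundedIntegrable f μ) (hg : AEStronglyMeasurable g μ)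
    (hbdd : ∃ C, ∀ u, ‖g u‖ ≤ C) : BoundedIntegrable (fun u => f u * g u) μ := by
  obtain ⟨C, hC⟩ := hf.bounded
  obtain ⟨D, hD⟩ := hbdd
  refine ⟨hf.integrable.mul_bdd hg (.of_forall hD), C * D, fun u => ?_⟩
  rw [norm_mul]
  exact mul_le_mul (hC u) (hD u) (norm_nonneg _) ((norm_nonneg _).trans (hC u))

theorem mul {f g : α → 𝕜} (hf : BoundedIntegrable f μ) (hg : BoundedIntegrable g μ) :
    BoundedIntegrable (fun u => f u * g u) μ :=
  hf.mul_bounded hg.integrable.aestronglyMeasurable hg.bounded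

theorem const_mul {f : α → 𝕜} (hf : BoundedIntegrable f μ) (c : 𝕜) :
    BoundedIntegrable (fun u => c * f u) μ := by
  obtain ⟨C, hC⟩ := hf.bounded
  refine ⟨hf.integrable.const_mul c, ‖c‖ * C, fun u => ?_⟩
  rw [norm_mul]
  exact mul_le_mul_of_nonneg_left (hC u) (norm_nonneg _)

theorem sum {ι : Type*} {s : Finset ι} {f : ι → α → E}
    (hf : ∀ i ∈ s, BoundedIntegrable (f i) μ) : BoundedIntegrable (fun u => ∑ i ∈ s, f i u) μ := by
  choose! C hC using fun i hi => (hf i hi).bounded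
  exact ⟨integrable_finsetSum _ fun i hi => (hf i hi).integrable, ∑ i ∈ s, C i,
    fun u => norm_sum_le_of_le s fun i hi => hC i hi u⟩

theorem ofReal {f : α → ℝ} (hf : BoundedIntegrable f μ) :
    BoundedIntegrable (fun u => (f u : 𝕜)) μ := by
  obtain ⟨C, hC⟩ := hf.bounded
  exact ⟨hf.integrable.ofReal, C, fun u => by simpa using hC u⟩

theorem memLp_two {f : α → E} (hf : BoundedIntegrable f μ) : MemLp f 2 μ := by
  obtain ⟨C, hC⟩ := hf.bounded
  rw [memLp_two_iff_integrable_sq_norm hf.integrable.aestronglyMeasurable]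
  simp only [sq]
  exact hf.integrable.norm.mul_bdd hf.integrable.aestronglyMeasurable.norm
    (.of_forall fun u => (norm_norm (f u)).trans_le (hC u))

end BoundedIntegrable

end BoundedIntegrable

section GramMatrix

variable {α ι : Type*} {w : α → ℝ} {ψ : ι → α → ℝ}

theorem mul_sum_mul_sum [Fintype ι] (v v' : ι → ℝ) (u : α) :
    w u * ((∑ a, v a * ψ a u) * ∑ b, v' b * ψ b u) =
      ∑ a, ∑ b, v a * v' b * (w u * (ψ a u * ψ b u)) := by
  rw [Finset.sum_mul_sum, Finset.mul_sum]
  refine Finset.sum_congr rfl fun a _ => ?_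
  rw [Finset.mul_sum]
  exact Finset.sum_congr rfl fun b _ => by ring

variable [MeasurableSpace α] {μ : Measure α}

/-- The Gram matrix of the functions `ψ` in the weighted space `L²(w dμ)`. -/
noncomputable def gramMatrix (μ : Measure α) (w : α → ℝ) (ψ : ι → α → ℝ) : Matrix ι ι ℝ :=
  .of fun a b => ∫ u, w u * (ψ a u * ψ b u) ∂μ

theorem isHermitian_gramMatrix : (gramMatrix μ w ψ).IsHermitian := by
  ext a b
  simp only [gramMatrix, conjTranspose_apply, of_apply, star_trivial, mul_comm (ψ b _)]

variable (hψ : ∀ a b, Integrable (fun u => w u * (ψ a u * ψ b u)) μ)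
include hψ

theorem gramMatrix_add {w' : α → ℝ} (hψ' : ∀ a b, Integrable (fun u => w' u * (ψ a u * ψ b u)) μ) :
    gramMatrix μ (fun u => w u + w' u) ψ = gramMatrix μ w ψ + gramMatrix μ w' ψ := by
  ext a b
  simp only [gramMatrix, of_apply, Matrix.add_apply, add_mul, integral_add (hψ a b) (hψ' a b)]

variable [Fintype ι]

theorem dotProduct_gramMatrix_mulVec (v v' : ι → ℝ) : v ⬝ᵥ gramMatrix μ w ψ *ᵥ v' =
    ∫ u, w u * ((∑ a, v a * ψ a u) * ∑ b, v' b * ψ b u) ∂μ := by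
  simp only [mul_sum_mul_sum]
  rw [integral_finsetSum _ fun a _ => integrable_finsetSum _ fun b _ => (hψ a b).const_mul _]
  refine Finset.sum_congr rfl fun a _ => ?_
  rw [integral_finsetSum _ fun b _ => (hψ a b).const_mul _, mulVec, dotProduct, Finset.mul_sum]
  refine Finset.sum_congr rfl fun b _ => ?_
  rw [integral_const_mul, gramMatrix, of_apply]
  ring

omit [Fintype ι] in
theorem posSemidef_gramMatrix [Finite ι] (hw : ∀ᵐ u ∂μ, 0 ≤ w u) :
    (gramMatrix μ w ψ).PosSemidef := by
  have := Fintype.ofFinite ι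
  refine .of_dotProduct_mulVec_nonneg isHermitian_gramMatrix fun v => ?_
  rw [star_trivial, dotProduct_gramMatrix_mulVec hψ]
  exact integral_nonneg_of_ae (hw.mono fun u hu => mul_nonneg hu (mul_self_nonneg _))

end GramMatrix

section Bessel

variable {ι H : Type*} [Fintype ι] [NormedAddCommGroup H]

/- Pythagoras for `g` and its projection `s`; vectors with `v i = 0` drop out because
`c / 0 = 0`. -/
theorem sum_norm_sq_inner_div_le [DecidableEq ι] [InnerProductSpace ℂ H] {v : ι → H} {x : ι → ℝ}
    (hv : ∀ i j, inner ℂ (v i) (v j) = if i = j then (x i : ℂ) else 0) (g : H) :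
    ∑ i, ‖inner ℂ (v i) g‖ ^ 2 / x i ≤ ‖g‖ ^ 2 := by
  set B := ∑ i, ‖inner ℂ (v i) g‖ ^ 2 / x i
  obtain ⟨s, hs⟩ : ∃ s, s = ∑ i, (inner ℂ (v i) g / x i : ℂ) • v i := ⟨_, rfl⟩
  have hinner (y : H) :
      inner ℂ s y = ∑ i, (starRingEnd ℂ) (inner ℂ (v i) g) / x i * inner ℂ (v i) y := by
    simp only [hs, sum_inner, inner_smul_left, map_div₀, Complex.conj_ofReal]
  have hsg : inner ℂ s g = (B : ℂ) := by
    rw [hinner, Complex.ofReal_sum]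
    refine Finset.sum_congr rfl fun i _ => ?_
    rw [div_mul_eq_mul_div, Complex.conj_mul']
    push_cast
    rfl
  have hvs (i) : inner ℂ (v i) s = inner ℂ (v i) g / x i * x i := by
    simp [hs, hv]
  have hss : inner ℂ s s = (B : ℂ) := by
    rw [hinner, ← hsg, hinner]
    refine Finset.sum_congr rfl fun i _ => ?_
    rw [hvs]
    rcases eq_or_ne (x i : ℂ) 0 with hi | hi
    · simp only [hi, div_zero, zero_mul]
    · rw [div_mul_cancel₀ _ hi]
  have h := norm_sub_sq (𝕜 := ℂ) s g
  rw [hsg, norm_sq_eq_re_inner (𝕜 := ℂ) s, hss] at h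
  simp only [RCLike.re_to_complex, Complex.ofReal_re] at h
  nlinarith [sq_nonneg ‖s - g‖]

end Bessel

section OrthogonalFunctions

open ComplexConjugate

variable {α ι : Type*} [MeasurableSpace α] {μ : Measure α} [DecidableEq ι]

/-- Pairwise orthogonal bounded integrable functions with squared norms `x`. -/
structure OrthogonalFunctions (φ : ι → α → ℝ) (x : ι → ℝ) (μ : Measure α := by volume_tac) :
    Prop where
  boundedIntegrable : ∀ i, BoundedIntegrable (φ i) μ
  integral_mul : ∀ i j, ∫ u, φ i u * φ j u ∂μ = if i = j then x i else 0

theorem inner_toLp {f g : α → ℂ} (hf : MemLp f 2 μ) (hg : MemLp g 2 μ) :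
    inner ℂ (hf.toLp f) (hg.toLp g) = ∫ u, conj (f u) * g u ∂μ := by
  rw [L2.inner_def]
  refine integral_congr_ae ?_
  filter_upwards [hf.coeFn_toLp, hg.coeFn_toLp] with u hfu hgu
  rw [hfu, hgu, RCLike.inner_apply']

theorem OrthogonalFunctions.sum_norm_sq_integral_mul_div_le [Fintype ι] {φ : ι → α → ℝ}
    {x : ι → ℝ} (h : OrthogonalFunctions φ x μ) {g : α → ℂ} (hg : BoundedIntegrable g μ) :
    ∑ i, ‖∫ u, (φ i u : ℂ) * g u ∂μ‖ ^ 2 / x i ≤ ∫ u, ‖g u‖ ^ 2 ∂μ := by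
  have hφ (i) : MemLp (fun u => (φ i u : ℂ)) 2 μ := (h.boundedIntegrable i).ofReal.memLp_two
  have hbessel := sum_norm_sq_inner_div_le (v := fun i => (hφ i).toLp _) (x := x)
    (fun i j => by
      simp only [inner_toLp, Complex.conj_ofReal, ← Complex.ofReal_mul]
      rw [integral_complex_ofReal, h.integral_mul]
      exact apply_ite Complex.ofReal _ _ _)
    (hg.memLp_two.toLp g)
  have hnorm : ‖hg.memLp_two.toLp g‖ ^ 2 = ∫ u, ‖g u‖ ^ 2 ∂μ := by
    rw [norm_sq_eq_re_inner (𝕜 := ℂ), inner_toLp]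
    simp only [Complex.conj_mul', ← Complex.ofReal_pow]
    rw [integral_complex_ofReal]
    rfl
  simpa only [inner_toLp, Complex.conj_ofReal, hnorm] using hbessel

end OrthogonalFunctions

section SechConvolution

open scoped FourierTransform

variable {E : Type*} [NormedAddCommGroup E] [NormedSpace ℝ E]

/-- The convolution of `f` with `sechKernel`. -/
noncomputable def sechConv (f : ℝ → E) (v : ℝ) : E := ∫ u, sechKernel (v - u) • f u

theorem sechConv_ofReal (f : ℝ → ℝ) (v : ℝ) :
    sechConv (fun u => (f u : ℂ)) v = ((sechConv f v : ℝ) : ℂ) := by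
  simp only [sechConv, Complex.real_smul, ← Complex.ofReal_mul]
  exact integral_complex_ofReal

theorem norm_sechKernel_smul_le (u : ℝ) (x : E) : ‖sechKernel u • x‖ ≤ ‖x‖ := by
  rw [norm_smul, Real.norm_of_nonneg (sechKernel_pos u).le]
  exact mul_le_of_le_one_left (norm_nonneg x) (sechKernel_le_one u)

theorem integrable_sechKernel_sub_smul {f : ℝ → E} (hf : Integrable f) (v : ℝ) :
    Integrable fun u => sechKernel (v - u) • f u :=
  hf.mono ((continuous_sechKernel.comp (continuous_sub_left v)).aestronglyMeasurable.smul
    hf.aestronglyMeasurable) (.of_forall fun _ => norm_sechKernel_smul_le _ _)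

theorem boundedIntegrable_sechConv {f : ℝ → E} (hf : Integrable f) :
    BoundedIntegrable (sechConv f) :=
  ⟨hf.integrable_convolution (ContinuousLinearMap.lsmul ℝ ℝ).flip integrable_sechKernel,
    ∫ u, ‖f u‖, fun _ => norm_integral_le_of_norm_le hf.norm
      (.of_forall fun _ => norm_sechKernel_smul_le _ _)⟩

theorem sechConv_sum {ι : Type*} (s : Finset ι) {φ : ι → ℝ → ℝ} (hφ : ∀ a, Integrable (φ a))
    (c : ι → ℝ) (v : ℝ) :
    sechConv (fun u => ∑ a ∈ s, c a * φ a u) v = ∑ a ∈ s, c a * sechConv (φ a) v := by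
  simp only [sechConv, Finset.smul_sum, ← integral_const_mul]
  rw [← integral_finsetSum _ fun a _ => (integrable_sechKernel_sub_smul (hφ a) v).const_mul (c a)]
  simp only [smul_eq_mul, mul_left_comm]

theorem fourier_sechConv {f : ℝ → ℂ} (hf : Integrable f) (k : ℝ) :
    𝓕 (sechConv f) k = 𝓕 f k * 𝓕 (fun u => (sechKernel u : ℂ)) k := by
  have hK : Integrable fun u => (sechKernel u : ℂ) := integrable_sechKernel.ofReal
  rw [← Real.fourier_mul_convolution_eq hf hK]
  refine congrFun (congrArg _ (funext fun v => ?_)) k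
  simp only [sechConv, convolution, ContinuousLinearMap.mul_apply', Complex.real_smul, mul_comm]

theorem norm_sq_fourier_sechConv {f : ℝ → ℂ} (hf : Integrable f) (k : ℝ) :
    ‖𝓕 (sechConv f) k‖ ^ 2 = ‖𝓕 f k‖ ^ 2 * modeVariance k := by
  rw [fourier_sechConv hf, norm_mul, mul_pow, norm_sq_fourier_sechKernel]

theorem integral_norm_sq_sechConv {f : ℝ → ℂ} (hf : Integrable f) :
    ∫ v, ‖sechConv f v‖ ^ 2 = ∫ k, ‖𝓕 f k‖ ^ 2 * modeVariance k := by
  have hb := boundedIntegrable_sechConv hf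
  rw [← integral_norm_sq_fourier_eq hb.integrable hb.memLp_two]
  simp only [norm_sq_fourier_sechConv hf]

theorem integral_sechConv_mul {f g : ℝ → ℂ} (hf : Integrable f) (hg : Integrable g) :
    ∫ v, sechConv f v * g v = ∫ u, f u * sechConv g u := by
  have hint : Integrable (Function.uncurry fun v u => sechKernel (v - u) • (f u * g v))
      (volume.prod volume) := by
    have hcont : Continuous fun z : ℝ × ℝ => sechKernel (z.1 - z.2) :=
      continuous_sechKernel.comp (continuous_fst.sub continuous_snd)
    have hprod := hg.mul_prod (ν := volume) hf
    refine hprod.mono (hcont.aestronglyMeasurable.smul ?_) (.of_forall fun z => ?_)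
    · exact hprod.aestronglyMeasurable.congr (.of_forall fun z => mul_comm _ _)
    · exact (norm_sechKernel_smul_le _ _).trans_eq (by rw [mul_comm])
  simp only [sechConv, ← integral_mul_const, ← integral_const_mul, smul_mul_assoc,
    mul_smul_comm]
  rw [integral_integral_swap hint]
  refine integral_congr_ae (.of_forall fun u => integral_congr_ae (.of_forall fun v => ?_))
  change sechKernel (v - u) • _ = sechKernel (u - v) • _
  rw [← sechKernel_neg, neg_sub]

end SechConvolution

section PowerSpectrum

open scoped FourierTransform

theorem BoundedIntegrable.fourierChar_smul {f : ℝ → ℂ} (hf : BoundedIntegrable f) (k : ℝ) :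
    BoundedIntegrable fun u => Real.fourierChar (-(u * k)) • f u := by
  refine ⟨?_, by simpa only [Circle.norm_smul] using hf.bounded⟩
  simpa [mul_comm] using (Real.fourierIntegral_convergent_iff k).2 hf.integrable

/-- The power spectrum `|f̂|²` of a real function. -/
noncomputable def powerSpectrum (f : ℝ → ℝ) (k : ℝ) : ℝ := ‖𝓕 (fun u => (f u : ℂ)) k‖ ^ 2

theorem powerSpectrum_nonneg (f : ℝ → ℝ) (k : ℝ) : 0 ≤ powerSpectrum f k := sq_nonneg _

variable {f : ℝ → ℝ}

theorem integrable_powerSpectrum (hf : BoundedIntegrable f) : Integrable (powerSpectrum f) := by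
  have hfC : BoundedIntegrable fun u => (f u : ℂ) := hf.ofReal
  have h := memLp_two_fourier hfC.integrable hfC.memLp_two
  exact (memLp_two_iff_integrable_sq_norm h.1).1 h

theorem integral_powerSpectrum (hf : BoundedIntegrable f) :
    ∫ k, powerSpectrum f k = ∫ u, f u ^ 2 := by
  have hfC : BoundedIntegrable fun u => (f u : ℂ) := hf.ofReal
  have h := integral_norm_sq_fourier_eq hfC.integrable hfC.memLp_two
  simpa only [powerSpectrum, Complex.norm_real, Real.norm_eq_abs, sq_abs] using h

theorem powerSpectrum_sechConv (hf : Integrable f) :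
    powerSpectrum (sechConv f) = fun k => powerSpectrum f k * modeVariance k := by
  have hfC : Integrable fun u => (f u : ℂ) := hf.ofReal
  ext k
  rw [powerSpectrum, funext fun v => (sechConv_ofReal f v).symm,
    norm_sq_fourier_sechConv hfC, powerSpectrum]

theorem integrable_powerSpectrum_mul_modeVariance (hf : Integrable f) :
    Integrable fun k => powerSpectrum f k * modeVariance k := by
  simpa only [powerSpectrum_sechConv hf] using
    integrable_powerSpectrum (boundedIntegrable_sechConv hf)

theorem integral_powerSpectrum_mul_modeVariance (hf : Integrable f) :
    ∫ k, powerSpectrum f k * modeVariance k = ∫ v, sechConv f v ^ 2 := by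
  simpa only [powerSpectrum_sechConv hf] using
    integral_powerSpectrum (boundedIntegrable_sechConv hf)

end PowerSpectrum

section BasisCombination

open scoped FourierTransform

variable {α ι : Type*} [MeasurableSpace α] {μ : Measure α} [Fintype ι]

/-- The family obtained from `φ` by the orthogonal change of basis `b`. -/
noncomputable def basisCombination (b : OrthonormalBasis ι ℝ (EuclideanSpace ℝ ι))
    (φ : ι → α → ℝ) (i : ι) (u : α) : ℝ :=
  ∑ a, (b i).ofLp a * φ a u

variable (b : OrthonormalBasis ι ℝ (EuclideanSpace ℝ ι))

theorem boundedIntegrable_basisCombination {φ : ι → α → ℝ}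
    (hφ : ∀ a, BoundedIntegrable (φ a) μ) (i : ι) :
    BoundedIntegrable (basisCombination b φ i) μ :=
  .sum fun a _ => (hφ a).const_mul _

theorem sechConv_basisCombination {φ : ι → ℝ → ℝ} (hφ : ∀ a, BoundedIntegrable (φ a)) (i : ι) :
    sechConv (basisCombination b φ i) = basisCombination b (fun a => sechConv (φ a)) i :=
  funext fun v => sechConv_sum _ (fun a => (hφ a).integrable) _ v

theorem integral_basisCombination_mul {φ : ι → α → ℝ} (hφ : ∀ a, BoundedIntegrable (φ a) μ)
    (i j : ι) : ∫ u, basisCombination b φ i u * basisCombination b φ j u ∂μ =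
      (b i).ofLp ⬝ᵥ gramMatrix μ (fun _ => 1) φ *ᵥ (b j).ofLp := by
  rw [dotProduct_gramMatrix_mulVec fun a c => by simpa using ((hφ a).mul (hφ c)).integrable]
  simp only [one_mul, basisCombination]

theorem sum_norm_sq_sum_orthonormalBasis_mul (z : ι → ℂ) :
    ∑ i, ‖∑ a, ((b i).ofLp a : ℂ) * z a‖ ^ 2 = ∑ a, ‖z a‖ ^ 2 := by
  have hre := sum_sq_dotProduct_orthonormalBasis b fun a => (z a).re
  have him := sum_sq_dotProduct_orthonormalBasis b fun a => (z a).im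
  simp only [dotProduct, ← sq] at hre him
  simp only [Complex.sq_norm, Complex.normSq_apply, ← sq, Complex.re_sum, Complex.im_sum,
    Finset.sum_add_distrib, Complex.re_ofReal_mul, Complex.im_ofReal_mul, hre, him]

theorem sum_powerSpectrum_basisCombination {φ : ι → ℝ → ℝ}
    (hφ : ∀ a, BoundedIntegrable (φ a)) (k : ℝ) :
    ∑ i, powerSpectrum (basisCombination b φ i) k = ∑ a, powerSpectrum (φ a) k := by
  refine .trans (Finset.sum_congr rfl fun i _ => ?_) (sum_norm_sq_sum_orthonormalBasis_mul b _)
  have hint (a : ι) : Integrable fun u => Real.fourierChar (-(u * k)) • (φ a u : ℂ) :=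
    ((hφ a).ofReal.fourierChar_smul k).integrable
  simp only [powerSpectrum, Real.fourier_real_eq, basisCombination, Complex.ofReal_sum,
    Complex.ofReal_mul, Finset.smul_sum, ← integral_const_mul, ← mul_smul_comm]
  rw [integral_finsetSum _ fun a _ => (hint a).const_mul _]

variable [DecidableEq ι]

theorem OrthogonalFunctions.basisCombination {φ : ι → α → ℝ}
    (hφ : OrthogonalFunctions φ (fun _ => 1) μ) :
    OrthogonalFunctions (basisCombination b φ) (fun _ => 1) μ := by
  refine ⟨boundedIntegrable_basisCombination b hφ.boundedIntegrable, fun i j => ?_⟩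
  have hgram : gramMatrix μ (fun _ => 1) φ = 1 := by
    ext a c
    simp only [gramMatrix, of_apply, one_mul, hφ.integral_mul, one_apply]
  rw [integral_basisCombination_mul b hφ.boundedIntegrable, hgram, one_mulVec,
    dotProduct_orthonormalBasis]

theorem orthogonalFunctions_eigenvectorBasis {ψ : ι → α → ℝ}
    (hψ : ∀ a, BoundedIntegrable (ψ a) μ) (hX : (gramMatrix μ (fun _ => 1) ψ).IsHermitian) :
    OrthogonalFunctions (XXChain.basisCombination hX.eigenvectorBasis ψ) hX.eigenvalues μ := by
  refine ⟨boundedIntegrable_basisCombination _ hψ, fun i j => ?_⟩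
  rw [integral_basisCombination_mul _ hψ, hX.mulVec_eigenvectorBasis, dotProduct_smul,
    dotProduct_orthonormalBasis]
  split_ifs with hij <;> simp [hij]

end BasisCombination

section BerezinLieb

open scoped FourierTransform

theorem integral_map_mul_le_map_integral_mul {α : Type*} [MeasurableSpace α] {μ : Measure α}
    {F : ℝ → ℝ} (hF : ConcaveOn ℝ (Ici 0) F) (hcont : ContinuousOn F (Ici 0)) {s p : α → ℝ}
    (hs : ∀ k, 0 ≤ s k) (hp : ∀ k, 0 ≤ p k) (hpint : Integrable p μ) (hp1 : ∫ k, p k ∂μ = 1)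
    (hsp : Integrable (fun k => s k * p k) μ) (hFp : Integrable (fun k => F (s k) * p k) μ) :
    ∫ k, F (s k) * p k ∂μ ≤ F (∫ k, s k * p k ∂μ) := by
  set ν := μ.withDensity fun k => ENNReal.ofReal (p k)
  have hmeas : AEMeasurable (fun k => ENNReal.ofReal (p k)) μ := hpint.1.aemeasurable.ennreal_ofReal
  have hfin : ∀ᵐ k ∂μ, ENNReal.ofReal (p k) < ⊤ := .of_forall fun _ => ENNReal.ofReal_lt_top
  have hν : IsProbabilityMeasure ν := ⟨by
    rw [withDensity_apply _ MeasurableSet.univ, setLIntegral_univ,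
      ← ofReal_integral_eq_lintegral_ofReal hpint (.of_forall hp), hp1, ENNReal.ofReal_one]⟩
  have hint (f : α → ℝ) : ∫ k, f k ∂ν = ∫ k, f k * p k ∂μ := by
    rw [integral_withDensity_eq_integral_toReal_smul₀ hmeas hfin]
    simp only [ENNReal.toReal_ofReal (hp _), smul_eq_mul, mul_comm]
  have hintegrable {f : α → ℝ} (hf : Integrable (fun k => f k * p k) μ) : Integrable f ν := by
    rw [integrable_withDensity_iff_integrable_smul₀' hmeas hfin]
    simpa only [ENNReal.toReal_ofReal (hp _), smul_eq_mul, mul_comm] using hf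
  simpa only [hint] using hF.le_map_integral hcont isClosed_Ici (.of_forall hs)
    (hintegrable hsp) (hintegrable hFp)

variable {ι : Type*} [Fintype ι] [DecidableEq ι] {φ : ι → ℝ → ℝ}

/-- The Gram matrix of the convolved functions `sechConv (φ a)`: the compression to the span of an
orthonormal family `φ` of the operator with Fourier symbol `modeVariance`. -/
noncomputable def sechGram {ι : Type*} (φ : ι → ℝ → ℝ) : Matrix ι ι ℝ :=
  gramMatrix volume (fun _ => 1) fun a => sechConv (φ a)

omit [Fintype ι] [DecidableEq ι] in
theorem posSemidef_sechGram [Finite ι] (hφ : ∀ a, Integrable (φ a)) : (sechGram φ).PosSemidef :=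
  posSemidef_gramMatrix (fun a b => by
    simpa using ((boundedIntegrable_sechConv (hφ a)).mul
      (boundedIntegrable_sechConv (hφ b))).integrable) (.of_forall fun _ => zero_le_one)

theorem orthogonalFunctions_sechConv_eigenvectorBasis (hφ : ∀ a, BoundedIntegrable (φ a))
    (hX : (sechGram φ).IsHermitian) :
    OrthogonalFunctions (fun i => sechConv (basisCombination hX.eigenvectorBasis φ i))
      hX.eigenvalues := by
  simp only [sechConv_basisCombination _ hφ]
  exact orthogonalFunctions_eigenvectorBasis
    (fun a => boundedIntegrable_sechConv (hφ a).integrable) hX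

theorem integrable_modeEntropy_mul_powerSpectrum {f : ℝ → ℝ} (hf : BoundedIntegrable f) :
    Integrable fun k => modeEntropy k * powerSpectrum f k :=
  (integrable_powerSpectrum hf).bdd_mul continuous_modeEntropy.aestronglyMeasurable
    (.of_forall fun k => (Real.norm_of_nonneg (modeEntropy_nonneg k)).trans_le
      ((varEntropy_modeVariance k).symm.trans_le (varEntropy_le_log_two _)))

/- Jensen's inequality for the probability densities `powerSpectrum (e i)`. -/
theorem integral_modeEntropy_mul_le_spectralSum_sechGram
    (hφ : OrthogonalFunctions φ fun _ => 1) :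
    ∫ k, modeEntropy k * ∑ a, powerSpectrum (φ a) k ≤ spectralSum varEntropy (sechGram φ) := by
  have hX : (sechGram φ).IsHermitian := isHermitian_gramMatrix
  set e := basisCombination hX.eigenvectorBasis φ
  have he : OrthogonalFunctions e fun _ => 1 := hφ.basisCombination hX.eigenvectorBasis
  have hconv := orthogonalFunctions_sechConv_eigenvectorBasis hφ.boundedIntegrable hX
  have hint (i) : Integrable fun k => modeEntropy k * powerSpectrum (e i) k :=
    integrable_modeEntropy_mul_powerSpectrum (he.boundedIntegrable i)
  simp only [← sum_powerSpectrum_basisCombination hX.eigenvectorBasis hφ.boundedIntegrable,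
    Finset.mul_sum]
  rw [integral_finsetSum _ fun i _ => hint i, spectralSum_eq_sum_eigenvalues _ hX]
  refine Finset.sum_le_sum fun i _ => ?_
  have hei := he.boundedIntegrable i
  have hmean : ∫ k, modeVariance k * powerSpectrum (e i) k = hX.eigenvalues i := by
    simp only [mul_comm (modeVariance _), integral_powerSpectrum_mul_modeVariance hei.integrable]
    simpa [sq] using hconv.integral_mul i i
  have hjensen := integral_map_mul_le_map_integral_mul concaveOn_varEntropy
    continuous_varEntropy.continuousOn (fun k => (modeVariance_pos k).le)
    (powerSpectrum_nonneg (e i)) (integrable_powerSpectrum hei)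
    (by simpa [integral_powerSpectrum hei, sq] using he.integral_mul i i)
    (by simpa only [mul_comm] using integrable_powerSpectrum_mul_modeVariance hei.integrable)
    (by simpa only [varEntropy_modeVariance] using hint i)
  simpa only [varEntropy_modeVariance, hmean] using hjensen

/-- The symbol `modeVariance` smeared with the power spectrum of the cutoff `θ`. -/
noncomputable def smearedVariance (θ : ℝ → ℝ) (k : ℝ) : ℝ :=
  ∫ η, powerSpectrum θ η * modeVariance (k - η)

theorem fourier_fourierChar_smul (f : ℝ → ℂ) (k l : ℝ) :
    𝓕 (fun u => Real.fourierChar (-(u * k)) • f u) l = 𝓕 f (l + k) := by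
  simp only [Real.fourier_real_eq, smul_smul, ← AddChar.map_add_eq_mul, mul_add, neg_add]

variable {θ : ℝ → ℝ}

theorem integral_norm_sq_sechConv_fourierChar_smul (hθ : BoundedIntegrable θ) (k : ℝ) :
    ∫ v, ‖sechConv (fun u => Real.fourierChar (-(u * k)) • (θ u : ℂ)) v‖ ^ 2 =
      smearedVariance θ k := by
  have hθC : BoundedIntegrable fun u => (θ u : ℂ) := hθ.ofReal
  rw [integral_norm_sq_sechConv (hθC.fourierChar_smul k).integrable, smearedVariance,
    ← integral_add_right_eq_self (fun η => powerSpectrum θ η * modeVariance (k - η)) k]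
  refine integral_congr_ae (.of_forall fun l => ?_)
  change _ = powerSpectrum θ (l + k) * modeVariance (k - (l + k))
  rw [sub_add_cancel_right, modeVariance_neg, powerSpectrum, ← fourier_fourierChar_smul]

theorem integral_modeSlope_mul_powerSpectrum_mul_modeVariance_le (θ : ℝ → ℝ) (η : ℝ) :
    ∫ k, modeSlope k * (powerSpectrum θ η * modeVariance (k - η)) ≤
      (∫ k, modeSlope k * modeVariance k) * powerSpectrum θ η +
        translationConst * (η ^ 2 * powerSpectrum θ η) := by
  have h := integral_modeSlope_mul_modeVariance_add_le (-η)
  simp only [mul_left_comm (modeSlope _), sub_eq_add_neg, integral_const_mul]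
  nlinarith [mul_le_mul_of_nonneg_left h (powerSpectrum_nonneg θ η)]

theorem integrable_powerSpectrum_add_sq_mul_powerSpectrum (hθ : BoundedIntegrable θ)
    (hθ₂ : Integrable fun η => η ^ 2 * powerSpectrum θ η) :
    Integrable fun η => (∫ k, modeSlope k * modeVariance k) * powerSpectrum θ η +
      translationConst * (η ^ 2 * powerSpectrum θ η) :=
  ((integrable_powerSpectrum hθ).const_mul _).add (hθ₂.const_mul _)

theorem integrable_modeSlope_mul_powerSpectrum_mul_modeVariance (hθ : BoundedIntegrable θ)
    (hθ₂ : Integrable fun η => η ^ 2 * powerSpectrum θ η) :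
    Integrable (Function.uncurry fun k η =>
      modeSlope k * (powerSpectrum θ η * modeVariance (k - η))) (volume.prod volume) := by
  have hmeas : AEStronglyMeasurable (Function.uncurry fun k η =>
      modeSlope k * (powerSpectrum θ η * modeVariance (k - η))) (volume.prod volume) :=
    (measurable_modeSlope.comp measurable_fst).aestronglyMeasurable.mul
      ((integrable_powerSpectrum hθ).1.comp_snd.mul
        (continuous_modeVariance.comp (continuous_fst.sub continuous_snd)).aestronglyMeasurable)
  have hnonneg (k η : ℝ) : 0 ≤ modeSlope k * (powerSpectrum θ η * modeVariance (k - η)) :=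
    mul_nonneg (modeSlope_nonneg k)
      (mul_nonneg (powerSpectrum_nonneg θ η) (modeVariance_pos _).le)
  rw [integrable_prod_iff' hmeas]
  refine ⟨.of_forall fun η => ?_, ?_⟩
  · simp only [Function.uncurry, mul_left_comm (modeSlope _), sub_eq_add_neg]
    exact (integrable_modeSlope_mul_modeVariance_add (-η)).const_mul _
  · refine (integrable_powerSpectrum_add_sq_mul_powerSpectrum hθ hθ₂).mono'
      hmeas.norm.prod_swap.integral_prod_right' (.of_forall fun η => ?_)
    simp only [Function.uncurry, Real.norm_of_nonneg (hnonneg _ _)]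
    rw [Real.norm_of_nonneg (integral_nonneg fun k => hnonneg k η)]
    exact integral_modeSlope_mul_powerSpectrum_mul_modeVariance_le θ η

theorem integrable_modeSlope_mul_smearedVariance (hθ : BoundedIntegrable θ)
    (hθ₂ : Integrable fun η => η ^ 2 * powerSpectrum θ η) :
    Integrable fun k => modeSlope k * smearedVariance θ k := by
  simpa only [smearedVariance, ← integral_const_mul, Function.uncurry] using
    (integrable_modeSlope_mul_powerSpectrum_mul_modeVariance hθ hθ₂).integral_prod_left

theorem integral_modeSlope_mul_smearedVariance_le (hθ : BoundedIntegrable θ)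
    (hθ₂ : Integrable fun η => η ^ 2 * powerSpectrum θ η) :
    ∫ k, modeSlope k * smearedVariance θ k ≤
      (∫ k, modeSlope k * modeVariance k) * (∫ u, θ u ^ 2) +
        translationConst * ∫ η, η ^ 2 * powerSpectrum θ η := by
  have hprod := integrable_modeSlope_mul_powerSpectrum_mul_modeVariance hθ hθ₂
  simp only [smearedVariance, ← integral_const_mul]
  rw [integral_integral_swap hprod]
  refine (integral_mono hprod.integral_prod_right
    (integrable_powerSpectrum_add_sq_mul_powerSpectrum hθ hθ₂)
    (integral_modeSlope_mul_powerSpectrum_mul_modeVariance_le θ)).trans_eq ?_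
  rw [integral_add ((integrable_powerSpectrum hθ).const_mul _) (hθ₂.const_mul _),
    integral_const_mul, integral_const_mul, integral_powerSpectrum hθ, integral_const_mul]

variable {x : ι → ℝ}

omit [Fintype ι] [DecidableEq ι] in
theorem powerSpectrum_mul (f θ : ℝ → ℝ) (k : ℝ) :
    powerSpectrum (fun u => f u * θ u) k =
      ‖∫ u, (f u : ℂ) * Real.fourierChar (-(u * k)) • (θ u : ℂ)‖ ^ 2 := by
  simp only [powerSpectrum, Real.fourier_real_eq, Complex.ofReal_mul, mul_smul_comm]

theorem sum_powerSpectrum_mul_div_le (h : OrthogonalFunctions φ x) (hθ : BoundedIntegrable θ)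
    (k : ℝ) : ∑ i, powerSpectrum (fun u => φ i u * θ u) k / x i ≤ ∫ u, θ u ^ 2 := by
  have hθC : BoundedIntegrable fun u => (θ u : ℂ) := hθ.ofReal
  simpa only [powerSpectrum_mul, Circle.norm_smul, Complex.norm_real, Real.norm_eq_abs, sq_abs]
    using h.sum_norm_sq_integral_mul_div_le (hθC.fourierChar_smul k)

theorem sum_powerSpectrum_sechConv_mul_le (h : OrthogonalFunctions φ fun _ => 1)
    (hθ : BoundedIntegrable θ) (k : ℝ) :
    ∑ i, powerSpectrum (fun u => sechConv (φ i) u * θ u) k ≤ smearedVariance θ k := by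
  have hθC : BoundedIntegrable fun u => (θ u : ℂ) := hθ.ofReal
  have hmode := (hθC.fourierChar_smul k).integrable
  have hφC (i) : Integrable fun u => (φ i u : ℂ) := (h.boundedIntegrable i).integrable.ofReal
  have hadjoint (i) : powerSpectrum (fun u => sechConv (φ i) u * θ u) k =
      ‖∫ u, (φ i u : ℂ) * sechConv (fun u => Real.fourierChar (-(u * k)) • (θ u : ℂ)) u‖ ^ 2 := by
    rw [powerSpectrum_mul, ← integral_sechConv_mul (hφC i) hmode]
    simp only [sechConv_ofReal]
  have hbessel := h.sum_norm_sq_integral_mul_div_le (boundedIntegrable_sechConv hmode)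
  rw [integral_norm_sq_sechConv_fourierChar_smul hθ] at hbessel
  simpa only [hadjoint, div_one] using hbessel

theorem sum_varEntropy_mul_powerSpectrum_le (h : OrthogonalFunctions φ fun _ => 1)
    (hconv : OrthogonalFunctions (fun i => sechConv (φ i)) x) (hx : ∀ i, 0 ≤ x i)
    (hθ : BoundedIntegrable θ) {k : ℝ} (hk : k ≠ 0) :
    ∑ i, varEntropy (x i) / x i * powerSpectrum (fun u => sechConv (φ i) u * θ u) k ≤
      (∫ u, θ u ^ 2) * (modeEntropy k - modeSlope k * modeVariance k) +
        modeSlope k * smearedVariance θ k := by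
  set q := fun i => powerSpectrum (fun u => sechConv (φ i) u * θ u) k
  have hq (i) : 0 ≤ q i := powerSpectrum_nonneg _ k
  have htangent (i) : varEntropy (x i) / x i * q i ≤
      (modeEntropy k - modeSlope k * modeVariance k) * (q i / x i) + modeSlope k * q i := by
    have hxq : x i * (q i / x i) ≤ q i := by
      rw [mul_div_left_comm]
      exact mul_le_of_le_one_right (hq i) (div_self_le_one _)
    nlinarith [mul_le_mul_of_nonneg_right (varEntropy_le_modeEntropy_add hk (hx i))
      (div_nonneg (hq i) (hx i)), mul_le_mul_of_nonneg_left hxq (modeSlope_nonneg k),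
      div_mul_eq_mul_div (varEntropy (x i)) (x i) (q i),
      mul_div_assoc (varEntropy (x i)) (q i) (x i)]
  refine (Finset.sum_le_sum fun i _ => htangent i).trans ?_
  rw [Finset.sum_add_distrib, ← Finset.mul_sum, ← Finset.mul_sum, mul_comm (∫ u, θ u ^ 2)]
  exact add_le_add
    (mul_le_mul_of_nonneg_left (sum_powerSpectrum_mul_div_le hconv hθ k)
      (sub_nonneg.2 (modeSlope_mul_modeVariance_le k)))
    (mul_le_mul_of_nonneg_left (sum_powerSpectrum_sechConv_mul_le h hθ k) (modeSlope_nonneg k))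

theorem sum_varEntropy_div_mul_integral_le (h : OrthogonalFunctions φ fun _ => 1)
    (hconv : OrthogonalFunctions (fun i => sechConv (φ i)) x) (hx : ∀ i, 0 ≤ x i)
    (hθ : BoundedIntegrable θ) (hθ₂ : Integrable fun η => η ^ 2 * powerSpectrum θ η) :
    ∑ i, varEntropy (x i) / x i * (∫ u, (sechConv (φ i) u * θ u) ^ 2) ≤
      (∫ u, θ u ^ 2) / 12 + translationConst * ∫ η, η ^ 2 * powerSpectrum θ η := by
  have hprod (i) : BoundedIntegrable fun u => sechConv (φ i) u * θ u :=
    (hconv.boundedIntegrable i).mul hθ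
  have hint (i) := (integrable_powerSpectrum (hprod i)).const_mul (varEntropy (x i) / x i)
  have hdiff : Integrable fun k => modeEntropy k - modeSlope k * modeVariance k :=
    integrable_modeEntropy.sub integrable_modeSlope_mul_modeVariance
  have hsmeared := integrable_modeSlope_mul_smearedVariance hθ hθ₂
  simp only [← integral_powerSpectrum (hprod _), ← integral_const_mul (varEntropy _ / _)]
  rw [← integral_finsetSum _ fun i _ => hint i]
  calc ∫ k, ∑ i, varEntropy (x i) / x i * powerSpectrum (fun u => sechConv (φ i) u * θ u) k
      ≤ ∫ k, ((∫ u, θ u ^ 2) * (modeEntropy k - modeSlope k * modeVariance k) +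
          modeSlope k * smearedVariance θ k) := by
        refine integral_mono_ae (integrable_finsetSum _ fun i _ => hint i)
          ((hdiff.const_mul _).add hsmeared) ?_
        filter_upwards [Measure.ae_ne volume 0] with k hk
        exact sum_varEntropy_mul_powerSpectrum_le h hconv hx hθ hk
    _ = (∫ u, θ u ^ 2) * (1 / 12 - ∫ k, modeSlope k * modeVariance k) +
          ∫ k, modeSlope k * smearedVariance θ k := by
        rw [integral_add (hdiff.const_mul _) hsmeared, integral_const_mul]
        congr 2
        rw [← integral_modeEntropy]
        exact integral_sub integrable_modeEntropy integrable_modeSlope_mul_modeVariance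
    _ ≤ _ := by linarith [integral_modeSlope_mul_smearedVariance_le hθ hθ₂]

section Cutoff

variable (hφ : ∀ a, BoundedIntegrable (φ a)) (hθ : BoundedIntegrable θ)
include hφ hθ

omit [Fintype ι] [DecidableEq ι] in
theorem integrable_sq_mul_sechConv_mul_sechConv (a b : ι) :
    Integrable fun u => θ u ^ 2 * (sechConv (φ a) u * sechConv (φ b) u) := by
  simp only [sq]
  exact ((hθ.mul hθ).mul
    ((boundedIntegrable_sechConv (hφ a).integrable).mul
      (boundedIntegrable_sechConv (hφ b).integrable))).integrable

omit [Fintype ι] [DecidableEq ι] in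
theorem integrable_one_sub_sq_mul_sechConv_mul_sechConv (a b : ι) :
    Integrable fun u => (1 - θ u ^ 2) * (sechConv (φ a) u * sechConv (φ b) u) := by
  simp only [sub_mul, one_mul]
  exact ((boundedIntegrable_sechConv (hφ a).integrable).mul
    (boundedIntegrable_sechConv (hφ b).integrable)).integrable.sub
      (integrable_sq_mul_sechConv_mul_sechConv hφ hθ a b)

omit [Fintype ι] [DecidableEq ι] in
theorem sechGram_eq_add : sechGram φ =
    gramMatrix volume (fun u => θ u ^ 2) (fun a => sechConv (φ a)) +
      gramMatrix volume (fun u => 1 - θ u ^ 2) fun a => sechConv (φ a) := by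
  rw [← gramMatrix_add (integrable_sq_mul_sechConv_mul_sechConv hφ hθ)
    (integrable_one_sub_sq_mul_sechConv_mul_sechConv hφ hθ), sechGram]
  simp only [add_sub_cancel]

theorem eigenvalues_sechGram_eq_add (hX : (sechGram φ).IsHermitian) (i : ι) : hX.eigenvalues i =
    (∫ u, (sechConv (basisCombination hX.eigenvectorBasis φ i) u * θ u) ^ 2) +
      (hX.eigenvectorBasis i).ofLp ⬝ᵥ
        gramMatrix volume (fun u => 1 - θ u ^ 2) (fun a => sechConv (φ a)) *ᵥ
          (hX.eigenvectorBasis i).ofLp := by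
  have hdecomp := congrArg (fun Z => (hX.eigenvectorBasis i).ofLp ⬝ᵥ Z *ᵥ
    (hX.eigenvectorBasis i).ofLp) (sechGram_eq_add hφ hθ)
  refine (eigenvalues_eq_dotProduct_mulVec hX i).trans (hdecomp.trans ?_)
  rw [add_mulVec, dotProduct_add,
    dotProduct_gramMatrix_mulVec (integrable_sq_mul_sechConv_mul_sechConv hφ hθ)]
  congr 2 with u
  rw [sechConv_basisCombination _ hφ, basisCombination]
  ring

end Cutoff

theorem spectralSum_sechGram_le (hφ : OrthogonalFunctions φ fun _ => 1) (hθ : BoundedIntegrable θ)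
    (hθ1 : ∀ u, θ u ^ 2 ≤ 1) (hθ₂ : Integrable fun η => η ^ 2 * powerSpectrum θ η) :
    spectralSum varEntropy (sechGram φ) ≤
      (∫ u, θ u ^ 2) / 12 + translationConst * (∫ η, η ^ 2 * powerSpectrum θ η) +
        ∑ a, varEntropy
          (gramMatrix volume (fun u => 1 - θ u ^ 2) (fun a => sechConv (φ a)) a a) := by
  set Y := gramMatrix volume (fun u => 1 - θ u ^ 2) fun a => sechConv (φ a)
  have hY : Y.PosSemidef := posSemidef_gramMatrix
    (integrable_one_sub_sq_mul_sechConv_mul_sechConv hφ.boundedIntegrable hθ)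
    (.of_forall fun u => sub_nonneg.2 (hθ1 u))
  have hYX : Y ≤ sechGram φ := by
    rw [sechGram_eq_add hφ.boundedIntegrable hθ]
    exact le_add_of_nonneg_left (nonneg_iff_posSemidef.2 (posSemidef_gramMatrix
      (integrable_sq_mul_sechConv_mul_sechConv hφ.boundedIntegrable hθ)
      (.of_forall fun u => sq_nonneg (θ u))))
  have hX : (sechGram φ).PosSemidef :=
    posSemidef_sechGram fun a => (hφ.boundedIntegrable a).integrable
  set x := hX.isHermitian.eigenvalues
  set e := hX.isHermitian.eigenvectorBasis
  have hF (i) : varEntropy (x i) =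
      varEntropy (x i) / x i * (∫ u, (sechConv (basisCombination e φ i) u * θ u) ^ 2) +
        varEntropy (x i) / x i * ((e i).ofLp ⬝ᵥ Y *ᵥ (e i).ofLp) := by
    rw [← mul_add, ← eigenvalues_sechGram_eq_add hφ.boundedIntegrable hθ hX.isHermitian i,
      div_mul_cancel_of_imp fun h => by rw [h, varEntropy_zero]]
  rw [spectralSum_eq_sum_eigenvalues varEntropy hX.isHermitian,
    Finset.sum_congr rfl fun i _ => hF i, Finset.sum_add_distrib]
  exact add_le_add
    (sum_varEntropy_div_mul_integral_le (hφ.basisCombination e)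
      (orthogonalFunctions_sechConv_eigenvectorBasis hφ.boundedIntegrable hX.isHermitian)
      hX.eigenvalues_nonneg hθ hθ₂)
    ((sum_div_mul_dotProduct_le_spectralSum concaveOn_varEntropy monotoneOn_varEntropy
      varEntropy_zero hY hX hYX).trans (spectralSum_le_sum_diag concaveOn_varEntropy hY))

end BerezinLieb

section SigmoidCutoff

open Real Filter
open scoped FourierTransform Topology

theorem hasDerivAt_log_one_add_exp (x : ℝ) :
    HasDerivAt (fun x => log (1 + exp x)) (sigmoid x) x := by
  convert! ((hasDerivAt_exp x).const_add 1).log (by positivity) using 1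
  rw [sigmoid_def, exp_neg]
  field_simp
  ring

theorem tendsto_log_one_add_exp_atBot : Tendsto (fun x => log (1 + exp x)) atBot (𝓝 0) := by
  have h := (tendsto_exp_atBot.const_add 1).log (by norm_num : (1 : ℝ) + 0 ≠ 0)
  rwa [add_zero, log_one] at h

theorem log_one_add_exp_eq_add (x : ℝ) : log (1 + exp x) = x + log (1 + exp (-x)) := by
  rw [← log_exp x, ← log_mul (exp_pos _).ne' (by positivity), log_exp, mul_add, ← exp_add,
    add_neg_cancel, exp_zero, mul_one, add_comm]

/-- A smooth approximation of the indicator function of `[-L, L]`. -/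
noncomputable def sigmoidCutoff (L u : ℝ) : ℝ :=
  sigmoid (2 * (u + L)) - sigmoid (2 * (u - L))

theorem continuous_sigmoidCutoff (L : ℝ) : Continuous (sigmoidCutoff L) :=
  (continuous_sigmoid.comp (by fun_prop)).sub (continuous_sigmoid.comp (by fun_prop))

theorem sigmoidCutoff_le_one (L u : ℝ) : sigmoidCutoff L u ≤ 1 := by
  unfold sigmoidCutoff
  linarith [sigmoid_le_one (2 * (u + L)), sigmoid_nonneg (2 * (u - L))]

theorem one_sub_sigmoidCutoff (L u : ℝ) :
    1 - sigmoidCutoff L u = sigmoid (2 * (-u - L)) + sigmoid (2 * (u - L)) := by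
  rw [sigmoidCutoff, show 2 * (-u - L) = -(2 * (u + L)) by ring, sigmoid_neg]
  ring

theorem one_sub_sigmoidCutoff_sq_le (L u : ℝ) :
    1 - sigmoidCutoff L u ^ 2 ≤ 2 * (sigmoid (2 * (-u - L)) + sigmoid (2 * (u - L))) := by
  rw [← one_sub_sigmoidCutoff]
  nlinarith [sq_nonneg (1 - sigmoidCutoff L u)]

theorem sigmoid_le_exp (u : ℝ) : sigmoid u ≤ exp u := by
  have h := sigmoid_mul_rexp_neg (-u)
  rw [neg_neg] at h
  exact h ▸ mul_le_of_le_one_left (exp_pos _).le (sigmoid_le_one _)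

theorem sigmoidCutoff_le_exp (L u : ℝ) :
    sigmoidCutoff L u ≤ exp (2 * L) * exp (-(2 * |u|)) := by
  rw [← exp_add]
  rcases abs_cases u with ⟨h, -⟩ | ⟨h, -⟩ <;> rw [h]
  · have hle := sigmoid_le_exp (-(2 * (u - L)))
    rw [sigmoid_neg, show -(2 * (u - L)) = 2 * L + -(2 * u) by ring] at hle
    exact (sub_le_sub_right (sigmoid_le_one _) _).trans hle
  · rw [show 2 * L + -(2 * -u) = 2 * (u + L) by ring]
    exact (sub_le_self _ (sigmoid_nonneg _)).trans (sigmoid_le_exp _)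

variable {L : ℝ}

theorem sigmoidCutoff_nonneg (hL : 0 ≤ L) (u : ℝ) : 0 ≤ sigmoidCutoff L u :=
  sub_nonneg.2 (sigmoid_le (by linarith))

theorem boundedIntegrable_sigmoidCutoff (hL : 0 ≤ L) : BoundedIntegrable (sigmoidCutoff L) where
  integrable := by
    refine ((integrable_exp_neg_mul_abs two_pos).const_mul (exp (2 * L))).mono'
      (continuous_sigmoidCutoff L).aestronglyMeasurable (.of_forall fun u => ?_)
    rw [norm_of_nonneg (sigmoidCutoff_nonneg hL u)]
    exact sigmoidCutoff_le_exp L u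
  bounded := ⟨1, fun u => by
    rw [norm_of_nonneg (sigmoidCutoff_nonneg hL u)]
    exact sigmoidCutoff_le_one L u⟩

theorem integral_sigmoidCutoff (hL : 0 ≤ L) : ∫ u, sigmoidCutoff L u = 2 * L := by
  set S : ℝ → ℝ := fun x => log (1 + exp x)
  set P : ℝ → ℝ := fun u => 1 / 2 * (S (2 * (u + L)) - S (2 * (u - L)))
  have hderiv (u) : HasDerivAt P (sigmoidCutoff L u) u := by
    have hS {f : ℝ → ℝ} (hf : HasDerivAt f (2 * 1) u) :=
      (hasDerivAt_log_one_add_exp (f u)).comp u hf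
    convert! ((hS (((hasDerivAt_id u).add_const L).const_mul 2)).sub
      (hS (((hasDerivAt_id u).sub_const L).const_mul 2))).const_mul (1 / 2) using 1
    simp only [sigmoidCutoff, id]
    ring
  have hbot : Tendsto P atBot (𝓝 0) := by
    have hS {f : ℝ → ℝ} (hf : Tendsto f atBot atBot) := tendsto_log_one_add_exp_atBot.comp hf
    have h := (hS ((tendsto_atBot_add_const_right _ L tendsto_id).const_mul_atBot two_pos)).sub
      (hS ((tendsto_atBot_add_const_right _ (-L) tendsto_id).const_mul_atBot two_pos))
    simpa [P, S, Function.comp_def, sub_eq_add_neg] using h.const_mul (1 / 2 : ℝ)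
  -- `S x = x + S (-x)` makes `P u - 2 * L` the value of `P` at `-u`, up to sign.
  have hreflect (u) : P u = 2 * L - P (-u) := by
    simp only [P, S]
    rw [log_one_add_exp_eq_add (2 * (u + L)), log_one_add_exp_eq_add (2 * (u - L)),
      show -(2 * (u + L)) = 2 * (-u - L) by ring, show -(2 * (u - L)) = 2 * (-u + L) by ring]
    ring
  have htop : Tendsto P atTop (𝓝 (2 * L)) := by
    have h := (hbot.comp tendsto_neg_atTop_atBot).const_sub (2 * L)
    rw [sub_zero] at h
    exact h.congr fun u => (hreflect u).symm
  rw [integral_of_hasDerivAt_of_tendsto hderiv (boundedIntegrable_sigmoidCutoff hL).integrable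
    hbot htop, sub_zero]

theorem integral_sigmoidCutoff_sq_le (hL : 0 ≤ L) : ∫ u, sigmoidCutoff L u ^ 2 ≤ 2 * L := by
  have hθ := boundedIntegrable_sigmoidCutoff hL
  rw [← integral_sigmoidCutoff hL]
  refine integral_mono (by simpa only [sq] using (hθ.mul hθ).integrable) hθ.integrable fun u => ?_
  exact pow_le_of_le_one (sigmoidCutoff_nonneg hL u) (sigmoidCutoff_le_one L u) two_ne_zero

theorem hasDerivAt_sigmoidCutoff (L u : ℝ) :
    HasDerivAt (sigmoidCutoff L) ((sechSq (u + L) - sechSq (u - L)) / 2) u := by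
  have hsigmoid {f : ℝ → ℝ} (hf : HasDerivAt f (2 * 1) u) :=
    (hasDerivAt_sigmoid (f u)).comp u hf
  convert! (hsigmoid (((hasDerivAt_id u).add_const L).const_mul 2)).sub
    (hsigmoid (((hasDerivAt_id u).sub_const L).const_mul 2)) using 1
  have hsechSq (x : ℝ) : sechSq x = 4 * (π * sechKernel (2 * x)) ^ 2 := by
    have := (cosh_pos x).ne'
    rw [sechSq, sechKernel, mul_div_cancel_left₀ x two_ne_zero]
    field_simp
    norm_num
  simp only [id, sigmoid_mul_one_sub_sigmoid, hsechSq]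
  ring

theorem powerSpectrum_of_hasDerivAt {f f' : ℝ → ℝ} (hf : Integrable f) (hf' : Integrable f')
    (hderiv : ∀ u, HasDerivAt f (f' u) u) (η : ℝ) :
    powerSpectrum f' η = (2 * π) ^ 2 * (η ^ 2 * powerSpectrum f η) := by
  have hderivC (u) : HasDerivAt (fun u => (f u : ℂ)) (f' u : ℂ) u := (hderiv u).ofReal_comp
  have hderivC_eq : deriv (fun u => (f u : ℂ)) = fun u => (f' u : ℂ) :=
    funext fun u => (hderivC u).deriv
  have h := Real.fourier_deriv hf.ofReal (fun u => (hderivC u).differentiableAt)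
    (by rw [hderivC_eq]; exact hf'.ofReal)
  rw [hderivC_eq] at h
  rw [powerSpectrum, h, norm_smul, mul_pow, powerSpectrum]
  simp only [norm_mul, mul_pow, Complex.norm_real, Complex.norm_I, norm_eq_abs, sq_abs,
    Complex.norm_ofNat]
  ring

theorem integrable_sq_mul_powerSpectrum {f f' : ℝ → ℝ} (hf : Integrable f)
    (hf' : BoundedIntegrable f') (hderiv : ∀ u, HasDerivAt f (f' u) u) :
    Integrable fun η => η ^ 2 * powerSpectrum f η := by
  have h := (integrable_powerSpectrum hf').const_mul ((2 * π) ^ 2)⁻¹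
  simpa only [powerSpectrum_of_hasDerivAt hf hf'.integrable hderiv,
    inv_mul_cancel_left₀ (pow_ne_zero 2 two_pi_pos.ne')] using h

theorem integral_sq_mul_powerSpectrum {f f' : ℝ → ℝ} (hf : Integrable f)
    (hf' : BoundedIntegrable f') (hderiv : ∀ u, HasDerivAt f (f' u) u) :
    (2 * π) ^ 2 * ∫ η, η ^ 2 * powerSpectrum f η = ∫ u, f' u ^ 2 := by
  rw [← integral_powerSpectrum hf', ← integral_const_mul]
  simp only [powerSpectrum_of_hasDerivAt hf hf'.integrable hderiv]

theorem abs_deriv_sigmoidCutoff_le (L u : ℝ) :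
    |(sechSq (u + L) - sechSq (u - L)) / 2| ≤ (sechSq (u + L) + sechSq (u - L)) / 2 := by
  rw [abs_le]
  constructor <;> linarith [sechSq_pos (u + L), sechSq_pos (u - L)]

theorem abs_deriv_sigmoidCutoff_le_one (L u : ℝ) :
    |(sechSq (u + L) - sechSq (u - L)) / 2| ≤ 1 := by
  linarith [abs_deriv_sigmoidCutoff_le L u, sechSq_le_one (u + L), sechSq_le_one (u - L)]

theorem boundedIntegrable_deriv_sigmoidCutoff (L : ℝ) :
    BoundedIntegrable fun u => (sechSq (u + L) - sechSq (u - L)) / 2 :=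
  ⟨((integrable_sechSq.comp_add_right L).sub (integrable_sechSq.comp_sub_right L)).div_const 2,
    1, abs_deriv_sigmoidCutoff_le_one L⟩

theorem integrable_sq_mul_powerSpectrum_sigmoidCutoff (hL : 0 ≤ L) :
    Integrable fun η => η ^ 2 * powerSpectrum (sigmoidCutoff L) η :=
  integrable_sq_mul_powerSpectrum (boundedIntegrable_sigmoidCutoff hL).integrable
    (boundedIntegrable_deriv_sigmoidCutoff L) (hasDerivAt_sigmoidCutoff L)

theorem integral_sq_mul_powerSpectrum_sigmoidCutoff_le (hL : 0 ≤ L) :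
    ∫ η, η ^ 2 * powerSpectrum (sigmoidCutoff L) η ≤ ∫ u, sechSq u := by
  have hd := boundedIntegrable_deriv_sigmoidCutoff L
  have hnonneg : 0 ≤ ∫ η, η ^ 2 * powerSpectrum (sigmoidCutoff L) η :=
    integral_nonneg fun η => mul_nonneg (sq_nonneg η) (powerSpectrum_nonneg _ η)
  have hadd := integrable_sechSq.comp_add_right L
  have hsub := integrable_sechSq.comp_sub_right L
  calc ∫ η, η ^ 2 * powerSpectrum (sigmoidCutoff L) η
      ≤ (2 * π) ^ 2 * ∫ η, η ^ 2 * powerSpectrum (sigmoidCutoff L) η :=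
        le_mul_of_one_le_left hnonneg (by nlinarith [pi_gt_three])
    _ = ∫ u, ((sechSq (u + L) - sechSq (u - L)) / 2) ^ 2 :=
        integral_sq_mul_powerSpectrum (boundedIntegrable_sigmoidCutoff hL).integrable hd
          (hasDerivAt_sigmoidCutoff L)
    _ ≤ ∫ u, (sechSq (u + L) + sechSq (u - L)) / 2 := by
        refine integral_mono (by simpa only [sq] using (hd.mul hd).integrable)
          ((hadd.add hsub).div_const 2) fun u => ?_
        have habs := abs_deriv_sigmoidCutoff_le L u
        exact (sq_abs _).symm.trans_le
          ((pow_le_of_le_one (abs_nonneg _) (abs_deriv_sigmoidCutoff_le_one L u) two_ne_zero).trans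
            habs)
    _ = ∫ u, sechSq u := by
        rw [integral_div, integral_add hadd hsub, integral_add_right_eq_self,
          integral_sub_right_eq_self, add_self_div_two]

theorem sigmoid_two_mul_sub_mul_exp_neg (L u : ℝ) :
    2 * (sigmoid (2 * (u - L)) * exp (-u)) = 2 * π * exp (-L) * sechKernel (2 * (u - L)) := by
  rw [sigmoid_eq_exp_mul_sechKernel, mul_div_cancel_left₀ _ two_ne_zero,
    show exp (-L) = exp (u - L) * exp (-u) by rw [← exp_add]; ring_nf]
  ring

theorem integrable_sigmoid_mul_exp_neg (L : ℝ) :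
    Integrable fun u => 2 * (sigmoid (2 * (u - L)) * exp (-u)) := by
  simp only [sigmoid_two_mul_sub_mul_exp_neg]
  exact ((integrable_sechKernel.comp_mul_left' two_ne_zero).comp_sub_right L).const_mul _

theorem integral_sigmoid_mul_exp_neg (L : ℝ) :
    ∫ u, 2 * (sigmoid (2 * (u - L)) * exp (-u)) = π * exp (-L) := by
  simp only [sigmoid_two_mul_sub_mul_exp_neg, integral_const_mul]
  rw [integral_sub_right_eq_self (fun u => sechKernel (2 * u)),
    Measure.integral_comp_mul_left sechKernel, integral_sechKernel]
  norm_num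
  ring

end SigmoidCutoff

section Cells

open Real

variable {N p q : ℝ}

/-- The point at which the distribution function `N * sigmoid` takes the value `p`. -/
noncomputable def cellPoint (N p : ℝ) : ℝ := log (p / (N - p))

/-- The square root of the density of `N * sigmoid`. -/
noncomputable def sqrtDensity (N u : ℝ) : ℝ := √N * (π * sechKernel u)

/-- The square root of the density of `N * sigmoid`, restricted to the cell on which this
distribution function runs from `p` to `q`. -/
noncomputable def cellFunction (N p q : ℝ) : ℝ → ℝ :=
  (Ioc (cellPoint N p) (cellPoint N q)).indicator (sqrtDensity N)

theorem sigmoid_cellPoint (hp : 0 < p) (hpN : p < N) : sigmoid (cellPoint N p) = p / N := by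
  have : 0 < N - p := sub_pos.2 hpN
  have : 0 < N := hp.trans hpN
  rw [sigmoid_def, cellPoint, exp_neg, exp_log (by positivity)]
  field_simp
  ring

theorem cellPoint_mono (hp : 0 < p) (hpq : p ≤ q) (hqN : q < N) :
    cellPoint N p ≤ cellPoint N q := by
  have : 0 < N - q := sub_pos.2 hqN
  have : 0 < N - p := by linarith
  have : 0 < q := by linarith
  unfold cellPoint
  gcongr

theorem cellPoint_sub (N p : ℝ) : cellPoint N (N - p) = -cellPoint N p := by
  rw [cellPoint, cellPoint, sub_sub_cancel, ← log_inv, inv_div]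

theorem sqrtDensity_nonneg (N u : ℝ) : 0 ≤ sqrtDensity N u := by
  have := sechKernel_pos u
  unfold sqrtDensity
  positivity

theorem continuous_sqrtDensity (N : ℝ) : Continuous (sqrtDensity N) :=
  continuous_const.mul (continuous_const.mul continuous_sechKernel)

theorem sqrtDensity_mul_self (hN : 0 ≤ N) (u : ℝ) :
    sqrtDensity N u * sqrtDensity N u = N * (sigmoid u * (1 - sigmoid u)) := by
  rw [sigmoid_mul_one_sub_sigmoid, ← sq, sqrtDensity, mul_pow, sq_sqrt hN]

theorem sqrtDensity_mul_exp_neg (N u : ℝ) :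
    sqrtDensity N u * exp (-(u / 2)) = √N * (1 - sigmoid u) := by
  rw [one_sub_sigmoid_eq_exp_mul_sechKernel, sqrtDensity]
  ring

theorem cellFunction_nonneg (N p q u : ℝ) : 0 ≤ cellFunction N p q u :=
  indicator_nonneg (fun u _ => sqrtDensity_nonneg N u) u

theorem boundedIntegrable_cellFunction (N p q : ℝ) : BoundedIntegrable (cellFunction N p q) where
  integrable := (integrable_indicator_iff measurableSet_Ioc).2
    ((continuous_sqrtDensity N).integrableOn_Icc.mono_set Ioc_subset_Icc_self)
  bounded := ⟨√N * (π * 1), fun u => by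
    refine (norm_indicator_le_norm_self _ _).trans ?_
    rw [norm_of_nonneg (sqrtDensity_nonneg N u), sqrtDensity]
    gcongr
    exact sechKernel_le_one u⟩

theorem integral_cellFunction_mul (h : cellPoint N p ≤ cellPoint N q) (f : ℝ → ℝ) :
    ∫ u, cellFunction N p q u * f u =
      ∫ u in (cellPoint N p)..(cellPoint N q), sqrtDensity N u * f u := by
  rw [intervalIntegral.integral_of_le h, ← integral_indicator measurableSet_Ioc]
  simp only [cellFunction, indicator_mul_left]

theorem integral_cellFunction_mul_self (hp : 0 < p) (hpq : p ≤ q) (hqN : q < N) :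
    ∫ u, cellFunction N p q u * cellFunction N p q u = q - p := by
  have hle := cellPoint_mono hp hpq hqN
  have hN : 0 < N := by linarith
  calc ∫ u, cellFunction N p q u * cellFunction N p q u
      = ∫ u, cellFunction N p q u * sqrtDensity N u := by
        refine integral_congr_ae (.of_forall fun u => ?_)
        by_cases hu : u ∈ Ioc (cellPoint N p) (cellPoint N q) <;> simp [cellFunction, hu]
    _ = ∫ u in (cellPoint N p)..(cellPoint N q), N * (sigmoid u * (1 - sigmoid u)) := by
        simp only [integral_cellFunction_mul hle, sqrtDensity_mul_self hN.le]
    _ = N * sigmoid (cellPoint N q) - N * sigmoid (cellPoint N p) :=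
        intervalIntegral.integral_eq_sub_of_hasDerivAt
          (fun u _ => (hasDerivAt_sigmoid u).const_mul N)
          ((continuous_const.mul (continuous_sigmoid.mul
            (continuous_const.sub continuous_sigmoid))).intervalIntegrable _ _)
    _ = q - p := by
        rw [sigmoid_cellPoint hp (by linarith), sigmoid_cellPoint (by linarith) hqN]
        field_simp

theorem cellFunction_mul_cellFunction_of_le {p' q' : ℝ} (h : cellPoint N q ≤ cellPoint N p')
    (u : ℝ) : cellFunction N p q u * cellFunction N p' q' u = 0 := by
  by_cases hu : u ∈ Ioc (cellPoint N p) (cellPoint N q)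
  · have hu' : u ∉ Ioc (cellPoint N p') (cellPoint N q') := fun hu' =>
      (hu'.1.trans_le hu.2).not_ge h
    simp only [cellFunction, indicator_of_notMem hu', mul_zero]
  · simp only [cellFunction, indicator_of_notMem hu, zero_mul]

theorem sechConv_cellFunction (h : cellPoint N p ≤ cellPoint N q) (v : ℝ) :
    sechConv (cellFunction N p q) v =
      ∫ u in (cellPoint N p)..(cellPoint N q), sqrtDensity N u * sechKernel (v - u) := by
  rw [← integral_cellFunction_mul h]
  simp only [sechConv, smul_eq_mul, mul_comm]

theorem sechConv_cellFunction_nonneg (N p q v : ℝ) : 0 ≤ sechConv (cellFunction N p q) v :=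
  integral_nonneg fun u => mul_nonneg (sechKernel_pos _).le (cellFunction_nonneg N p q u)

theorem sechConv_cellFunction_sub (hp : 0 < p) (hpq : p ≤ q) (hqN : q < N) (v : ℝ) :
    sechConv (cellFunction N (N - q) (N - p)) v = sechConv (cellFunction N p q) (-v) := by
  have hle := cellPoint_mono hp hpq hqN
  rw [sechConv_cellFunction hle,
    sechConv_cellFunction (by simpa only [cellPoint_sub, neg_le_neg_iff]), cellPoint_sub,
    cellPoint_sub, ← intervalIntegral.integral_comp_neg]
  refine intervalIntegral.integral_congr fun u _ => ?_
  simp only [sqrtDensity, sechKernel_neg]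
  rw [← sechKernel_neg (v - -u), neg_sub, sub_eq_add_neg, add_comm, sub_eq_add_neg]

theorem sechKernel_le_inv_pi_mul_exp (u : ℝ) : sechKernel u ≤ 1 / π * exp (u / 2) := by
  have h : π * (exp (-(u / 2)) * sechKernel u) ≤ 1 := by
    rw [← one_sub_sigmoid_eq_exp_mul_sechKernel]
    exact sub_le_self _ (sigmoid_nonneg u)
  rw [exp_neg] at h
  have := exp_pos (u / 2)
  field_simp at h ⊢
  linarith

theorem hasDerivAt_log_sigmoid (u : ℝ) :
    HasDerivAt (fun u => log (sigmoid u)) (1 - sigmoid u) u := by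
  convert! (hasDerivAt_sigmoid u).log (sigmoid_pos u).ne' using 1
  rw [mul_div_cancel_left₀ _ (sigmoid_pos u).ne']

theorem integral_one_sub_sigmoid (a b : ℝ) :
    ∫ u in a..b, (1 - sigmoid u) = log (sigmoid b / sigmoid a) := by
  rw [intervalIntegral.integral_eq_sub_of_hasDerivAt (fun u _ => hasDerivAt_log_sigmoid u)
    ((continuous_const.sub continuous_sigmoid).intervalIntegrable _ _),
    log_div (sigmoid_pos b).ne' (sigmoid_pos a).ne']

theorem sechConv_cellFunction_le (hp : 0 < p) (hpq : p ≤ q) (hqN : q < N) (v : ℝ) :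
    sechConv (cellFunction N p q) v ≤ 1 / π * exp (v / 2) * (√N * ((q - p) / p)) := by
  have hle := cellPoint_mono hp hpq hqN
  have hbound (u) : sqrtDensity N u * sechKernel (v - u) ≤
      1 / π * exp (v / 2) * (√N * (1 - sigmoid u)) := by
    rw [← sqrtDensity_mul_exp_neg]
    have h := mul_le_mul_of_nonneg_left (sechKernel_le_inv_pi_mul_exp (v - u))
      (sqrtDensity_nonneg N u)
    rw [show (v - u) / 2 = v / 2 + -(u / 2) by ring, exp_add] at h
    linarith
  have hlog : log (q / N / (p / N)) ≤ (q - p) / p := by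
    have hN : N ≠ 0 := by linarith
    rw [div_div_div_cancel_right₀ hN, sub_div, div_self hp.ne']
    exact log_le_sub_one_of_pos (div_pos (by linarith) hp)
  calc sechConv (cellFunction N p q) v
      ≤ ∫ u in (cellPoint N p)..(cellPoint N q), 1 / π * exp (v / 2) * (√N * (1 - sigmoid u)) := by
        rw [sechConv_cellFunction hle]
        exact intervalIntegral.integral_mono_on hle
          (((continuous_sqrtDensity N).mul (continuous_sechKernel.comp
            (continuous_sub_left v))).intervalIntegrable _ _)
          ((continuous_const.mul (continuous_const.mul
            (continuous_const.sub continuous_sigmoid))).intervalIntegrable _ _) fun u _ => hbound u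
    _ = 1 / π * exp (v / 2) * (√N * log (q / N / (p / N))) := by
        rw [intervalIntegral.integral_const_mul, intervalIntegral.integral_const_mul,
          integral_one_sub_sigmoid, sigmoid_cellPoint hp (by linarith),
          sigmoid_cellPoint (by linarith) hqN]
    _ ≤ 1 / π * exp (v / 2) * (√N * ((q - p) / p)) := by gcongr

/-- The change of variables `N / (exp w - 1)`, which turns the position `-w < 0` into the distance
of a cell from a point beyond the left end of the block. -/
noncomputable def edgeDistance (N w : ℝ) : ℝ := N / (exp w - 1)

theorem edgeDistance_pos {w : ℝ} (hN : 0 < N) (hw : 0 < w) : 0 < edgeDistance N w :=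
  div_pos hN (sub_pos.2 (one_lt_exp_iff.2 hw))

theorem exp_sub_one_eq_sinh_mul_exp (w : ℝ) : exp w - 1 = 2 * sinh (w / 2) * exp (w / 2) := by
  have h : exp w = exp (w / 2) * exp (w / 2) := by rw [← exp_add, add_halves]
  rw [h, sinh_eq, exp_neg]
  field_simp

theorem sigmoid_add_edgeDistance_mul {w : ℝ} (hw : 0 < w) (u : ℝ) :
    (N * sigmoid u + edgeDistance N w) * (2 * sinh (w / 2) * sechKernel (-w - u)) =
      N * sechKernel u := by
  have : 0 < sinh (w / 2) := sinh_pos_iff.2 (half_pos hw)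
  have : 0 < exp w - 1 := sub_pos.2 (one_lt_exp_iff.2 hw)
  have : 0 < cosh ((w + u) / 2) := cosh_pos _
  rw [← sechKernel_neg (-w - u), show -(-w - u) = w + u by ring, edgeDistance,
    exp_sub_one_eq_sinh_mul_exp, sigmoid_eq_exp_mul_sechKernel, sechKernel, sechKernel]
  have hcosh_add : sinh (w / 2) * exp (w / 2) * exp (u / 2) + cosh (u / 2) =
      exp (w / 2) * cosh ((w + u) / 2) := by
    rw [add_div, sinh_eq, cosh_eq, cosh_eq, neg_add, exp_add, exp_add, exp_neg, exp_neg]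
    field_simp
    ring
  have : 0 < cosh (u / 2) := cosh_pos _
  field_simp
  linear_combination N * hcosh_add

theorem sechConv_cellFunction_neg (hp : 0 < p) (hpq : p ≤ q) (hqN : q < N) {w : ℝ} (hw : 0 < w) :
    sechConv (cellFunction N p q) (-w) = √N / (2 * sinh (w / 2)) *
      (1 / π * (log (q + edgeDistance N w) - log (p + edgeDistance N w))) := by
  have hle := cellPoint_mono hp hpq hqN
  have hN : 0 < N := by linarith
  have hR := edgeDistance_pos hN hw
  set R := edgeDistance N w
  have : 0 < sinh (w / 2) := sinh_pos_iff.2 (half_pos hw)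
  have hderiv (u) : HasDerivAt
      (fun u => √N / (2 * sinh (w / 2)) * (1 / π * log (N * sigmoid u + R)))
      (sqrtDensity N u * sechKernel (-w - u)) u := by
    have hpos : 0 < N * sigmoid u + R := add_pos (mul_pos hN (sigmoid_pos u)) hR
    convert! (((((hasDerivAt_sigmoid u).const_mul N).add_const R).log hpos.ne').const_mul
      (1 / π)).const_mul (√N / (2 * sinh (w / 2))) using 1
    have hkey := sigmoid_add_edgeDistance_mul (N := N) hw u
    rw [sigmoid_mul_one_sub_sigmoid, sqrtDensity]
    field_simp
    linear_combination sechKernel u * hkey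
  rw [sechConv_cellFunction hle, intervalIntegral.integral_eq_sub_of_hasDerivAt
    (fun u _ => hderiv u) (((continuous_sqrtDensity N).mul (continuous_sechKernel.comp
      (continuous_sub_left (-w)))).intervalIntegrable _ _), sigmoid_cellPoint hp (by linarith),
    sigmoid_cellPoint (by linarith) hqN, mul_div_cancel₀ _ hN.ne', mul_div_cancel₀ _ hN.ne']
  ring

end Cells

section EdgeDecay

open Real

variable {m : ℕ}

theorem natCast_add_one_le (a : Fin m) : (a : ℝ) + 1 ≤ m := by
  exact_mod_cast a.isLt

theorem natCast_rev (a : Fin m) : ((Fin.rev a : ℕ) : ℝ) = m - 1 - a := by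
  rw [Fin.val_rev, Nat.cast_sub (by lia)]
  push_cast
  ring

theorem sum_sub_eq_sum_add_one {M : Type*} [AddCommMonoid M] (m : ℕ) (f : ℝ → M) :
    ∑ a : Fin m, f (m - a) = ∑ a : Fin m, f (a + 1) :=
  Fintype.sum_equiv Fin.revPerm _ _ fun a => by
    rw [Fin.revPerm_apply, natCast_rev, sub_right_comm, sub_add_cancel]

/-- The sum of the distances from the site `a` of a block of length `m` to its two outer neighbours,
each raised to the power `-s`. -/
noncomputable def edgeDecay (m : ℕ) (s : ℝ) (a : Fin m) : ℝ :=
  ((a : ℝ) + 1) ^ (-s) + ((m : ℝ) - a) ^ (-s)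

/-- The value at `9/8` of the Riemann zeta function. -/
noncomputable def decayConst : ℝ := ∑' n : ℕ, ((n : ℝ) + 1) ^ (-(9 / 8) : ℝ)

theorem edgeDecay_nonneg (s : ℝ) (a : Fin m) : 0 ≤ edgeDecay m s a := by
  have := natCast_add_one_le a
  have : (0 : ℝ) ≤ m - a := by linarith
  unfold edgeDecay
  positivity

theorem edgeDecay_antitone (a : Fin m) : Antitone fun s => edgeDecay m s a := fun s t hst => by
  have := natCast_add_one_le a
  exact add_le_add
    (rpow_le_rpow_of_exponent_le (le_add_of_nonneg_left a.val.cast_nonneg) (neg_le_neg hst))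
    (rpow_le_rpow_of_exponent_le (by linarith) (neg_le_neg hst))

theorem edgeDecay_rpow_le (s : ℝ) {r : ℝ} (hr : 0 ≤ r) (hr1 : r ≤ 1) (a : Fin m) :
    edgeDecay m s a ^ r ≤ edgeDecay m (s * r) a := by
  have := natCast_add_one_le a
  have hma : (0 : ℝ) ≤ m - a := by linarith
  have h := rpow_add_le_add_rpow (a := ((a : ℝ) + 1) ^ (-s)) (b := ((m : ℝ) - a) ^ (-s))
    (by positivity) (by positivity) hr hr1
  rwa [← rpow_mul (by positivity), ← rpow_mul hma, neg_mul] at h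

theorem edgeDecay_one_pow_three_le (a : Fin m) : edgeDecay m 1 a ^ 3 ≤ 4 * edgeDecay m 2 a := by
  have := natCast_add_one_le a
  have : (0 : ℝ) ≤ a := a.val.cast_nonneg
  have hneg (x : ℝ) : x ^ (-2 : ℝ) = x⁻¹ ^ 2 := by
    rw [rpow_neg_ofNat, _root_.zpow_neg, zpow_ofNat, inv_pow]
  simp only [edgeDecay, rpow_neg_one, hneg]
  have hx : ((a : ℝ) + 1)⁻¹ ≤ 1 := inv_le_one_of_one_le₀ (by linarith)
  have hy : ((m : ℝ) - a)⁻¹ ≤ 1 := inv_le_one_of_one_le₀ (by linarith)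
  have hx0 : 0 ≤ ((a : ℝ) + 1)⁻¹ := by positivity
  have hy0 : 0 ≤ ((m : ℝ) - a)⁻¹ := inv_nonneg.2 (by linarith)
  generalize ((a : ℝ) + 1)⁻¹ = x at *
  generalize ((m : ℝ) - a)⁻¹ = y at *
  calc (x + y) ^ 3 = (x + y) ^ 2 * (x + y) := pow_succ _ _
    _ ≤ (2 * (x ^ 2 + y ^ 2)) * 2 := by
      gcongr
      · exact add_sq_le
      · linarith
    _ = 4 * (x ^ 2 + y ^ 2) := by ring

theorem sum_edgeDecay_le (m : ℕ) : ∑ a, edgeDecay m (9 / 8) a ≤ 2 * decayConst := by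
  have hsum : Summable fun n : ℕ => ((n : ℝ) + 1) ^ (-(9 / 8) : ℝ) := by
    exact_mod_cast (summable_nat_add_iff 1).2 (summable_nat_rpow (p := -(9 / 8)).2 (by norm_num))
  have hle : ∑ a : Fin m, ((a : ℝ) + 1) ^ (-(9 / 8) : ℝ) ≤ decayConst := by
    rw [Fin.sum_univ_eq_sum_range fun n : ℕ => ((n : ℝ) + 1) ^ (-(9 / 8) : ℝ)]
    exact hsum.sum_le_tsum _ fun n _ => by positivity
  simp only [edgeDecay, Finset.sum_add_distrib]
  rw [sum_sub_eq_sum_add_one m fun x => x ^ (-(9 / 8) : ℝ)]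
  linarith

theorem sum_varEntropy_le_of_le_edgeDecay {K : ℝ} (hK : 0 ≤ K) {d : Fin m → ℝ} (hd : ∀ a, 0 ≤ d a)
    (hle : ∀ a, d a ≤ K * edgeDecay m (3 / 2) a) :
    ∑ a, varEntropy (d a) ≤ 8 * K ^ (3 / 4 : ℝ) * decayConst := by
  calc ∑ a, varEntropy (d a) ≤ ∑ a, 4 * K ^ (3 / 4 : ℝ) * edgeDecay m (9 / 8) a := by
        refine Finset.sum_le_sum fun a _ => (varEntropy_le_rpow (hd a)).trans ?_
        rw [mul_assoc]
        gcongr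
        refine (rpow_le_rpow (hd a) (hle a) (by norm_num)).trans ?_
        rw [mul_rpow hK (edgeDecay_nonneg _ a)]
        gcongr
        have h := edgeDecay_rpow_le (3 / 2) (r := 3 / 4) (by norm_num) (by norm_num) a
        rwa [show (3 / 2 * (3 / 4) : ℝ) = 9 / 8 by norm_num] at h
    _ ≤ 4 * K ^ (3 / 4 : ℝ) * (2 * decayConst) := by
        rw [← Finset.mul_sum]
        gcongr
        exact sum_edgeDecay_le m
    _ = 8 * K ^ (3 / 4 : ℝ) * decayConst := by ring

theorem log_sub_one_le_sum_inv (m : ℕ) :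
    log (m + 2) - 1 ≤ ∑ a : Fin m, ((a : ℝ) + 2)⁻¹ := by
  rw [Fin.sum_univ_eq_sum_range fun n : ℕ => ((n : ℝ) + 2)⁻¹]
  induction m with
  | zero => simpa using log_two_lt_d9.le.trans (by norm_num)
  | succ m ih =>
    have hlog := log_le_sub_one_of_pos (show (0 : ℝ) < (m + 3) / (m + 2) by positivity)
    rw [log_div (by positivity) (by positivity)] at hlog
    have hratio : ((m : ℝ) + 3) / (m + 2) - 1 = ((m : ℝ) + 2)⁻¹ := by field_simp; ring
    rw [Finset.sum_range_succ, Nat.cast_add_one, add_assoc, show (1 + 2 : ℝ) = 3 by norm_num]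
    linarith

end EdgeDecay

section ModelLowerBound

open Real
open scoped FourierTransform

variable {N p q : ℝ}

theorem sqrtDensity_mul_sqrt_le_one (hp : 0 < p) (hqN : q < N) {u : ℝ}
    (hu : u ∈ Icc (cellPoint N p) (cellPoint N q)) (hpq : p ≤ q) :
    sqrtDensity N u * √(1 / q + 1 / (N - p)) ≤ 1 := by
  have hN : 0 < N := by linarith
  have hq : 0 < q := by linarith
  have hNp : 0 < N - p := by linarith
  have hle : N * sigmoid u ≤ q := by
    have := sigmoid_monotone hu.2
    rwa [sigmoid_cellPoint hq hqN, le_div_iff₀' hN] at this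
  have hle' : N * (1 - sigmoid u) ≤ N - p := by
    have := sigmoid_monotone hu.1
    rw [sigmoid_cellPoint hp (by linarith), div_le_iff₀' hN] at this
    linarith
  have hσ := sigmoid_pos u
  have hσ1 := sigmoid_lt_one u
  have hnn := sqrtDensity_nonneg N u
  rw [← sq_le_one_iff₀ (by positivity), mul_pow, sq_sqrt (by positivity), sq,
    sqrtDensity_mul_self hN.le]
  calc N * (sigmoid u * (1 - sigmoid u)) * (1 / q + 1 / (N - p))
      = N * sigmoid u / q * (1 - sigmoid u) + N * (1 - sigmoid u) / (N - p) * sigmoid u := by ring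
    _ ≤ 1 * (1 - sigmoid u) + 1 * sigmoid u := by
        have := sub_nonneg.2 hσ1.le
        gcongr
        · exact (div_le_one hq).2 hle
        · exact (div_le_one hNp).2 hle'
    _ = 1 := by ring

theorem mul_sqrt_le_integral_cellFunction (hp : 0 < p) (hpq : p ≤ q) (hqN : q < N) :
    (q - p) * √(1 / q + 1 / (N - p)) ≤ ∫ u, cellFunction N p q u := by
  have hcell := boundedIntegrable_cellFunction N p q
  rw [← integral_cellFunction_mul_self hp hpq hqN, ← integral_mul_const]
  refine integral_mono ((hcell.mul hcell).integrable.mul_const _) hcell.integrable fun u => ?_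
  by_cases hu : u ∈ Ioc (cellPoint N p) (cellPoint N q)
  · simp only [cellFunction, indicator_of_mem hu, mul_assoc]
    exact mul_le_of_le_one_right (sqrtDensity_nonneg N u)
      (sqrtDensity_mul_sqrt_le_one hp hqN (Ioc_subset_Icc_self hu) hpq)
  · simp only [cellFunction, indicator_of_notMem hu, zero_mul, le_refl]

theorem integral_mul_one_sub_le_norm_fourier {f : ℝ → ℝ} {A B : ℝ} (hf : Integrable f)
    (hf0 : ∀ u, 0 ≤ f u) (hsupp : ∀ u ∉ Icc A B, f u = 0) (k : ℝ) :
    (∫ u, f u) * (1 - (2 * π * k * (B - A)) ^ 2 / 2) ≤ ‖𝓕 (fun u => (f u : ℂ)) k‖ := by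
  have hphase (u) : 𝐞 (-((u - A) * k)) • (f u : ℂ) =
      (𝐞 (A * k) : ℂ) • (𝐞 (-(u * k)) • (f u : ℂ)) := by
    rw [← Circle.smul_def, smul_smul, ← AddChar.map_add_eq_mul]
    ring_nf
  have hint : Integrable fun u => 𝐞 (-((u - A) * k)) • (f u : ℂ) := by
    simp only [hphase]
    have h := (Real.fourierIntegral_convergent_iff k).2 (hf.ofReal (𝕜 := ℂ))
    simp only [inner_apply] at h
    exact h.smul (𝐞 (A * k) : ℂ)
  have hnorm : ‖𝓕 (fun u => (f u : ℂ)) k‖ = ‖∫ u, 𝐞 (-((u - A) * k)) • (f u : ℂ)‖ := by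
    simp only [hphase, integral_smul, norm_smul, Circle.norm_coe, one_mul, Real.fourier_real_eq]
  have hre (u) : (𝐞 (-((u - A) * k)) • (f u : ℂ)).re = f u * cos (2 * π * k * (u - A)) := by
    rw [Circle.smul_def, Real.fourierChar_apply, smul_eq_mul, mul_comm, Complex.re_ofReal_mul,
      Complex.exp_ofReal_mul_I_re, ← cos_neg]
    ring_nf
  rw [hnorm]
  calc (∫ u, f u) * (1 - (2 * π * k * (B - A)) ^ 2 / 2)
      = ∫ u, f u * (1 - (2 * π * k * (B - A)) ^ 2 / 2) := (integral_mul_const _ _).symm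
    _ ≤ ∫ u, (𝐞 (-((u - A) * k)) • (f u : ℂ)).re := by
        refine integral_mono (hf.mul_const _) hint.re fun u => ?_
        simp only [hre]
        by_cases hu : u ∈ Icc A B
        · have hle : u - A ≤ B - A := sub_le_sub_right hu.2 A
          have hnn : 0 ≤ u - A := sub_nonneg.2 hu.1
          refine mul_le_mul_of_nonneg_left (le_trans ?_ (one_sub_sq_div_two_le_cos)) (hf0 u)
          rw [mul_pow, mul_pow _ (u - A)]
          gcongr
        · simp only [hsupp u hu, zero_mul, le_refl]
    _ = (∫ u, 𝐞 (-((u - A) * k)) • (f u : ℂ)).re := integral_re hint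
    _ ≤ ‖∫ u, 𝐞 (-((u - A) * k)) • (f u : ℂ)‖ := Complex.re_le_norm _

theorem cellPoint_sub_cellPoint_le (hp : 0 < p) (hpq : p ≤ q) (hqN : q < N) :
    cellPoint N q - cellPoint N p ≤ (q - p) / p + (q - p) / (N - q) := by
  have hq : 0 < q := by linarith
  have hNq : 0 < N - q := by linarith
  have hNp : 0 < N - p := by linarith
  calc cellPoint N q - cellPoint N p = log (q / p) + log ((N - p) / (N - q)) := by
        rw [cellPoint, cellPoint, ← log_div (by positivity) (by positivity),
          ← log_mul (by positivity) (by positivity)]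
        congr 1
        field_simp
    _ ≤ (q / p - 1) + ((N - p) / (N - q) - 1) :=
        add_le_add (log_le_sub_one_of_pos (by positivity)) (log_le_sub_one_of_pos (by positivity))
    _ = (q - p) / p + (q - p) / (N - q) := by
        field_simp
        ring

/-- The orthonormal cells which divide the mass of `(m + 2) * sigmoid` between `1` and `m + 1` into
`m` unit pieces. The entropy of the chain is computed by comparison with the explicit Gram matrix
`sechGram (modelCell m)`. -/
noncomputable def modelCell (m : ℕ) (a : Fin m) : ℝ → ℝ := cellFunction (m + 2) (a + 1) (a + 2)

variable {m : ℕ}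

theorem orthogonalFunctions_modelCell (m : ℕ) : OrthogonalFunctions (modelCell m) fun _ => 1 where
  boundedIntegrable _ := boundedIntegrable_cellFunction _ _ _
  integral_mul a b := by
    have hdisj {a b : Fin m} (hab : a < b) (u : ℝ) : modelCell m a u * modelCell m b u = 0 := by
      have := natCast_add_one_le b
      have hle : (a : ℝ) + 1 ≤ b := by exact_mod_cast hab
      have : (0 : ℝ) ≤ a := a.val.cast_nonneg
      exact cellFunction_mul_cellFunction_of_le
        (cellPoint_mono (by linarith) (by linarith) (by linarith)) u
    rcases lt_trichotomy a b with hab | rfl | hba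
    · simp only [hdisj hab, integral_zero, hab.ne, if_false]
    · have := natCast_add_one_le a
      have : (0 : ℝ) ≤ a := a.val.cast_nonneg
      simp only [modelCell, if_true]
      rw [integral_cellFunction_mul_self (by linarith) (by linarith) (by linarith)]
      ring
    · simp only [mul_comm (modelCell m a _), hdisj hba, integral_zero, hba.ne', if_false]

theorem sub_sq_mul_pow_three_le_sq {s t d y S f : ℝ} (hs : 0 ≤ s) (hst : s ≤ t) (hd : 0 ≤ d)
    (hdt : d ≤ t) (hS : √s ≤ S) (hf : S * (1 - (y * d) ^ 2 / 2) ≤ f) :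
    s - y ^ 2 * t ^ 3 ≤ f ^ 2 := by
  have hS0 : 0 ≤ S := (sqrt_nonneg s).trans hS
  have hsS : s ≤ S ^ 2 := (sqrt_le_left hS0).1 hS
  have ht : 0 ≤ t := hs.trans hst
  have hle : s - y ^ 2 * t ^ 3 ≤ s * (1 - (y * d) ^ 2) := by
    have : s * (y ^ 2 * d ^ 2) ≤ t * (y ^ 2 * t ^ 2) := by gcongr
    rw [mul_pow]
    linarith
  refine hle.trans ?_
  rcases le_total 1 ((y * d) ^ 2) with h1 | h1
  · exact (mul_nonpos_of_nonneg_of_nonpos hs (by linarith)).trans (sq_nonneg f)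
  · calc s * (1 - (y * d) ^ 2) ≤ S ^ 2 * (1 - (y * d) ^ 2 / 2) ^ 2 := by
          gcongr
          nlinarith [sq_nonneg ((y * d) ^ 2)]
      _ = (S * (1 - (y * d) ^ 2 / 2)) ^ 2 := (mul_pow _ _ _).symm
      _ ≤ f ^ 2 := pow_le_pow_left₀ (mul_nonneg hS0 (by linarith)) hf 2

theorem sub_sq_mul_edgeDecay_pow_three_le_powerSpectrum_modelCell (a : Fin m) (k : ℝ) :
    1 / ((a : ℝ) + 2) + 1 / ((m : ℝ) + 1 - a) - (2 * π * k) ^ 2 * edgeDecay m 1 a ^ 3 ≤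
      powerSpectrum (modelCell m a) k := by
  have := natCast_add_one_le a
  have : (0 : ℝ) ≤ a := a.val.cast_nonneg
  have hp : (0 : ℝ) < a + 1 := by linarith
  have hpq : (a : ℝ) + 1 ≤ a + 2 := by linarith
  have hqN : (a : ℝ) + 2 < m + 2 := by linarith
  have hS := mul_sqrt_le_integral_cellFunction hp hpq hqN
  have hd := cellPoint_sub_cellPoint_le hp hpq hqN
  rw [show (a : ℝ) + 2 - (a + 1) = 1 by ring] at hS hd
  rw [one_mul, show (m : ℝ) + 2 - (a + 1) = m + 1 - a by ring] at hS
  rw [add_sub_add_right_eq_sub] at hd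
  have hma : (0 : ℝ) < m - a := by linarith
  have hma' : (0 : ℝ) < m + 1 - a := by linarith
  have hdecay : edgeDecay m 1 a = 1 / ((a : ℝ) + 1) + 1 / ((m : ℝ) - a) := by
    simp only [edgeDecay, rpow_neg_one, one_div]
  refine sub_sq_mul_pow_three_le_sq (by positivity) ?_
    (sub_nonneg.2 (cellPoint_mono hp hpq hqN)) (hd.trans_eq hdecay.symm) hS
    (integral_mul_one_sub_le_norm_fourier (boundedIntegrable_cellFunction _ _ _).integrable
      (cellFunction_nonneg _ _ _)
      (fun u hu => indicator_of_notMem (fun h => hu (Ioc_subset_Icc_self h)) _) k)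
  rw [hdecay]
  gcongr
  linarith

theorem log_sub_le_sum_powerSpectrum_modelCell (m : ℕ) (k : ℝ) :
    2 * log (m + 2) - 2 - (2 * π * k) ^ 2 * (8 * decayConst) ≤
      ∑ a, powerSpectrum (modelCell m a) k := by
  have hharm := log_sub_one_le_sum_inv m
  have hrev : ∑ a : Fin m, 1 / ((m : ℝ) + 1 - a) = ∑ a : Fin m, ((a : ℝ) + 2)⁻¹ := by
    have h := sum_sub_eq_sum_add_one m fun x => (x + 1)⁻¹
    simpa only [one_div, sub_add_eq_add_sub, add_assoc, one_add_one_eq_two] using h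
  have hcube : ∑ a : Fin m, edgeDecay m 1 a ^ 3 ≤ 8 * decayConst := by
    calc ∑ a : Fin m, edgeDecay m 1 a ^ 3 ≤ ∑ a : Fin m, 4 * edgeDecay m (9 / 8) a := by
          refine Finset.sum_le_sum fun a _ => (edgeDecay_one_pow_three_le a).trans ?_
          gcongr
          exact edgeDecay_antitone a (by norm_num)
      _ ≤ 4 * (2 * decayConst) := by
          rw [← Finset.mul_sum]
          gcongr
          exact sum_edgeDecay_le m
      _ = 8 * decayConst := by ring
  calc 2 * log (m + 2) - 2 - (2 * π * k) ^ 2 * (8 * decayConst)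
      ≤ ∑ a : Fin m, ((a : ℝ) + 2)⁻¹ + ∑ a : Fin m, ((a : ℝ) + 2)⁻¹ -
          (2 * π * k) ^ 2 * ∑ a : Fin m, edgeDecay m 1 a ^ 3 := by
        gcongr
        linarith
    _ = ∑ a : Fin m, (1 / ((a : ℝ) + 2) + 1 / ((m : ℝ) + 1 - a) -
          (2 * π * k) ^ 2 * edgeDecay m 1 a ^ 3) := by
        rw [Finset.sum_sub_distrib, Finset.sum_add_distrib, ← Finset.mul_sum, hrev]
        simp only [one_div]
    _ ≤ ∑ a, powerSpectrum (modelCell m a) k :=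
        Finset.sum_le_sum fun a _ => sub_sq_mul_edgeDecay_pow_three_le_powerSpectrum_modelCell a k

theorem exists_log_sub_le_spectralSum_sechGram_modelCell :
    ∃ C, ∀ m : ℕ, 1 / 6 * log (m + 2) - C ≤ spectralSum varEntropy (sechGram (modelCell m)) := by
  refine ⟨1 / 6 + (2 * π) ^ 2 * (8 * decayConst) * ∫ k, k ^ 2 * modeEntropy k, fun m => ?_⟩
  have hON := orthogonalFunctions_modelCell m
  refine le_trans ?_ (integral_modeEntropy_mul_le_spectralSum_sechGram hON)
  have hint₁ : Integrable fun k => (2 * log (m + 2) - 2) * modeEntropy k :=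
    integrable_modeEntropy.const_mul _
  have hint₂ : Integrable fun k => (2 * π) ^ 2 * (8 * decayConst) * (k ^ 2 * modeEntropy k) :=
    integrable_sq_mul_modeEntropy.const_mul _
  have hint₃ : Integrable fun k => modeEntropy k * ∑ a, powerSpectrum (modelCell m a) k := by
    simp only [Finset.mul_sum]
    exact integrable_finsetSum _ fun a _ =>
      integrable_modeEntropy_mul_powerSpectrum (hON.boundedIntegrable a)
  calc 1 / 6 * log (m + 2) -
        (1 / 6 + (2 * π) ^ 2 * (8 * decayConst) * ∫ k, k ^ 2 * modeEntropy k)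
      = ∫ k, ((2 * log (m + 2) - 2) * modeEntropy k -
          (2 * π) ^ 2 * (8 * decayConst) * (k ^ 2 * modeEntropy k)) := by
        rw [integral_sub hint₁ hint₂, integral_const_mul, integral_const_mul,
          integral_modeEntropy]
        ring
    _ ≤ ∫ k, modeEntropy k * ∑ a, powerSpectrum (modelCell m a) k := by
        refine integral_mono (hint₁.sub hint₂) hint₃ fun k => ?_
        calc (2 * log (m + 2) - 2) * modeEntropy k -
              (2 * π) ^ 2 * (8 * decayConst) * (k ^ 2 * modeEntropy k)
            = modeEntropy k * (2 * log (m + 2) - 2 - (2 * π * k) ^ 2 * (8 * decayConst)) := by ring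
          _ ≤ modeEntropy k * ∑ a, powerSpectrum (modelCell m a) k :=
            mul_le_mul_of_nonneg_left (log_sub_le_sum_powerSpectrum_modelCell m k)
              (modeEntropy_nonneg k)

end ModelLowerBound

section ModelUpperBound

open Real

variable {m : ℕ}

theorem sechConv_modelCell_rev (a : Fin m) (v : ℝ) :
    sechConv (modelCell m a.rev) v = sechConv (modelCell m a) (-v) := by
  have hlt := natCast_add_one_le a
  have : (0 : ℝ) ≤ a := Nat.cast_nonneg _
  rw [modelCell, modelCell, natCast_rev,
    ← sechConv_cellFunction_sub (by linarith) (by linarith) (by linarith)]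
  congr 2 <;> ring

theorem sechConv_modelCell_sq_le (a : Fin m) (v : ℝ) : sechConv (modelCell m a) v ^ 2 ≤
    ((m : ℝ) + 2) / π ^ 2 * ((a : ℝ) + 1) ^ (-2 : ℝ) * exp v := by
  have hlt := natCast_add_one_le a
  have : (0 : ℝ) ≤ a := Nat.cast_nonneg _
  calc sechConv (modelCell m a) v ^ 2
      ≤ (1 / π * exp (v / 2) * (√(m + 2) * ((a + 2 - (a + 1)) / (a + 1)))) ^ 2 :=
        pow_le_pow_left₀ (sechConv_cellFunction_nonneg _ _ _ v)
          (sechConv_cellFunction_le (by linarith) (by linarith) (by linarith) v) 2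
    _ = √(m + 2) ^ 2 / π ^ 2 * ((a : ℝ) + 1)⁻¹ ^ 2 * exp (v / 2) ^ 2 := by ring
    _ = _ := by
        rw [sq_sqrt (by positivity), ← exp_nat_mul, Nat.cast_two, mul_div_cancel₀ _ two_ne_zero,
          inv_pow, rpow_neg (by positivity), rpow_two]

theorem sechConv_modelCell_sq_le_rev (a : Fin m) (v : ℝ) : sechConv (modelCell m a) v ^ 2 ≤
    ((m : ℝ) + 2) / π ^ 2 * ((m : ℝ) - a) ^ (-2 : ℝ) * exp (-v) := by
  have h := sechConv_modelCell_sq_le a.rev (-v)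
  rwa [sechConv_modelCell_rev, neg_neg, natCast_rev, sub_right_comm, sub_add_cancel] at h

theorem gramMatrix_one_sub_sigmoidCutoff_sq_le (a : Fin m) :
    gramMatrix volume (fun u => 1 - sigmoidCutoff (log (m + 2)) u ^ 2)
      (fun a => sechConv (modelCell m a)) a a ≤ 1 / π * edgeDecay m 2 a := by
  set L := log ((m : ℝ) + 2)
  have hL : 0 ≤ L := log_nonneg (by linarith [m.cast_nonneg (α := ℝ)])
  set tail := fun u => 2 * (sigmoid (2 * (u - L)) * exp (-u))
  set c := ((m : ℝ) + 2) / π ^ 2 * ((a : ℝ) + 1) ^ (-2 : ℝ)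
  set c' := ((m : ℝ) + 2) / π ^ 2 * ((m : ℝ) - a) ^ (-2 : ℝ)
  have htail : Integrable tail := integrable_sigmoid_mul_exp_neg L
  calc ∫ u, (1 - sigmoidCutoff L u ^ 2) *
        (sechConv (modelCell m a) u * sechConv (modelCell m a) u)
      ≤ ∫ u, (c * tail (-u) + c' * tail u) := by
        refine integral_mono (integrable_one_sub_sq_mul_sechConv_mul_sechConv
          (orthogonalFunctions_modelCell m).boundedIntegrable
          (boundedIntegrable_sigmoidCutoff hL) a a)
          ((htail.comp_neg.const_mul c).add (htail.const_mul c')) fun u => ?_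
        have hleft := mul_le_mul_of_nonneg_left (sechConv_modelCell_sq_le a u)
          (sigmoid_nonneg (2 * (-u - L)))
        have hright := mul_le_mul_of_nonneg_left (sechConv_modelCell_sq_le_rev a u)
          (sigmoid_nonneg (2 * (u - L)))
        have hcut := mul_le_mul_of_nonneg_right (one_sub_sigmoidCutoff_sq_le L u)
          (sq_nonneg (sechConv (modelCell m a) u))
        simp only [tail, neg_neg, ← sq]
        linarith
    _ = (c + c') * (π * exp (-L)) := by
        rw [integral_add (htail.comp_neg.const_mul c) (htail.const_mul c'),
          integral_const_mul c, integral_const_mul c', integral_neg_eq_self tail,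
          integral_sigmoid_mul_exp_neg, add_mul]
    _ = 1 / π * edgeDecay m 2 a := by
        have : (m : ℝ) + 2 ≠ 0 := by positivity
        rw [Real.exp_neg, exp_log (by positivity), edgeDecay]
        simp only [c, c']
        field_simp

theorem exists_spectralSum_sechGram_modelCell_le :
    ∃ C, ∀ m : ℕ, spectralSum varEntropy (sechGram (modelCell m)) ≤ 1 / 6 * log (m + 2) + C := by
  refine ⟨translationConst * (∫ u, sechSq u) + 8 * (1 / π) ^ (3 / 4 : ℝ) * decayConst,
    fun m => ?_⟩
  have hON := orthogonalFunctions_modelCell m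
  have hL : 0 ≤ log ((m : ℝ) + 2) := log_nonneg (by linarith [m.cast_nonneg (α := ℝ)])
  have hcut := boundedIntegrable_sigmoidCutoff hL
  have hcut1 (u) : sigmoidCutoff (log (m + 2)) u ^ 2 ≤ 1 :=
    pow_le_one₀ (sigmoidCutoff_nonneg hL u) (sigmoidCutoff_le_one _ u)
  have hdiag : ∑ a, varEntropy (gramMatrix volume
      (fun u => 1 - sigmoidCutoff (log (m + 2)) u ^ 2) (fun a => sechConv (modelCell m a)) a a) ≤
        8 * (1 / π) ^ (3 / 4 : ℝ) * decayConst := by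
    refine sum_varEntropy_le_of_le_edgeDecay (by positivity) (fun a => ?_) fun a =>
      (gramMatrix_one_sub_sigmoidCutoff_sq_le a).trans (mul_le_mul_of_nonneg_left
        (edgeDecay_antitone a (by norm_num)) (by positivity))
    exact (posSemidef_gramMatrix
      (integrable_one_sub_sq_mul_sechConv_mul_sechConv hON.boundedIntegrable hcut)
      (.of_forall fun u => sub_nonneg.2 (hcut1 u))).diag_nonneg
  have henergy := mul_le_mul_of_nonneg_left (integral_sq_mul_powerSpectrum_sigmoidCutoff_le hL)
    translationConst_nonneg
  linarith [spectralSum_sechGram_le hON hcut hcut1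
    (integrable_sq_mul_powerSpectrum_sigmoidCutoff hL), integral_sigmoidCutoff_sq_le hL]

end ModelUpperBound

section HalfLineComparison

open Real

/-- Lebesgue measure on the half line `(0, ∞)`. -/
noncomputable abbrev halfLine : Measure ℝ := volume.restrict (Ioi 0)

theorem ae_halfLine {P : ℝ → Prop} (h : ∀ r, 0 < r → P r) : ∀ᵐ r ∂halfLine, P r :=
  ae_restrict_of_forall_mem measurableSet_Ioi h

theorem integrable_one_add_rpow_halfLine {s : ℝ} (hs : s < -1) :
    Integrable (fun r => (1 + r) ^ s) halfLine := by
  simp only [add_comm (1 : ℝ)]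
  exact integrableOn_add_rpow_Ioi_of_lt hs (by norm_num)

theorem inv_one_add_mul_inv_add_sq_le {s r : ℝ} (hs : 1 ≤ s) (hr : 0 < r) :
    (1 + r)⁻¹ * (s + r)⁻¹ ^ 2 ≤ s ^ (-(3 / 2) : ℝ) * (1 + r) ^ (-(3 / 2) : ℝ) := by
  have hs0 : 0 < s := by linarith
  have hrpow : (s + r)⁻¹ ^ 2 = (s + r) ^ (-(3 / 2) : ℝ) * (s + r) ^ (-(1 / 2) : ℝ) := by
    rw [← rpow_add (by positivity), inv_pow, ← rpow_two, ← rpow_neg (by positivity)]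
    norm_num
  calc (1 + r)⁻¹ * (s + r)⁻¹ ^ 2
      ≤ (1 + r)⁻¹ * (s ^ (-(3 / 2) : ℝ) * (1 + r) ^ (-(1 / 2) : ℝ)) := by
        rw [hrpow]
        refine mul_le_mul_of_nonneg_left (mul_le_mul ?_ ?_ (by positivity) (by positivity))
          (by positivity)
        · exact rpow_le_rpow_of_nonpos hs0 (by linarith) (by norm_num)
        · exact rpow_le_rpow_of_nonpos (by positivity) (by linarith) (by norm_num)
    _ = s ^ (-(3 / 2) : ℝ) * (1 + r) ^ (-(3 / 2) : ℝ) := by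
        rw [mul_left_comm, ← rpow_neg_one, ← rpow_add (by positivity)]
        norm_num

/-- Two functions on the half line which decay like `K / (s + r)` and whose difference decays like
`K / (s + r) ^ 2`. -/
structure CloseKernels (s K : ℝ) (p q : ℝ → ℝ) : Prop where
  one_le : 1 ≤ s
  nonneg : 0 ≤ K
  measurable_left : Measurable p
  measurable_right : Measurable q
  abs_left_le : ∀ r, 0 < r → |p r| ≤ K * (s + r)⁻¹
  abs_right_le : ∀ r, 0 < r → |q r| ≤ K * (s + r)⁻¹
  abs_sub_le : ∀ r, 0 < r → |q r - p r| ≤ K * (s + r)⁻¹ ^ 2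

variable {s K r : ℝ} {p q : ℝ → ℝ}

namespace CloseKernels

protected theorem symm (h : CloseKernels s K p q) : CloseKernels s K q p :=
  ⟨h.one_le, h.nonneg, h.measurable_right, h.measurable_left, h.abs_right_le, h.abs_left_le,
    fun r hr => abs_sub_comm (p r) (q r) ▸ h.abs_sub_le r hr⟩

variable (h : CloseKernels s K p q) (hr : 0 < r)
include h hr

theorem mul_inv_add_le : K * (s + r)⁻¹ ≤ K * (1 + r)⁻¹ :=
  mul_le_mul_of_nonneg_left (inv_anti₀ (by positivity) (by linarith [h.one_le])) h.nonneg

theorem abs_left_le_one_add : |p r| ≤ K * (1 + r)⁻¹ :=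
  (h.abs_left_le r hr).trans (h.mul_inv_add_le hr)

theorem abs_one_add_mul_sub_le : |(1 + r) * (q r - p r)| ≤ K * (1 + r)⁻¹ := by
  have hs := h.one_le
  rw [abs_mul, abs_of_pos (by positivity)]
  calc (1 + r) * |q r - p r| ≤ (s + r) * (K * (s + r)⁻¹ ^ 2) :=
        mul_le_mul (by linarith) (h.abs_sub_le r hr) (abs_nonneg _) (by linarith)
    _ = K * (s + r)⁻¹ := by
        have : s + r ≠ 0 := by linarith
        field_simp
    _ ≤ K * (1 + r)⁻¹ := h.mul_inv_add_le hr

theorem inv_one_add_mul_left_sq_le : (1 + r)⁻¹ * (p r * p r) ≤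
    K ^ 2 * s ^ (-(3 / 2) : ℝ) * (1 + r) ^ (-(3 / 2) : ℝ) := by
  have hsq := pow_le_pow_left₀ (abs_nonneg _) (h.abs_left_le r hr) 2
  rw [sq_abs, mul_pow] at hsq
  calc (1 + r)⁻¹ * (p r * p r) ≤ (1 + r)⁻¹ * (K ^ 2 * (s + r)⁻¹ ^ 2) :=
        mul_le_mul_of_nonneg_left (by rwa [← sq]) (by positivity)
    _ = K ^ 2 * ((1 + r)⁻¹ * (s + r)⁻¹ ^ 2) := mul_left_comm _ _ _
    _ ≤ _ := by
        rw [mul_assoc]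
        exact mul_le_mul_of_nonneg_left (inv_one_add_mul_inv_add_sq_le h.one_le hr) (sq_nonneg K)

theorem two_add_mul_sub_sq_le : (2 + r) * ((q r - p r) * (q r - p r)) ≤
    2 * (K ^ 2 * s ^ (-(3 / 2) : ℝ) * (1 + r) ^ (-(3 / 2) : ℝ)) := by
  have hs := h.one_le
  have hsq := pow_le_pow_left₀ (abs_nonneg _) (h.abs_sub_le r hr) 2
  rw [sq_abs, mul_pow] at hsq
  have hweight : (2 + r) * (s + r)⁻¹ ^ 2 ≤ 2 * (1 + r)⁻¹ := by
    have : 0 < s + r := by linarith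
    rw [inv_pow, ← div_eq_mul_inv, ← div_eq_mul_inv,
      div_le_div_iff₀ (by positivity) (by positivity)]
    nlinarith
  calc (2 + r) * ((q r - p r) * (q r - p r))
      ≤ (2 + r) * (K ^ 2 * ((s + r)⁻¹ ^ 2) ^ 2) :=
        mul_le_mul_of_nonneg_left (by rwa [← sq]) (by positivity)
    _ = (2 + r) * (s + r)⁻¹ ^ 2 * (K ^ 2 * (s + r)⁻¹ ^ 2) := by ring
    _ ≤ 2 * (1 + r)⁻¹ * (K ^ 2 * (s + r)⁻¹ ^ 2) :=
        mul_le_mul_of_nonneg_right hweight (by positivity)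
    _ = 2 * (K ^ 2 * ((1 + r)⁻¹ * (s + r)⁻¹ ^ 2)) := by ring
    _ ≤ _ := by
        rw [mul_assoc (K ^ 2)]
        exact mul_le_mul_of_nonneg_left (mul_le_mul_of_nonneg_left
          (inv_one_add_mul_inv_add_sq_le hs hr) (sq_nonneg K)) zero_le_two

end CloseKernels

theorem integrable_mul_mul_halfLine {w f f' : ℝ → ℝ} {C C' : ℝ} (hw : Measurable w)
    (hf : Measurable f) (hf' : Measurable f') (hw1 : ∀ r, 0 < r → |w r| ≤ 1)
    (hfC : ∀ r, 0 < r → |f r| ≤ C * (1 + r)⁻¹) (hfC' : ∀ r, 0 < r → |f' r| ≤ C' * (1 + r)⁻¹) :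
    Integrable (fun r => w r * (f r * f' r)) halfLine := by
  refine ((integrable_one_add_rpow_halfLine (s := -2) (by norm_num)).const_mul (C * C')).mono'
    (hw.mul (hf.mul hf')).aestronglyMeasurable (ae_halfLine fun r hr => ?_)
  rw [norm_mul, norm_mul]
  calc |w r| * (|f r| * |f' r|) ≤ 1 * (C * (1 + r)⁻¹ * (C' * (1 + r)⁻¹)) :=
        mul_le_mul (hw1 r hr) (mul_le_mul (hfC r hr) (hfC' r hr) (abs_nonneg _)
          ((abs_nonneg _).trans (hfC r hr))) (by positivity) zero_le_one
    _ = C * C' * (1 + r) ^ (-2 : ℝ) := by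
        rw [rpow_neg (by positivity), rpow_two, ← inv_pow]
        ring

theorem abs_inv_one_add_le_one (hr : 0 < r) : |(1 + r)⁻¹| ≤ 1 := by
  rw [abs_of_pos (by positivity)]
  exact inv_le_one_of_one_le₀ (by linarith)

variable {ι : Type*} {S : ι → ℝ} {P Q : ι → ℝ → ℝ}

/-- The positive matrix by which the Gram matrix of `Q` can exceed that of `P`. Its weights come
from `(x + y) ^ 2 ≤ x ^ 2 + x ^ 2 / (1 + r) + (2 + r) * y ^ 2`. -/
noncomputable def gramRemainder (P Q : ι → ℝ → ℝ) : Matrix ι ι ℝ :=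
  gramMatrix halfLine (fun r => (1 + r)⁻¹) P +
    gramMatrix halfLine (fun r => 2 + r) fun a r => Q a r - P a r

section CloseFamilies

variable (h : ∀ a, CloseKernels (S a) K (P a) (Q a))
include h

theorem integrable_left_mul_left (a b : ι) :
    Integrable (fun r => 1 * (P a r * P b r)) halfLine :=
  integrable_mul_mul_halfLine measurable_const (h a).measurable_left (h b).measurable_left
    (fun _ _ => abs_one.le) (fun _ => (h a).abs_left_le_one_add) fun _ => (h b).abs_left_le_one_add

theorem integrable_inv_one_add_mul_left_mul_left (a b : ι) :
    Integrable (fun r => (1 + r)⁻¹ * (P a r * P b r)) halfLine :=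
  integrable_mul_mul_halfLine (by fun_prop) (h a).measurable_left (h b).measurable_left
    (fun _ => abs_inv_one_add_le_one) (fun _ => (h a).abs_left_le_one_add)
    fun _ => (h b).abs_left_le_one_add

theorem integrable_two_add_mul_sub_mul_sub (a b : ι) :
    Integrable (fun r => (2 + r) * ((Q a r - P a r) * (Q b r - P b r))) halfLine := by
  have hmeas (a) : Measurable fun r => (1 + r) * (Q a r - P a r) :=
    (by fun_prop : Measurable fun r : ℝ => 1 + r).mul
      ((h a).measurable_right.sub (h a).measurable_left)
  have hint := (integrable_mul_mul_halfLine (w := fun r => (2 + r) / (2 * (1 + r) ^ 2))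
    (by fun_prop) (hmeas a) (hmeas b) (fun r hr => ?_)
    (fun r => (h a).abs_one_add_mul_sub_le) fun r => (h b).abs_one_add_mul_sub_le).const_mul 2
  · refine hint.congr (ae_halfLine fun r hr => ?_)
    field_simp
  · rw [abs_of_pos (by positivity), div_le_one (by positivity)]
    nlinarith

theorem gramMatrix_add_gramRemainder :
    gramMatrix halfLine (fun _ => 1) P + gramRemainder P Q = gramMatrix halfLine (fun _ => 1) Q +
      gramMatrix halfLine (fun r => (1 + r)⁻¹) fun a r => P a r - (1 + r) * (Q a r - P a r) := by
  ext a b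
  have hP := integrable_left_mul_left h a b
  have hQ := integrable_left_mul_left (fun a => (h a).symm) a b
  have hW := integrable_inv_one_add_mul_left_mul_left h a b
  have hE := integrable_two_add_mul_sub_mul_sub h a b
  have hrem : Integrable (fun r => (1 + r)⁻¹ * (P a r * P b r) +
      (2 + r) * ((Q a r - P a r) * (Q b r - P b r))) halfLine := hW.add hE
  have hall : Integrable (fun r => 1 * (P a r * P b r) + ((1 + r)⁻¹ * (P a r * P b r) +
      (2 + r) * ((Q a r - P a r) * (Q b r - P b r)))) halfLine := hP.add hrem
  have hpoint : (fun r => (1 + r)⁻¹ *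
      ((P a r - (1 + r) * (Q a r - P a r)) * (P b r - (1 + r) * (Q b r - P b r)))) =ᵐ[halfLine]
      fun r => 1 * (P a r * P b r) + ((1 + r)⁻¹ * (P a r * P b r) +
        (2 + r) * ((Q a r - P a r) * (Q b r - P b r))) - 1 * (Q a r * Q b r) :=
    ae_halfLine fun r hr => by
      field_simp
      ring
  simp only [gramRemainder, gramMatrix, Matrix.add_apply, of_apply]
  rw [integral_congr_ae hpoint, integral_sub hall hQ, integral_add hP hrem,
    integral_add hW hE]
  ring

theorem gramMatrix_le_add_gramRemainder [Finite ι] : gramMatrix halfLine (fun _ => 1) Q ≤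
    gramMatrix halfLine (fun _ => 1) P + gramRemainder P Q := by
  have hbound (a r) (hr : 0 < r) : |P a r - (1 + r) * (Q a r - P a r)| ≤ 2 * K * (1 + r)⁻¹ := by
    have := abs_sub (P a r) ((1 + r) * (Q a r - P a r))
    linarith [(h a).abs_left_le_one_add hr, (h a).abs_one_add_mul_sub_le hr]
  have hmeas (a) : Measurable fun r => P a r - (1 + r) * (Q a r - P a r) :=
    (h a).measurable_left.sub ((by fun_prop : Measurable fun r : ℝ => 1 + r).mul
      ((h a).measurable_right.sub (h a).measurable_left))
  rw [gramMatrix_add_gramRemainder h]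
  exact le_add_of_nonneg_right (nonneg_iff_posSemidef.2 (posSemidef_gramMatrix
    (fun a b => integrable_mul_mul_halfLine (by fun_prop) (hmeas a) (hmeas b)
      (fun _ => abs_inv_one_add_le_one) (hbound a) (hbound b))
    (ae_halfLine fun r hr => by positivity)))

theorem posSemidef_gramMatrix_left [Finite ι] :
    (gramMatrix halfLine (fun _ => 1) P).PosSemidef :=
  posSemidef_gramMatrix (integrable_left_mul_left h) (.of_forall fun _ => zero_le_one)

theorem posSemidef_gramRemainder [Finite ι] : (gramRemainder P Q).PosSemidef :=
  (posSemidef_gramMatrix (integrable_inv_one_add_mul_left_mul_left h)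
    (ae_halfLine fun r hr => by positivity)).add
  (posSemidef_gramMatrix (integrable_two_add_mul_sub_mul_sub h)
    (ae_halfLine fun r hr => by positivity))

theorem gramRemainder_apply_self_le (a : ι) : gramRemainder P Q a a ≤
    3 * K ^ 2 * (∫ r, (1 + r) ^ (-(3 / 2) : ℝ) ∂halfLine) * S a ^ (-(3 / 2) : ℝ) := by
  have hdecay := integrable_one_add_rpow_halfLine (s := -(3 / 2)) (by norm_num)
  calc gramRemainder P Q a a
      = ∫ r, ((1 + r)⁻¹ * (P a r * P a r) +
          (2 + r) * ((Q a r - P a r) * (Q a r - P a r))) ∂halfLine :=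
        (integral_add (integrable_inv_one_add_mul_left_mul_left h a a)
          (integrable_two_add_mul_sub_mul_sub h a a)).symm
    _ ≤ ∫ r, 3 * (K ^ 2 * S a ^ (-(3 / 2) : ℝ)) * (1 + r) ^ (-(3 / 2) : ℝ) ∂halfLine := by
        refine integral_mono_ae ((integrable_inv_one_add_mul_left_mul_left h a a).add
          (integrable_two_add_mul_sub_mul_sub h a a)) (hdecay.const_mul _)
          (ae_halfLine fun r hr => ?_)
        have hleft := (h a).inv_one_add_mul_left_sq_le hr
        have hsub := (h a).two_add_mul_sub_sq_le hr
        simp only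
        linarith
    _ = _ := by
        rw [integral_const_mul]
        ring

end CloseFamilies

/-- The error bound in `spectralSum_gramMatrix_add_le`. -/
noncomputable def comparisonConst (K : ℝ) : ℝ :=
  8 * (3 * K ^ 2 * ∫ r, (1 + r) ^ (-(3 / 2) : ℝ) ∂halfLine) ^ (3 / 4 : ℝ) * decayConst

theorem spectralSum_gramMatrix_add_le {m : ℕ} {P Q P' Q' : Fin m → ℝ → ℝ}
    (h : ∀ a : Fin m, CloseKernels (a + 1) K (P a) (Q a))
    (h' : ∀ a : Fin m, CloseKernels (m - a) K (P' a) (Q' a)) :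
    spectralSum varEntropy
        (gramMatrix halfLine (fun _ => 1) Q + gramMatrix halfLine (fun _ => 1) Q') ≤
      spectralSum varEntropy
        (gramMatrix halfLine (fun _ => 1) P + gramMatrix halfLine (fun _ => 1) P') +
      comparisonConst K := by
  have hD := (posSemidef_gramRemainder h).add (posSemidef_gramRemainder h')
  have hmass : 0 ≤ ∫ r, (1 + r) ^ (-(3 / 2) : ℝ) ∂halfLine :=
    integral_nonneg_of_ae (ae_halfLine fun r hr => by positivity)
  refine (spectralSum_le_add_sum_diag concaveOn_varEntropy monotoneOn_varEntropy varEntropy_zero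
    ((posSemidef_gramMatrix_left fun a => (h a).symm).add
      (posSemidef_gramMatrix_left fun a => (h' a).symm))
    ((posSemidef_gramMatrix_left h).add (posSemidef_gramMatrix_left h')) hD ?_).trans
    (add_le_add_right (sum_varEntropy_le_of_le_edgeDecay (by positivity)
      (fun a => hD.diag_nonneg) fun a => ?_) _)
  · rw [add_add_add_comm]
    exact add_le_add (gramMatrix_le_add_gramRemainder h) (gramMatrix_le_add_gramRemainder h')
  · rw [edgeDecay, mul_add]
    exact add_le_add (gramRemainder_apply_self_le h a) (gramRemainder_apply_self_le h' a)

end HalfLineComparison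

section DistanceKernels

open Real

/-- The kernel by which the model cell at distance `s` from a block boundary enters
`sechGram (modelCell m)`, as a function of the distance `r` from that boundary. -/
noncomputable def continuumKernel (s r : ℝ) : ℝ := 1 / π * (log (s + 1 + r) - log (s + r))

/-- The lattice analogue of `continuumKernel`: the distance `r` is rounded down, and `θ` is the
offset of the lattice. -/
noncomputable def latticeKernel (θ s r : ℝ) : ℝ := 1 / π * (s - 1 + ⌊r⌋₊ + θ)⁻¹

theorem measurable_continuumKernel (s : ℝ) : Measurable (continuumKernel s) := by
  unfold continuumKernel
  fun_prop

theorem measurable_latticeKernel (θ s : ℝ) : Measurable (latticeKernel θ s) := by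
  have : Measurable fun r : ℝ => (⌊r⌋₊ : ℝ) := measurable_from_nat.comp Nat.measurable_floor
  unfold latticeKernel
  fun_prop

theorem inv_add_one_le_log_sub_log {x : ℝ} (hx : 0 < x) : (x + 1)⁻¹ ≤ log (x + 1) - log x := by
  rw [← log_div (by positivity) hx.ne']
  refine le_of_eq_of_le ?_ (one_sub_inv_le_log_of_pos (by positivity))
  field_simp
  ring

theorem log_sub_log_le_inv {x : ℝ} (hx : 0 < x) : log (x + 1) - log x ≤ x⁻¹ := by
  rw [← log_div (by positivity) hx.ne']
  refine (log_le_sub_one_of_pos (by positivity)).trans_eq ?_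
  field_simp
  ring

theorem abs_inv_sub_log_sub_log_le {x : ℝ} (hx : 0 < x) :
    |x⁻¹ - (log (x + 1) - log x)| ≤ x⁻¹ ^ 2 := by
  rw [abs_of_nonneg (sub_nonneg.2 (log_sub_log_le_inv hx))]
  calc x⁻¹ - (log (x + 1) - log x) ≤ x⁻¹ - (x + 1)⁻¹ :=
        sub_le_sub_left (inv_add_one_le_log_sub_log hx) _
    _ = x⁻¹ * (x + 1)⁻¹ := by
        field_simp
        ring
    _ ≤ x⁻¹ ^ 2 := by
        rw [sq]
        gcongr
        linarith

theorem abs_inv_sub_inv_le {x y : ℝ} (hx : 0 < x) (hxy : x / 4 ≤ y) (hsub : |x - y| ≤ 3 / 2) :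
    |y⁻¹ - x⁻¹| ≤ 6 * x⁻¹ ^ 2 := by
  have hy : 0 < y := by linarith
  have hinv : y⁻¹ ≤ 4 * x⁻¹ := by
    rw [← div_eq_mul_inv, inv_le_comm₀ hy (by positivity), inv_div]
    exact hxy
  rw [inv_sub_inv hy.ne' hx.ne', abs_div, abs_of_pos (mul_pos hy hx), div_eq_mul_inv, mul_inv]
  calc |x - y| * (y⁻¹ * x⁻¹) ≤ 3 / 2 * (4 * x⁻¹ * x⁻¹) := by gcongr
    _ = 6 * x⁻¹ ^ 2 := by ring

theorem abs_one_div_pi_mul_le {t B : ℝ} (h : |t| ≤ B) : |1 / π * t| ≤ B := by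
  have hpi : 1 / π ≤ 1 := by
    rw [div_le_one pi_pos]
    linarith [pi_gt_three]
  rw [abs_mul, abs_of_pos (by positivity)]
  exact (mul_le_of_le_one_left (abs_nonneg t) hpi).trans h

theorem closeKernels_continuumKernel_latticeKernel {θ s : ℝ} (hs : 1 ≤ s) (hθ : 1 / 2 ≤ θ)
    (hθ' : θ ≤ 3 / 2) : CloseKernels s 7 (continuumKernel s) (latticeKernel θ s) := by
  have hfloor (r : ℝ) (hr : 0 < r) : (s + r) / 4 ≤ s - 1 + ⌊r⌋₊ + θ ∧
      |s + r - (s - 1 + ⌊r⌋₊ + θ)| ≤ 3 / 2 := by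
    have hle := Nat.floor_le hr.le
    have hlt := Nat.lt_floor_add_one r
    exact ⟨by linarith [(⌊r⌋₊).cast_nonneg (α := ℝ)], abs_le.2 ⟨by linarith, by linarith⟩⟩
  refine ⟨hs, by norm_num, measurable_continuumKernel s, measurable_latticeKernel θ s,
    fun r hr => abs_one_div_pi_mul_le ?_, fun r hr => abs_one_div_pi_mul_le ?_, fun r hr => ?_⟩
  all_goals have hx : 0 < s + r := by linarith
  · have hpos : 0 < (s + r + 1)⁻¹ := by positivity
    have hlower := inv_add_one_le_log_sub_log hx
    have hupper := log_sub_log_le_inv hx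
    rw [add_right_comm, abs_of_nonneg (by linarith)]
    linarith [inv_pos.2 hx]
  · obtain ⟨hquarter, -⟩ := hfloor r hr
    rw [abs_of_pos (inv_pos.2 (by linarith))]
    refine (inv_anti₀ (by positivity) hquarter).trans ?_
    rw [inv_div, div_eq_mul_inv]
    gcongr
    norm_num
  · obtain ⟨hquarter, hdist⟩ := hfloor r hr
    rw [latticeKernel, continuumKernel, ← mul_sub, add_right_comm s 1 r]
    refine abs_one_div_pi_mul_le ((abs_sub_le _ (s + r)⁻¹ _).trans ?_)
    linarith [abs_inv_sub_inv_le hx hquarter hdist, abs_inv_sub_log_sub_log_le hx]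

end DistanceKernels

section EdgeDistance

open Real

variable {N : ℝ}

theorem image_edgeDistance (hN : 0 < N) : edgeDistance N '' Ioi 0 = Ioi 0 := by
  ext r
  refine ⟨fun ⟨w, hw, hwr⟩ => hwr ▸ edgeDistance_pos hN hw, fun hr => ?_⟩
  have hratio : 0 < N / r := div_pos hN hr
  refine ⟨log (1 + N / r), log_pos (by linarith), ?_⟩
  rw [edgeDistance, exp_log (by positivity), add_sub_cancel_left, div_div_cancel₀ hN.ne']

theorem injOn_edgeDistance (hN : 0 < N) : InjOn (edgeDistance N) (Ioi 0) := by
  intro v hv w hw h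
  have hv' : exp v - 1 ≠ 0 := (sub_pos.2 (one_lt_exp_iff.2 hv)).ne'
  have hw' : exp w - 1 ≠ 0 := (sub_pos.2 (one_lt_exp_iff.2 hw)).ne'
  rw [edgeDistance, edgeDistance, div_eq_div_iff hv' hw', mul_right_inj' hN.ne', sub_left_inj] at h
  exact (exp_injective h).symm

theorem hasDerivAt_edgeDistance (N : ℝ) {w : ℝ} (hw : 0 < w) :
    HasDerivAt (edgeDistance N) (-(N / (4 * sinh (w / 2) ^ 2))) w := by
  have hsinh : sinh (w / 2) ≠ 0 := (sinh_pos_iff.2 (by positivity)).ne'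
  have hexp : exp w - 1 ≠ 0 := (sub_pos.2 (one_lt_exp_iff.2 hw)).ne'
  convert! (hasDerivAt_const w N).div ((Real.hasDerivAt_exp w).sub_const 1) hexp using 1
  have hsq : exp w = exp (w / 2) ^ 2 := by
    rw [← exp_nat_mul, Nat.cast_two, mul_div_cancel₀ _ two_ne_zero]
  rw [exp_sub_one_eq_sinh_mul_exp, hsq]
  field_simp
  ring

theorem integral_comp_edgeDistance (hN : 0 < N) (f : ℝ → ℝ) :
    ∫ w in Ioi 0, N / (4 * sinh (w / 2) ^ 2) * f (edgeDistance N w) = ∫ r, f r ∂halfLine := by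
  have hcov := integral_image_eq_integral_abs_deriv_smul measurableSet_Ioi
    (fun w hw => (hasDerivAt_edgeDistance N hw).hasDerivWithinAt) (injOn_edgeDistance hN) f
  rw [image_edgeDistance hN] at hcov
  rw [hcov]
  refine setIntegral_congr_fun measurableSet_Ioi fun w _ => ?_
  simp only [abs_neg, smul_eq_mul]
  rw [abs_of_nonneg (by positivity)]

variable {m : ℕ}

theorem sechConv_modelCell_neg (a : Fin m) {w : ℝ} (hw : 0 < w) : sechConv (modelCell m a) (-w) =
    √(m + 2) / (2 * sinh (w / 2)) * continuumKernel (a + 1) (edgeDistance (m + 2) w) := by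
  have hlt := natCast_add_one_le a
  have : (0 : ℝ) ≤ a := Nat.cast_nonneg _
  rw [modelCell, sechConv_cellFunction_neg (by linarith) (by linarith) (by linarith) hw,
    continuumKernel, add_assoc (a : ℝ) 1 1, one_add_one_eq_two]

theorem integral_sechConv_modelCell_neg (a b : Fin m) :
    ∫ w in Ioi 0, sechConv (modelCell m a) (-w) * sechConv (modelCell m b) (-w) =
      gramMatrix halfLine (fun _ => 1) (fun a : Fin m => continuumKernel (a + 1)) a b := by
  rw [gramMatrix, of_apply, ← integral_comp_edgeDistance (N := m + 2) (by positivity)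
    fun r => 1 * (continuumKernel (a + 1) r * continuumKernel (b + 1) r)]
  refine setIntegral_congr_fun measurableSet_Ioi fun w hw => ?_
  have hsqrt : √((m : ℝ) + 2) ^ 2 = m + 2 := sq_sqrt (by positivity)
  rw [sechConv_modelCell_neg a (mem_Ioi.1 hw), sechConv_modelCell_neg b (mem_Ioi.1 hw)]
  linear_combination (continuumKernel (a + 1) (edgeDistance (m + 2) w) *
    continuumKernel (b + 1) (edgeDistance (m + 2) w) / (4 * sinh (w / 2) ^ 2)) * hsqrt

theorem sechGram_modelCell_eq_add (m : ℕ) : sechGram (modelCell m) =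
    gramMatrix halfLine (fun _ => 1) (fun a : Fin m => continuumKernel (a + 1)) +
      gramMatrix halfLine (fun _ => 1) fun a : Fin m => continuumKernel (m - a) := by
  ext a b
  have hbdd (a) := boundedIntegrable_sechConv
    ((orthogonalFunctions_modelCell m).boundedIntegrable a).integrable
  have hint := ((hbdd a).mul (hbdd b)).integrable
  have hright : gramMatrix halfLine (fun _ => 1) (fun a : Fin m => continuumKernel (m - a)) a b =
      gramMatrix halfLine (fun _ => 1) (fun a : Fin m => continuumKernel (a + 1)) a.rev b.rev := by
    simp only [gramMatrix, of_apply, natCast_rev]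
    ring_nf
  rw [Matrix.add_apply, hright, ← integral_sechConv_modelCell_neg,
    ← integral_sechConv_modelCell_neg,
    integral_comp_neg_Ioi 0 fun u => sechConv (modelCell m a) u * sechConv (modelCell m b) u,
    neg_zero]
  simp only [sechConv_modelCell_rev, neg_neg]
  rw [intervalIntegral.integral_Iic_add_Ioi hint.integrableOn hint.integrableOn]
  simp only [sechGram, gramMatrix, of_apply, one_mul]

/-- The Gram matrix of the lattice kernels at both boundaries of a block of `m` sites, with lattice
offsets `θ` and `θ'`. -/
noncomputable def latticeGram (m : ℕ) (θ θ' : ℝ) : Matrix (Fin m) (Fin m) ℝ :=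
  gramMatrix halfLine (fun _ => 1) (fun a : Fin m => latticeKernel θ (a + 1)) +
    gramMatrix halfLine (fun _ => 1) fun a : Fin m => latticeKernel θ' (m - a)

section LatticeGram

variable {θ θ' : ℝ}

theorem closeKernels_left (hθ : θ ∈ Icc (1 / 2) (3 / 2)) (a : Fin m) :
    CloseKernels (a + 1) 7 (continuumKernel (a + 1)) (latticeKernel θ (a + 1)) :=
  closeKernels_continuumKernel_latticeKernel (le_add_of_nonneg_left a.val.cast_nonneg) hθ.1 hθ.2

theorem closeKernels_right (hθ' : θ' ∈ Icc (1 / 2) (3 / 2)) (a : Fin m) :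
    CloseKernels (m - a) 7 (continuumKernel (m - a)) (latticeKernel θ' (m - a)) :=
  closeKernels_continuumKernel_latticeKernel (by linarith [natCast_add_one_le a]) hθ'.1 hθ'.2

theorem posSemidef_latticeGram (hθ : θ ∈ Icc (1 / 2) (3 / 2)) (hθ' : θ' ∈ Icc (1 / 2) (3 / 2)) :
    (latticeGram m θ θ').PosSemidef :=
  (posSemidef_gramMatrix_left fun a => (closeKernels_left hθ a).symm).add
    (posSemidef_gramMatrix_left fun a => (closeKernels_right hθ' a).symm)

end LatticeGram

theorem exists_abs_spectralSum_latticeGram_sub_le : ∃ C, ∀ m : ℕ,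
    ∀ θ ∈ Icc (1 / 2 : ℝ) (3 / 2), ∀ θ' ∈ Icc (1 / 2 : ℝ) (3 / 2),
      |spectralSum varEntropy (latticeGram m θ θ') - 1 / 6 * log (m + 2)| ≤ C := by
  obtain ⟨C, hC⟩ := exists_log_sub_le_spectralSum_sechGram_modelCell
  obtain ⟨C', hC'⟩ := exists_spectralSum_sechGram_modelCell_le
  refine ⟨max C C' + comparisonConst 7, fun m θ hθ θ' hθ' => ?_⟩
  have hupper := spectralSum_gramMatrix_add_le (closeKernels_left (m := m) hθ)
    (closeKernels_right hθ')
  have hlower := spectralSum_gramMatrix_add_le (fun a : Fin m => (closeKernels_left hθ a).symm)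
    fun a => (closeKernels_right hθ' a).symm
  rw [← sechGram_modelCell_eq_add, ← latticeGram] at hupper hlower
  rw [abs_le]
  constructor <;> linarith [hC m, hC' m, le_max_left C C', le_max_right C C']

end EdgeDistance

section HalfIntegerSums

open Real Filter Topology

/-- The reciprocals of the half-integers, indexed by `ℤ`. -/
noncomputable def halfIntInv (c : ℤ) : ℝ := ((c : ℝ) + 1 / 2)⁻¹

theorem intCast_add_half_ne_zero (c : ℤ) : (c : ℝ) + 1 / 2 ≠ 0 := by
  intro h
  have hodd : 2 * c + 1 = 0 := by exact_mod_cast (by linarith : 2 * (c : ℝ) + 1 = 0)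
  lia

theorem halfIntInv_neg_sub_one (c : ℤ) : halfIntInv (-c - 1) = -halfIntInv c := by
  rw [halfIntInv, halfIntInv, ← inv_neg]
  push_cast
  ring_nf

theorem halfIntInv_sub_sub_halfIntInv (d c : ℤ) :
    halfIntInv (c - d) - halfIntInv c = d * (halfIntInv (c - d) * halfIntInv c) := by
  rw [halfIntInv, halfIntInv,
    inv_sub_inv (intCast_add_half_ne_zero (c - d)) (intCast_add_half_ne_zero c), div_eq_mul_inv,
    mul_inv]
  push_cast
  ring

theorem hasSum_sq_halfIntInv_natCast : HasSum (fun k : ℕ => halfIntInv k ^ 2) (π ^ 2 / 2) := by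
  have heven : HasSum (fun k : ℕ => 1 / ((2 * k : ℕ) : ℝ) ^ 2) (π ^ 2 / 24) := by
    convert! hasSum_zeta_two.mul_left (1 / 4) using 1
    · ext k
      push_cast
      ring
    · ring
  have hodd : Summable fun k : ℕ => 1 / ((2 * k + 1 : ℕ) : ℝ) ^ 2 :=
    hasSum_zeta_two.summable.comp_injective (i := fun k : ℕ => 2 * k + 1)
      fun a b h => by simpa using h
  have hsum := (heven.even_add_odd (f := fun n : ℕ => 1 / (n : ℝ) ^ 2) hodd.hasSum).unique
    hasSum_zeta_two
  convert! hodd.hasSum.mul_left 4 using 1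
  · ext k
    rw [halfIntInv]
    push_cast
    field_simp
    norm_num
  · linarith

theorem hasSum_sq_halfIntInv : HasSum (fun c => halfIntInv c ^ 2) (π ^ 2) := by
  rw [← add_halves (π ^ 2)]
  refine hasSum_sq_halfIntInv_natCast.of_nat_of_neg_add_one ?_
  simp only [neg_add', halfIntInv_neg_sub_one, neg_sq]
  exact hasSum_sq_halfIntInv_natCast

theorem tendsto_halfIntInv_natCast : Tendsto (fun k : ℕ => halfIntInv k) atTop (𝓝 0) :=
  tendsto_inv_atTop_zero.comp (tendsto_atTop_add_const_right _ _ tendsto_natCast_atTop_atTop)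

theorem summable_halfIntInv_mul (d : ℤ) :
    Summable fun c => halfIntInv (c - d) * halfIntInv c := by
  have hshift : Summable fun c => halfIntInv (c - d) ^ 2 :=
    (Equiv.subRight d).summable_iff.2 hasSum_sq_halfIntInv.summable
  refine .of_norm_bounded (hshift.add hasSum_sq_halfIntInv.summable) fun c => ?_
  rw [norm_mul, norm_eq_abs, norm_eq_abs, ← sq_abs (halfIntInv (c - d)), ← sq_abs (halfIntInv c)]
  nlinarith [sq_nonneg (|halfIntInv (c - d)| - |halfIntInv c|), abs_nonneg (halfIntInv (c - d)),
    abs_nonneg (halfIntInv c)]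

theorem hasSum_halfIntInv_natCast_sub :
    HasSum (fun k : ℕ => halfIntInv k - halfIntInv (k + 1)) 2 := by
  have hs : Summable fun k : ℕ => halfIntInv k - halfIntInv (k + 1) := by
    convert! (summable_halfIntInv_mul 1).comp_injective
      ((add_left_injective (1 : ℤ)).comp Nat.cast_injective) using 2 with k
    simpa using halfIntInv_sub_sub_halfIntInv 1 (k + 1)
  rw [hs.hasSum_iff_tendsto_nat, ← sub_zero (2 : ℝ)]
  refine (tendsto_const_nhds.sub tendsto_halfIntInv_natCast).congr fun n => ?_
  have htelescope := Finset.sum_range_sub' (fun k : ℕ => halfIntInv k) n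
  push_cast at htelescope
  rw [htelescope]
  norm_num [halfIntInv]

theorem hasSum_halfIntInv_sub_one_sub : HasSum (fun c => halfIntInv (c - 1) - halfIntInv c) 0 := by
  convert! HasSum.of_add_one_of_neg_add_one (f := fun c => halfIntInv (c - 1) - halfIntInv c)
    (m := 2) (m' := 2) ?_ ?_ using 1
  · norm_num [halfIntInv]
  · simpa only [add_sub_cancel_right] using hasSum_halfIntInv_natCast_sub
  · convert! hasSum_halfIntInv_natCast_sub using 2 with k
    rw [neg_add', halfIntInv_neg_sub_one, ← neg_add', halfIntInv_neg_sub_one]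
    ring

theorem hasSum_halfIntInv_sub_sub (d : ℕ) :
    HasSum (fun c => halfIntInv (c - d) - halfIntInv c) 0 := by
  induction d with
  | zero => simp
  | succ d ih =>
    have hshift : HasSum (fun c => halfIntInv (c - 1 - d) - halfIntInv (c - 1)) 0 :=
      (Equiv.subRight (1 : ℤ)).hasSum_iff.2 ih
    rw [← add_zero 0]
    convert! hshift.add hasSum_halfIntInv_sub_one_sub using 2 with c
    rw [sub_add_sub_cancel]
    push_cast
    ring_nf

theorem hasSum_halfIntInv_sub_mul_of_le {a b : ℤ} (hab : b ≤ a) :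
    HasSum (fun c => halfIntInv (c - a) * halfIntInv (c - b)) (if a = b then π ^ 2 else 0) := by
  obtain ⟨d, rfl⟩ := Int.le.dest hab
  have hshift : HasSum (fun c => halfIntInv (c - d) * halfIntInv c)
      (if b + d = b then π ^ 2 else 0) := by
    rcases eq_or_ne d 0 with rfl | hd
    · simpa [← sq] using hasSum_sq_halfIntInv
    · have hd' : ((d : ℤ) : ℝ) ≠ 0 := by exact_mod_cast hd
      have hmul := (hasSum_halfIntInv_sub_sub d).mul_left ((d : ℤ) : ℝ)⁻¹
      simp only [halfIntInv_sub_sub_halfIntInv, inv_mul_cancel_left₀ hd', mul_zero] at hmul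
      rwa [if_neg (by lia)]
  simpa [Function.comp_def, sub_sub] using (Equiv.subRight b).hasSum_iff.2 hshift

theorem hasSum_halfIntInv_sub_mul (a b : ℤ) :
    HasSum (fun c => halfIntInv (c - a) * halfIntInv (c - b)) (if a = b then π ^ 2 else 0) := by
  rcases le_total b a with h | h
  · exact hasSum_halfIntInv_sub_mul_of_le h
  · simpa only [mul_comm, eq_comm] using hasSum_halfIntInv_sub_mul_of_le h

theorem hasSum_integral_natFloor {q : ℕ → ℝ} (hq : Integrable (fun r => q ⌊r⌋₊) halfLine) :
    HasSum q (∫ r, q ⌊r⌋₊ ∂halfLine) := by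
  have hunion : ⋃ n : ℕ, Ico (n : ℝ) (n + 1) = Ici 0 := by
    ext r
    simp only [mem_iUnion, mem_Ici]
    exact ⟨fun ⟨n, hn⟩ => n.cast_nonneg.trans hn.1,
      fun hr => ⟨⌊r⌋₊, Nat.floor_le hr, Nat.lt_floor_add_one r⟩⟩
  have hfloor (n : ℕ) : EqOn (fun r : ℝ => q ⌊r⌋₊) (fun _ => q n) (Ico n (n + 1)) := fun r hr => by
    simp only [(Nat.floor_eq_iff (n.cast_nonneg.trans hr.1)).2 hr]
  have hdisjoint : Pairwise (Function.onFun Disjoint fun n : ℕ => Ico (n : ℝ) (n + 1)) :=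
    (pairwise_disjoint_Ico_intCast ℝ).comp_of_injective Nat.cast_injective
  have hint : IntegrableOn (fun r : ℝ => q ⌊r⌋₊) (⋃ n : ℕ, Ico (n : ℝ) (n + 1)) := by
    rwa [hunion, integrableOn_Ici_iff_integrableOn_Ioi]
  have hsum := hasSum_integral_iUnion (fun n : ℕ => measurableSet_Ico) hdisjoint hint
  rw [hunion, integral_Ici_eq_integral_Ioi] at hsum
  simpa [setIntegral_congr_fun measurableSet_Ico (hfloor _)] using hsum

end HalfIntegerSums

section CauchyBlock

open Real

variable {m : ℕ}

/-- The `m × M` block `1 / (π (c + τ - a + 1/2))` of the unitary Cauchy matrix on `ℤ`. -/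
noncomputable def cauchyBlock (m M : ℕ) (τ : ℤ) : Matrix (Fin m) (Fin M) ℝ :=
  of fun a c => 1 / π * halfIntInv (c + τ - a)

theorem transpose_cauchyBlock (m M : ℕ) (τ : ℤ) :
    (cauchyBlock m M τ)ᵀ = -cauchyBlock M m (-τ - 1) := by
  ext c a
  rw [transpose_apply, Matrix.neg_apply, cauchyBlock, cauchyBlock, of_apply, of_apply, ← mul_neg,
    ← halfIntInv_neg_sub_one]
  ring_nf

theorem hasSum_gramMatrix_latticeKernel {θ K : ℝ} {s : Fin m → ℝ} {q : Fin m → ℝ → ℝ}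
    (h : ∀ a, CloseKernels (s a) K (latticeKernel θ (s a)) (q a)) (a b : Fin m) :
    HasSum (fun k : ℕ => 1 / π * (s a - 1 + k + θ)⁻¹ * (1 / π * (s b - 1 + k + θ)⁻¹))
      (gramMatrix halfLine (fun _ => 1) (fun a => latticeKernel θ (s a)) a b) := by
  have hint := integrable_left_mul_left h a b
  simp only [gramMatrix, of_apply, one_mul] at hint ⊢
  exact hasSum_integral_natFloor hint

theorem hasSum_cauchyBlock (τ : ℤ) (a b : Fin m) :
    HasSum (fun c : ℤ => 1 / π * halfIntInv (c + τ - a) * (1 / π * halfIntInv (c + τ - b)))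
      ((1 : Matrix (Fin m) (Fin m) ℝ) a b) := by
  have hsum := ((Equiv.addRight τ).hasSum_iff.2 (hasSum_halfIntInv_sub_mul a b)).mul_left
    (1 / π ^ 2)
  convert! hsum using 1
  · ext c
    simp only [Function.comp_def, Equiv.coe_addRight]
    ring
  · rw [one_apply]
    simp only [Nat.cast_inj, Fin.val_inj]
    split_ifs
    · rw [one_div, inv_mul_cancel₀ (by positivity)]
    · rw [mul_zero]

theorem one_sub_cauchyBlock_mul_transpose {M : ℕ} {τ : ℤ} {θ θ' : ℝ}
    (hθ : θ ∈ Icc (1 / 2) (3 / 2)) (hθ' : θ' ∈ Icc (1 / 2) (3 / 2)) (hτ : θ = 1 / 2 - τ)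
    (hτ' : θ' = M + τ + 3 / 2 - m) :
    1 - cauchyBlock m M τ * (cauchyBlock m M τ)ᵀ = latticeGram m θ θ' := by
  ext a b
  set f : ℤ → ℝ := fun c => 1 / π * halfIntInv (c + τ - a) * (1 / π * halfIntInv (c + τ - b))
    with hf
  have hleft : HasSum (fun k : ℕ => f (-(k + 1)))
      (gramMatrix halfLine (fun _ => 1) (fun a : Fin m => latticeKernel θ (a + 1)) a b) := by
    convert! hasSum_gramMatrix_latticeKernel (fun a => (closeKernels_left hθ a).symm) a b using 2
      with k
    have hentry (a : Fin m) : halfIntInv (-(k + 1) + τ - a) = -(a + 1 - 1 + k + θ)⁻¹ := by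
      rw [halfIntInv, ← inv_neg, hτ]
      push_cast
      ring_nf
    simp only [hf, hentry]
    ring
  have hright : HasSum (fun k : ℕ => f (k + M : ℕ))
      (gramMatrix halfLine (fun _ => 1) (fun a : Fin m => latticeKernel θ' (m - a)) a b) := by
    convert! hasSum_gramMatrix_latticeKernel (fun a => (closeKernels_right hθ' a).symm) a b using 2
      with k
    have hentry (a : Fin m) : halfIntInv ((k + M : ℕ) + τ - a) = (m - a - 1 + k + θ')⁻¹ := by
      rw [halfIntInv, hτ']
      push_cast
      ring_nf
    simp only [hf, hentry]
  have htotal := (((hasSum_nat_add_iff M).1 hright).of_nat_of_neg_add_one hleft).unique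
    (hasSum_cauchyBlock τ a b)
  rw [← Fin.sum_univ_eq_sum_range (fun k : ℕ => f k)] at htotal
  rw [Matrix.sub_apply, ← htotal, latticeGram, Matrix.add_apply, mul_apply]
  simp only [transpose_apply, cauchyBlock, of_apply, hf]
  ring

end CauchyBlock

section ParityDecomposition

open Real

variable {n : ℕ}

theorem isHermitian_xxToeplitz (n : ℕ) : (xxToeplitz n).IsHermitian := by
  refine IsHermitian.ext fun j k => ?_
  simp only [xxToeplitz, of_apply, star_trivial, eq_comm (a := j)]
  split_ifs
  · rfl
  · rw [← neg_sub (j : ℝ) k, mul_neg, neg_div, Real.sin_neg, div_neg, neg_mul_neg]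

theorem xxToeplitz_eq_zero {j k : Fin n} {d : ℤ} (h : (j : ℤ) - k = 2 * d) :
    xxToeplitz n j k = 0 := by
  have hcast : (j : ℝ) - k = 2 * d := by exact_mod_cast h
  rw [xxToeplitz, of_apply, hcast, mul_left_comm, mul_div_cancel_left₀ _ two_ne_zero, mul_comm π d,
    sin_int_mul_pi, mul_zero, ite_self]

theorem xxToeplitz_even_odd {j k : Fin n} {a c : ℕ} (hj : j.val = 2 * a) (hk : k.val = 2 * c + 1) :
    xxToeplitz n j k = (-1) ^ a * (1 / π * halfIntInv (c - a)) * (-1) ^ c := by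
  have hjk : j ≠ k := fun h => by
    rw [h] at hj
    lia
  have : (c : ℝ) - a + 1 / 2 ≠ 0 := by exact_mod_cast intCast_add_half_ne_zero (c - a)
  have hsub : ((2 * a : ℕ) : ℝ) - (2 * c + 1 : ℕ) = -2 * (c - a + 1 / 2) := by
    push_cast
    ring
  have hsin : sin (π * (-2 * (c - a + 1 / 2)) / 2) = -((-1) ^ a * (-1) ^ c) := by
    rw [show π * (-2 * ((c : ℝ) - a + 1 / 2)) / 2 = a * π - c * π - π / 2 by ring,
      sin_sub_pi_div_two, cos_sub, cos_nat_mul_pi, cos_nat_mul_pi, sin_nat_mul_pi, zero_mul,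
      add_zero]
  rw [xxToeplitz, of_apply, if_neg hjk, hj, hk, hsub, hsin, halfIntInv]
  push_cast
  field_simp

/-- The sites of a block of length `n` enumerated with the even ones first. -/
noncomputable def parityEquiv (n : ℕ) : Fin ((n + 1) / 2) ⊕ Fin (n / 2) ≃ Fin n :=
  .ofBijective (Sum.elim (fun a => ⟨2 * a, by lia⟩) fun c => ⟨2 * c + 1, by lia⟩) <| by
    refine ⟨?_, fun j => ?_⟩
    · rintro (a | a) (b | b) h <;> simp [Fin.ext_iff] at h ⊢ <;> lia
    · obtain ⟨c, hc | hc⟩ := Nat.even_or_odd' j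
      · exact ⟨.inl ⟨c, by lia⟩, Fin.ext hc.symm⟩
      · exact ⟨.inr ⟨c, by lia⟩, Fin.ext hc.symm⟩

theorem parityEquiv_inl (a) : (parityEquiv n (.inl a)).val = 2 * a := rfl

theorem parityEquiv_inr (c) : (parityEquiv n (.inr c)).val = 2 * c + 1 := rfl

/-- The diagonal matrix of the signs `(-1) ^ p i`. -/
def signMatrix {ι : Type*} [Fintype ι] [DecidableEq ι] (p : ι → ℕ) : (Matrix ι ι ℝ)ˣ where
  val := diagonal fun i => (-1) ^ p i
  inv := diagonal fun i => (-1) ^ p i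
  val_inv := by simp [← mul_pow, diagonal_mul_diagonal]
  inv_val := by simp [← mul_pow, diagonal_mul_diagonal]

theorem signMatrix_mul_mul_inv_apply {ι : Type*} [Fintype ι] [DecidableEq ι] (p : ι → ℕ)
    (X : Matrix ι ι ℝ) (i j : ι) : ((signMatrix p).val * X * (signMatrix p)⁻¹.val) i j =
      (-1) ^ p i * X i j * (-1) ^ p j :=
  (mul_diagonal ..).trans (congrArg (· * _) (diagonal_mul ..))

theorem reindex_xxToeplitz (n : ℕ) :
    reindex (parityEquiv n).symm (parityEquiv n).symm (xxToeplitz n) =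
      (signMatrix (Sum.elim Fin.val Fin.val)).val *
        fromBlocks 0 (cauchyBlock ((n + 1) / 2) (n / 2) 0)
          (cauchyBlock ((n + 1) / 2) (n / 2) 0)ᵀ 0 *
        (signMatrix (Sum.elim Fin.val Fin.val))⁻¹.val := by
  ext (a | c) (b | d)
  all_goals rw [signMatrix_mul_mul_inv_apply, reindex_apply, submatrix_apply, Equiv.symm_symm]
  · simp [xxToeplitz_eq_zero (d := a - b), parityEquiv_inl, mul_sub]
  · simp [xxToeplitz_even_odd (parityEquiv_inl a) (parityEquiv_inr d), cauchyBlock]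
  · rw [← (isHermitian_xxToeplitz n).apply, star_trivial,
      xxToeplitz_even_odd (parityEquiv_inl b) (parityEquiv_inr c)]
    simp [cauchyBlock, mul_comm, mul_left_comm]
  · simp [xxToeplitz_eq_zero (d := c - d), parityEquiv_inr, mul_sub]

end ParityDecomposition

section BlockEntropy

open Real

theorem spectralSum_one_sub_mul_self_eq {ι κ : Type*} [Fintype ι] [DecidableEq ι] [Fintype κ]
    [DecidableEq κ] {X : Matrix ι ι ℝ} {Y : Matrix κ κ ℝ} {e : ι ≃ κ} {U : (Matrix κ κ ℝ)ˣ}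
    (h : reindex e e X = U.val * Y * U⁻¹.val) (F : ℝ → ℝ) :
    spectralSum F (1 - X * X) = spectralSum F (1 - Y * Y) := by
  have hconj : reindex e e (1 - X * X) = U.val * (1 - Y * Y) * U⁻¹.val := by
    rw [← coe_reindexAlgEquiv ℝ ℝ e, map_sub, map_one, map_mul, coe_reindexAlgEquiv, h]
    simp only [mul_sub, sub_mul, mul_one, Units.mul_inv, mul_assoc, Units.inv_mul_cancel_left]
  rw [← spectralSum_reindex F e, hconj, spectralSum_units_conj]

theorem one_sub_fromBlocks_offDiagonal_mul_self {ι κ : Type*} [Fintype ι] [DecidableEq ι]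
    [Fintype κ] [DecidableEq κ] (K : Matrix ι κ ℝ) :
    1 - fromBlocks 0 K Kᵀ 0 * fromBlocks 0 K Kᵀ 0 =
      fromBlocks (1 - K * Kᵀ) 0 0 (1 - Kᵀ * K) := by
  simp [fromBlocks_multiply, ← fromBlocks_one, sub_eq_add_neg, fromBlocks_neg, fromBlocks_add]

theorem exists_sum_map_one_sub_sq_eigenvalues_eq (n : ℕ) :
    ∃ θ ∈ Icc (1 / 2 : ℝ) (3 / 2), ∃ θ' ∈ Icc (1 / 2 : ℝ) (3 / 2),
    ∃ η ∈ Icc (1 / 2 : ℝ) (3 / 2), ∃ η' ∈ Icc (1 / 2 : ℝ) (3 / 2),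
    ∀ (F : ℝ → ℝ) (h : (xxToeplitz n).IsHermitian), ∑ k, F (1 - h.eigenvalues k ^ 2) =
      spectralSum F (latticeGram ((n + 1) / 2) θ θ') +
        spectralSum F (latticeGram (n / 2) η η') := by
  have hlower : ((n / 2 : ℕ) : ℝ) ≤ ((n + 1) / 2 : ℕ) := by exact_mod_cast (by lia)
  have hupper : (((n + 1) / 2 : ℕ) : ℝ) ≤ (n / 2 : ℕ) + 1 := by exact_mod_cast (by lia)
  have hθ : (1 / 2 : ℝ) ∈ Icc (1 / 2) (3 / 2) := by norm_num
  have hη : (3 / 2 : ℝ) ∈ Icc (1 / 2) (3 / 2) := by norm_num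
  have hθ' : ((n / 2 : ℕ) : ℝ) + 3 / 2 - ((n + 1) / 2 : ℕ) ∈ Icc (1 / 2 : ℝ) (3 / 2) :=
    ⟨by linarith, by linarith⟩
  have hη' : (((n + 1) / 2 : ℕ) : ℝ) + 1 / 2 - (n / 2 : ℕ) ∈ Icc (1 / 2 : ℝ) (3 / 2) :=
    ⟨by linarith, by linarith⟩
  refine ⟨_, hθ, _, hθ', _, hη, _, hη', fun F h => ?_⟩
  have hodd : (cauchyBlock ((n + 1) / 2) (n / 2) 0)ᵀ * cauchyBlock ((n + 1) / 2) (n / 2) 0 =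
      cauchyBlock (n / 2) ((n + 1) / 2) (-1) * (cauchyBlock (n / 2) ((n + 1) / 2) (-1))ᵀ := by
    simp [transpose_cauchyBlock]
  rw [← spectralSum_one_sub_mul_self F h, spectralSum_one_sub_mul_self_eq (reindex_xxToeplitz n),
    one_sub_fromBlocks_offDiagonal_mul_self, spectralSum_fromBlocks_diagonal, hodd,
    one_sub_cauchyBlock_mul_transpose hθ hθ' (by simp) (by push_cast; ring),
    one_sub_cauchyBlock_mul_transpose hη hη' (by norm_num) (by push_cast; ring)]

theorem eigenvalues_xxToeplitz_mem_Icc {n : ℕ} (h : (xxToeplitz n).IsHermitian) (k : Fin n) :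
    h.eigenvalues k ∈ Icc (-1 : ℝ) 1 := by
  obtain ⟨θ, hθ, θ', hθ', η, hη, η', hη', hsum⟩ := exists_sum_map_one_sub_sq_eigenvalues_eq n
  have hneg (m : ℕ) {θ θ' : ℝ} (hθ : θ ∈ Icc (1 / 2) (3 / 2)) (hθ' : θ' ∈ Icc (1 / 2) (3 / 2)) :
      spectralSum (fun x => x⁻) (latticeGram m θ θ') = 0 := by
    rw [spectralSum_eq_sum_eigenvalues _ (posSemidef_latticeGram hθ hθ').isHermitian]
    exact Finset.sum_eq_zero fun i _ =>
      negPart_eq_zero.2 ((posSemidef_latticeGram hθ hθ').eigenvalues_nonneg i)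
  have hzero := hsum (fun x => x⁻) h
  rw [hneg _ hθ hθ', hneg _ hη hη', add_zero,
    Finset.sum_eq_zero_iff_of_nonneg fun _ _ => negPart_nonneg _] at hzero
  have hk := negPart_eq_zero.1 (hzero k (Finset.mem_univ k))
  exact abs_le.1 ((sq_le_one_iff_abs_le_one _).1 (sub_nonneg.1 hk))

theorem varEntropy_one_sub_sq_eq_fermiEntropy (t : ℝ) :
    varEntropy (1 - t ^ 2) = log 2 * fermiEntropy t := by
  rw [varEntropy_one_sub_sq, binEntropy, fermiEntropy, logb, logb, log_inv, log_inv,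
    show 1 - (1 - t) / 2 = (1 + t) / 2 by ring]
  field_simp
  ring

theorem abs_log_sub_log_le_log_two {x y : ℝ} (hx : 0 < x) (hy : 0 < y) (hxy : x ≤ 2 * y)
    (hyx : y ≤ 2 * x) : |log x - log y| ≤ log 2 := by
  have hxy' := log_le_log hx hxy
  have hyx' := log_le_log hy hyx
  rw [log_mul two_ne_zero (by positivity)] at hxy' hyx'
  exact abs_le.2 ⟨by linarith, by linarith⟩

theorem exists_abs_sum_varEntropy_sub_le : ∃ C, ∀ n, 2 ≤ n →
    ∀ h : (xxToeplitz n).IsHermitian,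
      |∑ k, varEntropy (1 - h.eigenvalues k ^ 2) - 1 / 3 * log n| ≤ C := by
  obtain ⟨C, hC⟩ := exists_abs_spectralSum_latticeGram_sub_le
  refine ⟨2 * C + log 2 / 3, fun n hn h => ?_⟩
  obtain ⟨θ, hθ, θ', hθ', η, hη, η', hη', hsum⟩ := exists_sum_map_one_sub_sq_eigenvalues_eq n
  have hlog (m : ℕ) (hmn : m + 2 ≤ 2 * n) (hnm : n ≤ 2 * (m + 2)) :
      |log ((m : ℝ) + 2) - log n| ≤ log 2 :=
    abs_log_sub_log_le_log_two (by positivity) (by positivity) (by exact_mod_cast hmn)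
      (by exact_mod_cast hnm)
  have heven := abs_le.1 (hC ((n + 1) / 2) θ hθ θ' hθ')
  have hodd := abs_le.1 (hC (n / 2) η hη η' hη')
  have hlogEven := abs_le.1 (hlog ((n + 1) / 2) (by lia) (by lia))
  have hlogOdd := abs_le.1 (hlog (n / 2) (by lia) (by lia))
  rw [hsum, abs_le]
  constructor <;> linarith

end BlockEntropy

end XXChain

/-- **Logarithmic scaling of the block entropy of the critical XX chain (Jin–Korepin).**
The matrices `T_n` are symmetric, all their eigenvalues lie in `[−1, 1]`, and the block
entropy `S_n = ∑ₖ f(λₖ(T_n))` satisfies `|S_n − (1/3)·log₂ n| ≤ C` for all `n ≥ 2`, i.e.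
`S_n = (1/3)·log₂ n + O(1)`. -/
theorem xx_block_entropy_log_scaling :
    (∀ n, (xxToeplitz n).IsHermitian) ∧
    (∀ n (h : (xxToeplitz n).IsHermitian) (k : Fin n),
      h.eigenvalues k ∈ Set.Icc (-1 : ℝ) 1) ∧
    ∃ C : ℝ, 0 < C ∧ ∀ n, 2 ≤ n → ∀ h : (xxToeplitz n).IsHermitian,
      |(∑ k, fermiEntropy (h.eigenvalues k)) - (1 / 3) * Real.logb 2 n| ≤ C := by
  refine ⟨XXChain.isHermitian_xxToeplitz,
    fun _ => XXChain.eigenvalues_xxToeplitz_mem_Icc, ?_⟩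
  obtain ⟨C, hC⟩ := XXChain.exists_abs_sum_varEntropy_sub_le
  have hlog : 0 < Real.log 2 := Real.log_pos one_lt_two
  refine ⟨(|C| + 1) / Real.log 2, by positivity, fun n hn h => ?_⟩
  have hbound := (hC n hn h).trans ((le_abs_self C).trans (lt_add_one _).le)
  simp only [XXChain.varEntropy_one_sub_sq_eq_fermiEntropy, ← Finset.mul_sum] at hbound
  calc |(∑ k, fermiEntropy (h.eigenvalues k)) - (1 / 3) * Real.logb 2 n|
      = |Real.log 2 * ∑ k, fermiEntropy (h.eigenvalues k) - 1 / 3 * Real.log n| / Real.log 2 := by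
        rw [← abs_of_pos hlog, ← abs_div, abs_of_pos hlog, Real.logb]
        field_simp
    _ ≤ (|C| + 1) / Real.log 2 := by gcongr
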